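/- arXiv:1307.5408 — 2 statements merged into one kernel-verified Lean document; each statement's English description precedes it below -/
import Mathlib

section
/- Let ν be a divisible subgroup of the group of roots of unity in the algebraic closure of ℚ, and let L be the first-order language of rings augmented by one unary relation symbol U. Let 𝒦 be the class of L-structures (K, +, −, ·, 0, 1, U) such that: (i) (K, +, −, ·, 0, 1) is an algebraically closed field of characteristic 0; (ii) U is a divisible subgroup of the multiplicative group Kˣ; (iii) the torsion subgroup of U is isomorphic (as an abstract group) to ν; (iv) for every n ≥ 1 and every tuple y ∈ Uⁿ one has 2·trdeg(ℚ(y)/ℚ) − ldim(y) ≥ 0. Then 𝒦 is an elementary class: there exists a set T of L-sentences such that an L-structure belongs to 𝒦 if and only if it is a model of T. -/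
namespace BadFields

variable (K : Type) [Field K]

/-- The divisible hull `⟨A⟩` of a subset `A ⊆ Kˣ`: all `x` with `x ^ k` in the subgroup
generated by `A` for some `k ≥ 1`.  Note that `⟨∅⟩` is exactly the group of roots of unity. -/
def divHull (A : Set Kˣ) : Subgroup Kˣ where
  carrier := {x | ∃ k : ℕ, k ≠ 0 ∧ x ^ k ∈ Subgroup.closure A}
  one_mem' := ⟨1, one_ne_zero, by simpa using Subgroup.one_mem _⟩
  mul_mem' := by
    rintro x y ⟨k, hk, hx⟩ ⟨l, hl, hy⟩
    refine ⟨k * l, mul_ne_zero hk hl, ?_⟩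
    rw [mul_pow]
    exact Subgroup.mul_mem _ (by rw [pow_mul]; exact Subgroup.pow_mem _ hx l)
      (by rw [mul_comm k l, pow_mul]; exact Subgroup.pow_mem _ hy k)
  inv_mem' := by
    rintro x ⟨k, hk, hx⟩
    exact ⟨k, hk, by rw [inv_pow]; exact Subgroup.inv_mem _ hx⟩

/-- A subgroup `U` of `Kˣ` is divisible if every element has `k`-th roots in `U` for all
`k ≥ 1`. -/
def DivisibleSub (U : Subgroup Kˣ) : Prop :=
  ∀ u ∈ U, ∀ k : ℕ, k ≠ 0 → ∃ v ∈ U, v ^ k = u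

/-- The lattice of multiplicative relations of the tuple `y` modulo the divisible hull of `A`.
Since `Kˣ/⟨A⟩` is torsion-free, this lattice is saturated, and the dimension of the
`ℚ`-subspace of `Kˣ/Tor` spanned by (the images of) `y` over (the image of) `A` equals
`n` minus the rank of this lattice. -/
def relLattice (A : Set Kˣ) {n : ℕ} (y : Fin n → Kˣ) : Submodule ℤ (Fin n → ℤ) where
  carrier := {c | (∏ i, y i ^ c i) ∈ divHull K A}
  zero_mem' := by simpa using Subgroup.one_mem _
  add_mem' := by
    intro c d hc hd
    have h : (∏ i, y i ^ (c + d) i) = (∏ i, y i ^ c i) * ∏ i, y i ^ d i := by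
      rw [← Finset.prod_mul_distrib]
      exact Finset.prod_congr rfl fun i _ => by rw [Pi.add_apply, zpow_add]
    show (∏ i, y i ^ (c + d) i) ∈ divHull K A
    rw [h]
    exact Subgroup.mul_mem _ hc hd
  smul_mem' := by
    intro m c hc
    have h : (∏ i, y i ^ (m • c) i) = (∏ i, y i ^ c i) ^ m := by
      rw [← Finset.prod_zpow]
      exact Finset.prod_congr rfl fun i _ => by
        rw [Pi.smul_apply, smul_eq_mul, mul_comm, zpow_mul]
    show (∏ i, y i ^ (m • c) i) ∈ divHull K A
    rw [h]
    exact Subgroup.zpow_mem _ hc m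

/-- `ldimRel K A y` is the linear dimension `ldim(y/A)`: the dimension of the `ℚ`-subspace
spanned by the images of the coordinates of `y` in `Kˣ/Tor` over the subspace spanned by the
image of `A`. -/
noncomputable def ldimRel (A : Set Kˣ) {n : ℕ} (y : Fin n → Kˣ) : ℕ :=
  n - Module.finrank ℤ (relLattice K A y)

/-- The (absolute) linear dimension `ldim(y)`. -/
noncomputable def ldim {n : ℕ} (y : Fin n → Kˣ) : ℕ := ldimRel K ∅ y

/-- `trdegOver K F s` : the transcendence degree over the subfield `F` of the field generated
by `F` and the set `s`, i.e. the maximal cardinality of a finite subset of `s` which is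
algebraically independent over `F`. -/
noncomputable def trdegOver (F : Subfield K) (s : Set K) : ℕ :=
  sSup {d | ∃ t : Finset K, ↑t ⊆ s ∧ t.card = d ∧
    AlgebraicIndependent F (fun x : {y : K // y ∈ t} => (x : K))}

/-- Transcendence degree over the prime field; in characteristic zero this is
`trdeg(ℚ(s)/ℚ)`. -/
noncomputable def trdegQ (s : Set K) : ℕ := trdegOver K ⊥ s

section Var

variable {ι : Type} [Fintype ι]

/-- The subset of the torus `(Kˣ)^ι` cut out by a set of polynomials. -/
def zeroSet (S : Set (MvPolynomial ι K)) : Set (ι → Kˣ) :=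
  {x | ∀ p ∈ S, MvPolynomial.eval (fun i => (x i : K)) p = 0}

/-- Zariski closed subsets of the torus `(Kˣ)^ι` (closed subvarieties). -/
def IsZClosed (V : Set (ι → Kˣ)) : Prop := ∃ S, V = zeroSet K S

/-- Zariski closed subsets of `(Kˣ)^ι` defined by polynomials all of whose coefficients lie
in `E`; for `E = ↑(⊥ : Subfield K)` (the prime field, i.e. `ℚ` in characteristic `0`) this
means defined over `ℚ`. -/
def IsClosedOver (E : Set K) (V : Set (ι → Kˣ)) : Prop :=
  ∃ S : Set (MvPolynomial ι K),
    (∀ p ∈ S, ∀ m, MvPolynomial.coeff m p ∈ E) ∧ V = zeroSet K S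

/-- Irreducible (nonempty) Zariski closed subsets of the torus `(Kˣ)^ι`. -/
def IsIrredVar (V : Set (ι → Kˣ)) : Prop :=
  IsZClosed K V ∧ V.Nonempty ∧
    ∀ C₁ C₂ : Set (ι → Kˣ), IsZClosed K C₁ → IsZClosed K C₂ →
      V ⊆ C₁ ∪ C₂ → V ⊆ C₁ ∨ V ⊆ C₂

/-- The Zariski closure in `(Kˣ)^ι`. -/
def zcl (S : Set (ι → Kˣ)) : Set (ι → Kˣ) := ⋂₀ {C | IsZClosed K C ∧ S ⊆ C}

/-- The locus of a point `b` over the set of constants `E`: the smallest Zariski closed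
set containing `b` defined by polynomials with coefficients in `E`. -/
def locusOver (E : Set K) (b : ι → Kˣ) : Set (ι → Kˣ) :=
  ⋂₀ {C | IsClosedOver K E C ∧ b ∈ C}

/-- The dimension of a (not necessarily irreducible) Zariski closed subset of `(Kˣ)^ι`:
the supremum of the lengths of strict chains of irreducible closed subsets. -/
noncomputable def vdim (V : Set (ι → Kˣ)) : ℕ :=
  sSup {d | ∃ W : Fin (d + 1) → Set (ι → Kˣ),
    (∀ i, IsIrredVar K (W i) ∧ W i ⊆ V) ∧ StrictMono W}

/-- The monomial map `y ↦ y^M` attached to an integer matrix `M`. -/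
def mpow {k : ℕ} (M : Matrix (Fin k) ι ℤ) (y : ι → Kˣ) : Fin k → Kˣ :=
  fun j => ∏ i, y i ^ M j i

/-- Algebraic subgroups of the torus `(Kˣ)^ι`: subgroups defined by finitely many monomial
equations `y^M = 1`. -/
def IsAlgSubgroup (H : Set (ι → Kˣ)) : Prop :=
  ∃ (k : ℕ) (M : Matrix (Fin k) ι ℤ), H = {y | mpow K M y = 1}

/-- Subtori of `(Kˣ)^ι`: irreducible algebraic subgroups. -/
def IsSubtorus (T : Set (ι → Kˣ)) : Prop := IsAlgSubgroup K T ∧ IsIrredVar K T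

/-- The coset `c · T` (multiplication coordinatewise). -/
def coset (c : ι → Kˣ) (T : Set (ι → Kˣ)) : Set (ι → Kˣ) := (fun t => c * t) '' T

/-- A variety is free if it is not contained in a coset of a proper subtorus. -/
def IsFree (V : Set (ι → Kˣ)) : Prop :=
  ¬ ∃ T c, IsSubtorus K T ∧ T ≠ Set.univ ∧ V ⊆ coset K c T

/-- `T` is the minimal torus of `V`: the smallest subtorus such that `V` is contained in some
coset of it. -/
def IsMinTorus (V T : Set (ι → Kˣ)) : Prop :=
  IsSubtorus K T ∧ (∃ c, V ⊆ coset K c T) ∧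
    ∀ T', IsSubtorus K T' → (∃ c, V ⊆ coset K c T') → T ⊆ T'

/-- The codimension `cd(V) = dim(minimal torus of V) - dim V`. -/
noncomputable def cd (V : Set (ι → Kˣ)) : ℕ :=
  sInf {d | ∃ T c, IsSubtorus K T ∧ V ⊆ coset K c T ∧ d = vdim K T} - vdim K V

/-- `S` is cd-maximal in `W`. -/
def CdMaximal (S W : Set (ι → Kˣ)) : Prop :=
  IsIrredVar K S ∧ S ⊆ W ∧
    ∀ S', IsIrredVar K S' → S ⊂ S' → S' ⊆ W → cd K S < cd K S'

/-- `√[m]{V}`, the preimage of `V` under coordinatewise `m`-th powers. -/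
def mroot (m : ℕ) (V : Set (ι → Kˣ)) : Set (ι → Kˣ) := {a | (fun i => a i ^ m) ∈ V}

/-- An irreducible variety `V` is Kummer generic if `√[m]{V}` is irreducible for all `m ≥ 1`. -/
def KummerGeneric (V : Set (ι → Kˣ)) : Prop :=
  IsIrredVar K V ∧ ∀ m : ℕ, 1 ≤ m → IsIrredVar K (mroot K m V)

/-- Irreducible components of a set `S`: maximal irreducible closed subsets of `S`. -/
def IsIrredComponent (V' S : Set (ι → Kˣ)) : Prop :=
  IsIrredVar K V' ∧ V' ⊆ S ∧ ∀ W, IsIrredVar K W → V' ⊆ W → W ⊆ S → W = V'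

end Var

/-- A correspondence torus: an `n`-dimensional subtorus of `(Kˣ)ⁿ × (Kˣ)ⁿ` which projects
onto `(Kˣ)ⁿ` in both coordinates.  We identify `(Kˣ)ⁿ × (Kˣ)ⁿ` with `(Kˣ)^(Fin n ⊕ Fin n)`,
a pair `(x, y)` corresponding to `Sum.elim x y`. -/
def IsCorrTorus {n : ℕ} (T : Set ((Fin n ⊕ Fin n) → Kˣ)) : Prop :=
  IsSubtorus K T ∧ vdim K T = n ∧
    (∀ x : Fin n → Kˣ, ∃ y, Sum.elim x y ∈ T) ∧
    (∀ y : Fin n → Kˣ, ∃ x, Sum.elim x y ∈ T)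

/-- `T` induces a toric correspondence between `V` and `V'`: the Zariski closures of the two
projections of `(V × V') ∩ T` are `V` and `V'` respectively. -/
def ToricCorr {n : ℕ} (T : Set ((Fin n ⊕ Fin n) → Kˣ)) (V V' : Set (Fin n → Kˣ)) : Prop :=
  zcl K ((fun p => p ∘ Sum.inl) '' {p | p ∈ T ∧ (p ∘ Sum.inl) ∈ V ∧ (p ∘ Sum.inr) ∈ V'}) = V ∧
  zcl K ((fun p => p ∘ Sum.inr) '' {p | p ∈ T ∧ (p ∘ Sum.inl) ∈ V ∧ (p ∘ Sum.inr) ∈ V'}) = V'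

/-- The set of elements of `K` underlying a set of units. -/
def unitSet (A : Set Kˣ) : Set K := (fun u : Kˣ => (u : K)) '' A

/-- `trdeg(y/A)`, the transcendence degree of `ℚ(A ∪ y)` over `ℚ(A)`. -/
noncomputable def trdegRel (A : Set Kˣ) {n : ℕ} (y : Fin n → Kˣ) : ℕ :=
  trdegOver K (Subfield.closure (unitSet K A)) (Set.range fun i => (y i : K))

/-- The predimension `δ(y/A) = 2 trdeg(y/A) - ldim(y/A)`. -/
noncomputable def pdelta (A : Set Kˣ) {n : ℕ} (y : Fin n → Kˣ) : ℤ :=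
  2 * (trdegRel K A y : ℤ) - (ldimRel K A y : ℤ)

/-- The extension `⟨A ∪ b⟩/A` is minimal prealgebraic of length `n`. -/
def MinPrealg {n : ℕ} (A : Set Kˣ) (b : Fin n → Kˣ) : Prop :=
  2 ≤ n ∧ ldimRel K A b = n ∧ pdelta K A b = 0 ∧
    ∀ B' : Set Kˣ, B' = ↑(divHull K B') → A ⊂ B' → B' ⊂ ↑(divHull K (A ∪ Set.range b)) →
      pdelta K B' b < 0


open FirstOrder Language in
/-- The language with a single unary relation symbol `U` (and no function symbols). -/
def unaryLang : Language :=
  ⟨fun _ => Empty, fun n => match n with | 1 => Unit | _ => Empty⟩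

open FirstOrder Language in
/-- The language of rings augmented by one unary relation symbol `U`. -/
def LU : Language := Language.ring.sum unaryLang

open FirstOrder Language in
/-- Membership in the class `𝒦` relative to a given field structure on `M`: `M` is an
algebraically closed field of characteristic `0` whose field operations are the
interpretations of the ring symbols, and the interpretation of `U` is a divisible subgroup
of `Mˣ` whose torsion subgroup is isomorphic to `ν` and all of whose finite tuples `y`
satisfy `δ(y) = 2 trdeg(ℚ(y)/ℚ) - ldim(y) ≥ 0`. -/
def GreenAux (ν : Subgroup (AlgebraicClosure ℚ)ˣ) (M : Type) [LU.Structure M]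
    [Field M] : Prop :=
  IsAlgClosed M ∧ CharZero M ∧
  (∀ x y : M, Structure.funMap (L := LU) (Sum.inl ringFunc.add) ![x, y] = x + y) ∧
  (∀ x y : M, Structure.funMap (L := LU) (Sum.inl ringFunc.mul) ![x, y] = x * y) ∧
  (∀ x : M, Structure.funMap (L := LU) (Sum.inl ringFunc.neg) ![x] = -x) ∧
  (Structure.funMap (L := LU) (Sum.inl ringFunc.zero) ![] = (0 : M)) ∧
  (Structure.funMap (L := LU) (Sum.inl ringFunc.one) ![] = (1 : M)) ∧
  ∃ U : Subgroup Mˣ,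
    (∀ x : M, Structure.RelMap (L := LU) (M := M) (Sum.inr Unit.unit : LU.Relations 1) ![x] ↔
      ∃ u ∈ U, ((u : Mˣ) : M) = x) ∧
    DivisibleSub M U ∧
    Nonempty (↥(CommGroup.torsion ↥U) ≃* ↥ν) ∧
    ∀ (n : ℕ), 1 ≤ n → ∀ y : Fin n → Mˣ, (∀ i, y i ∈ U) →
      (ldim M y : ℤ) ≤ 2 * (trdegQ M (Set.range fun i => ((y i : Mˣ) : M)) : ℤ)

open FirstOrder Language in
/-- The `LU`-structure `M` belongs to the class `𝒦`. -/
def InK (ν : Subgroup (AlgebraicClosure ℚ)ˣ) (M : Type) [inst : LU.Structure M] : Prop :=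
  ∃ fld : Field M, @GreenAux ν M inst fld

/-!
Let `T` be the set of all sentences true throughout `𝒦`; one has to show that its models lie in `𝒦`.
Only the predimension inequality is not visibly first-order. It says that a multiplicatively
independent `n`-tuple from `U` has an algebraically independent subtuple of length at least `n / 2`.
So it suffices that, for each choice of nonzero polynomials, one for every subtuple of length at
least `n / 2`, there is a finite set of multiplicative relations such that an `n`-tuple of `U` whose
long subtuples satisfy these polynomials satisfies one of the relations, uniformly over `𝒦`.

Otherwise an ultraproduct `K` of counterexamples contains a multiplicatively independent tuple `y`
with no long algebraically independent subtuple. Let `k ⊆ K` be the ultraproduct of the fields of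
algebraic numbers; it is the field of constants of the ultraproducts of derivations. Monomials in
`y` lying in `k` are ultraproducts of roots of unity, so independent ones are algebraically
independent by Mann's theorem. The remaining part of `y` is multiplicatively independent modulo `k`,
and its length is at most twice its transcendence degree over `k`, by Ax's argument: a linear
relation among logarithmic differentials `dy / y` descends to constant coefficients, and comparing
orders at infinity turns such a relation into a monomial in `y` lying in `k`. Adding the two parts
gives `n ≤ 2 trdeg ℚ(y)`, a contradiction.
-/

section Mann

open Finset Polynomial
open scoped Nat

variable {K ι : Type*} [Field K]

theorem aeval_pow_eq_zero_of_isPrimitiveRoot [CharZero K] {ω : K} {N u : ℕ}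
    (hω : IsPrimitiveRoot ω N) (hN : 0 < N) (hu : u.Coprime N) {f : ℚ[X]} (hf : aeval ω f = 0) :
    aeval (ω ^ u) f = 0 := by
  have hminpoly : minpoly ℚ ω = minpoly ℚ (ω ^ u) := by
    rw [← cyclotomic_eq_minpoly_rat hω hN, ← cyclotomic_eq_minpoly_rat (hω.pow_of_coprime u hu) hN]
  obtain ⟨g, rfl⟩ := minpoly.dvd ℚ ω hf
  rw [map_mul, hminpoly, minpoly.aeval, zero_mul]

theorem sum_conj_eq_zero_of_isPrimitiveRoot [CharZero K] {ω : K} {N u : ℕ}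
    (hω : IsPrimitiveRoot ω N) (hN : 0 < N) (hu : u.Coprime N) {s : Finset ι} {a : ι → ℚ}
    {e : ι → ℕ} (hsum : ∑ i ∈ s, (a i : K) * ω ^ e i = 0) :
    ∑ i ∈ s, (a i : K) * ω ^ (u * e i) = 0 := by
  have := aeval_pow_eq_zero_of_isPrimitiveRoot hω hN hu (f := ∑ i ∈ s, C (a i) * X ^ e i)
    (by simpa using hsum)
  simpa [← pow_mul] using this

theorem sum_range_pow_mul_of_isPrimitiveRoot {θ : K} {p : ℕ} (hθ : IsPrimitiveRoot θ p) (c : ℕ) :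
    ∑ j ∈ range p, θ ^ (j * c) = if p ∣ c then (p : K) else 0 := by
  simp_rw [mul_comm _ c, pow_mul]
  split_ifs with h
  · simp [(hθ.pow_eq_one_iff_dvd c).2 h]
  · have hne : θ ^ c - 1 ≠ 0 := sub_ne_zero.2 fun h' => h ((hθ.pow_eq_one_iff_dvd c).1 h')
    refine (mul_eq_zero.1 ?_).resolve_right hne
    rw [geom_sum_mul, ← pow_mul, mul_comm, pow_mul, hθ.pow_eq_one, one_pow, sub_self]

theorem sum_pow_mul_twisted_sum {θ : K} {p : ℕ} (hθ : IsPrimitiveRoot θ p) (s : Finset ι)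
    (x : ι → K) (e : ι → ℕ) (c : ℕ) :
    ∑ j ∈ range p, θ ^ (j * c) * ∑ i ∈ s, x i * θ ^ (j * e i) =
      p * ∑ i ∈ s with p ∣ e i + c, x i := by
  have hterm (i : ι) : ∑ j ∈ range p, θ ^ (j * c) * (x i * θ ^ (j * e i)) =
      if p ∣ e i + c then p * x i else 0 := by
    have := sum_range_pow_mul_of_isPrimitiveRoot hθ (e i + c)
    rw [← ite_zero_mul, ← this, sum_mul]
    exact sum_congr rfl fun j _ => by ring
  simp_rw [mul_sum, sum_filter]
  rw [sum_comm]
  exact sum_congr rfl fun i _ => hterm i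

theorem exists_forall_not_dvd_add {p : ℕ} [NeZero p] {s : Finset ι} (hs : #s < p) (e : ι → ℕ) :
    ∃ c, ∀ i ∈ s, ¬ p ∣ e i + c := by
  classical
  obtain ⟨c, -, hc⟩ : ∃ c ∈ (univ : Finset (ZMod p)), c ∉ s.image fun i => -(e i : ZMod p) :=
    exists_mem_notMem_of_card_lt_card <|
      card_image_le.trans_lt (by rwa [card_univ, ZMod.card])
  refine ⟨c.val, fun i hi hdvd => hc (mem_image.2 ⟨i, hi, ?_⟩)⟩
  have : ((e i + c.val : ℕ) : ZMod p) = 0 := (ZMod.natCast_eq_zero_iff _ _).2 hdvd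
  rw [Nat.cast_add, ZMod.natCast_zmod_val] at this
  exact neg_eq_of_add_eq_zero_right this

/-- If `p ∤ M`, exactly one of the `p` twisted sums is not a Galois conjugate of the original sum;
Fourier inversion at a residue avoided by `e` shows that it vanishes as well. -/
theorem twisted_sum_eq_zero {θ : K} {p M : ℕ} (hp : p.Prime) (hθ : IsPrimitiveRoot θ p)
    {s : Finset ι} {x : ι → K} {e : ι → ℕ}
    (hconj : ∀ j, ¬ p ∣ 1 + j * M → ∑ i ∈ s, x i * θ ^ (j * e i) = 0)
    (hM : p ∣ M ∨ #s < p) {j : ℕ} (hj : j ∈ range p) : ∑ i ∈ s, x i * θ ^ (j * e i) = 0 := by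
  have : NeZero p := ⟨hp.ne_zero⟩
  by_cases hpM : p ∣ M
  · exact hconj j fun h => hp.one_lt.ne' <|
      Nat.dvd_one.1 ((Nat.dvd_add_left (hpM.mul_left j)).1 h)
  by_cases hjM : p ∣ 1 + j * M
  swap
  · exact hconj j hjM
  have hother : ∀ l ∈ range p, l ≠ j → ∑ i ∈ s, x i * θ ^ (l * e i) = 0 := by
    refine fun l hl hlj => hconj l fun hlM => hlj ?_
    have hmod : 1 + l * M ≡ 1 + j * M [MOD p] :=
      (Nat.modEq_zero_iff_dvd.2 hlM).trans (Nat.modEq_zero_iff_dvd.2 hjM).symm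
    exact ((hmod.add_left_cancel' 1).cancel_right_of_coprime
      ((Nat.Prime.coprime_iff_not_dvd hp).2 hpM)).eq_of_lt_of_lt (mem_range.1 hl) (mem_range.1 hj)
  obtain ⟨c, hc⟩ := exists_forall_not_dvd_add (hM.resolve_left hpM) e
  have hfourier := sum_pow_mul_twisted_sum hθ s x e c
  rw [filter_eq_empty_iff.2 fun i hi => hc i hi, sum_empty, mul_zero,
    sum_eq_single_of_mem j hj fun l hl hlj => by rw [hother l hl hlj, mul_zero]] at hfourier
  exact (mul_eq_zero.1 hfourier).resolve_left (pow_ne_zero _ (hθ.ne_zero hp.ne_zero))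

theorem prime_dvd_exponent_of_minimal_sum_eq_zero [CharZero K] {s : Finset ι} {a : ι → ℚ}
    {N : ℕ} (hN : 0 < N) {ω : K} (hω : IsPrimitiveRoot ω N) {e : ι → ℕ}
    (hs : Minimal (fun t : Finset ι => t.Nonempty ∧ ∑ i ∈ t, (a i : K) * ω ^ e i = 0) s)
    {p : ℕ} (hp : p.Prime) (hpN : p ∣ N) (hbig : p ^ 2 ∣ N ∨ #s < p)
    {i₀ : ι} (hi₀ : i₀ ∈ s) (he₀ : p ∣ e i₀) : ∀ i ∈ s, p ∣ e i := by
  obtain ⟨M, rfl⟩ := hpN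
  have hθ : IsPrimitiveRoot (ω ^ M) p := hω.pow hN (mul_comm _ _)
  have hconj (j : ℕ) (hj : ¬ p ∣ 1 + j * M) :
      ∑ i ∈ s, (a i : K) * ω ^ e i * (ω ^ M) ^ (j * e i) = 0 := by
    have hcop : (1 + j * M).Coprime (p * M) :=
      Nat.Coprime.mul_right (hp.coprime_iff_not_dvd.2 hj).symm (by simp)
    rw [← sum_conj_eq_zero_of_isPrimitiveRoot hω hN hcop hs.prop.2]
    exact sum_congr rfl fun i _ => by ring
  have hM : p ∣ M ∨ #s < p :=
    hbig.imp_left fun h => Nat.dvd_of_mul_dvd_mul_left hp.pos (by rwa [← pow_two])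
  have hfourier := sum_pow_mul_twisted_sum hθ s (fun i => (a i : K) * ω ^ e i) e 0
  simp only [mul_zero, pow_zero, one_mul, add_zero] at hfourier
  rw [sum_eq_zero fun j hj => twisted_sum_eq_zero hp hθ hconj hM hj] at hfourier
  have hzero : ∑ i ∈ s with p ∣ e i, (a i : K) * ω ^ e i = 0 :=
    (mul_eq_zero.1 hfourier.symm).resolve_left (Nat.cast_ne_zero.2 hp.ne_zero)
  have hfilter : s.filter (p ∣ e ·) = s :=
    hs.eq_of_le ⟨⟨i₀, mem_filter.2 ⟨hi₀, he₀⟩⟩, hzero⟩ (filter_subset _ _)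
  exact filter_eq_self.1 hfilter

theorem exists_primitiveRoot_exponents [CharZero K] {s : Finset ι} {z : ι → Kˣ} {N : ℕ}
    (hN : 0 < N) (hz : ∀ i ∈ s, z i ^ N = 1) :
    ∃ (ω : AlgebraicClosure K) (e : ι → ℕ), IsPrimitiveRoot ω N ∧
      ∀ i ∈ s, ω ^ e i = algebraMap K (AlgebraicClosure K) (z i) := by
  have : NeZero (N : AlgebraicClosure K) := ⟨Nat.cast_ne_zero.2 hN.ne'⟩
  have : NeZero N := ⟨hN.ne'⟩
  obtain ⟨ω, hω⟩ := HasEnoughRootsOfUnity.exists_primitiveRoot (AlgebraicClosure K) N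
  have hpow (i : ι) : ∃ e : ℕ, i ∈ s → ω ^ e = algebraMap K (AlgebraicClosure K) (z i) := by
    by_cases hi : i ∈ s
    · obtain ⟨e, -, he⟩ := hω.eq_pow_of_pow_eq_one (ξ := algebraMap K (AlgebraicClosure K) (z i))
        (by rw [← map_pow, ← Units.val_pow_eq_pow_val, hz i hi, Units.val_one, map_one])
      exact ⟨e, fun _ => he⟩
    · exact ⟨0, fun h => absurd h hi⟩
  choose e he using hpow
  exact ⟨ω, e, hω, he⟩

theorem not_prime_sq_dvd_lcm_orderOf [CharZero K] {s : Finset ι} {a : ι → ℚ} {z : ι → Kˣ}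
    (hz : ∀ i ∈ s, IsOfFinOrder (z i))
    (hs : Minimal (fun t : Finset ι => t.Nonempty ∧ ∑ i ∈ t, (a i : K) * z i = 0) s)
    {i₀ : ι} (hi₀ : i₀ ∈ s) (hz₀ : z i₀ = 1) {p : ℕ} (hp : p.Prime)
    (hpN : p ∣ s.lcm (orderOf ∘ z)) : ¬ (p ^ 2 ∣ s.lcm (orderOf ∘ z) ∨ #s < p) := by
  intro hbig
  set N := s.lcm (orderOf ∘ z)
  have hN : 0 < N := Nat.pos_of_ne_zero fun h => by
    obtain ⟨i, hi, hi0⟩ := Finset.lcm_eq_zero_iff.1 h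
    exact (orderOf_pos_iff.2 (hz i hi)).ne' hi0
  obtain ⟨ω, e, hω, he⟩ := exists_primitiveRoot_exponents hN
    fun i hi => orderOf_dvd_iff_pow_eq_one.1 (dvd_lcm (f := orderOf ∘ z) hi)
  have hsum (t : Finset ι) (ht : t ⊆ s) : ∑ i ∈ t, (a i : AlgebraicClosure K) * ω ^ e i =
      algebraMap K _ (∑ i ∈ t, (a i : K) * z i) := by
    rw [map_sum]
    exact sum_congr rfl fun i hi => by rw [he i (ht hi), map_mul, map_ratCast]
  have hs' : Minimal (fun t : Finset ι => t.Nonempty ∧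
      ∑ i ∈ t, (a i : AlgebraicClosure K) * ω ^ e i = 0) s := by
    refine ⟨⟨hs.prop.1, by rw [hsum s subset_rfl, hs.prop.2, map_zero]⟩, fun t ht hts => ?_⟩
    exact hs.le_of_le ⟨ht.1, (map_eq_zero _).1 ((hsum t hts).symm.trans ht.2)⟩ hts
  have he₀ : p ∣ e i₀ :=
    hpN.trans <| (hω.pow_eq_one_iff_dvd _).1 <| by rw [he i₀ hi₀, hz₀, Units.val_one, map_one]
  have hdvd := prime_dvd_exponent_of_minimal_sum_eq_zero hN hω hs' hp hpN hbig hi₀ he₀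
  have hlcm : N ∣ N / p := Finset.lcm_dvd fun i hi => by
    obtain ⟨c, hc⟩ := hdvd i hi
    refine orderOf_dvd_iff_pow_eq_one.2 <| Units.ext <|
      (algebraMap K (AlgebraicClosure K)).injective ?_
    rw [Units.val_pow_eq_pow_val, map_pow, ← he i hi, hc, ← pow_mul, mul_right_comm,
      Nat.mul_div_cancel' hpN, pow_mul, hω.pow_eq_one, one_pow, Units.val_one, map_one]
  exact (Nat.div_lt_self hN hp.one_lt).not_ge
    (Nat.le_of_dvd (Nat.div_pos (Nat.le_of_dvd hN hpN) hp.pos) hlcm)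

/-- Mann's theorem, with `(#s)!` in place of the optimal product of the primes up to `#s`. -/
theorem div_pow_factorial_eq_one_of_minimal_sum_eq_zero [CharZero K] {s : Finset ι} {a : ι → ℚ}
    {z : ι → Kˣ} (hz : ∀ i ∈ s, IsOfFinOrder (z i))
    (hs : Minimal (fun t : Finset ι => t.Nonempty ∧ ∑ i ∈ t, (a i : K) * z i = 0) s)
    {i j : ι} (hi : i ∈ s) (hj : j ∈ s) : (z i / z j) ^ (#s)! = 1 := by
  have hw : ∀ i ∈ s, IsOfFinOrder (z i / z j) := fun i hi => by
    rw [div_eq_mul_inv]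
    exact (hz i hi).mul (hz j hj).inv
  have hws : Minimal (fun t : Finset ι => t.Nonempty ∧
      ∑ i ∈ t, (a i : K) * (z i / z j : Kˣ) = 0) s := by
    simp_rw [Units.val_div_eq_div_val, mul_div_assoc', ← sum_div, div_eq_zero_iff, (z j).ne_zero,
      or_false]
    exact hs
  have hprime := fun p => not_prime_sq_dvd_lcm_orderOf (p := p) hw hws hj (div_self' _)
  set N := s.lcm (orderOf ∘ fun i => z i / z j)
  have hsq : Squarefree N := Nat.squarefree_iff_prime_squarefree.2 fun p hp h =>
    hprime p hp ((dvd_mul_right p p).trans h) (Or.inl (by rwa [pow_two]))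
  have hN : N ∣ (#s)! := by
    rw [← Nat.prod_primeFactors_of_squarefree hsq]
    refine prod_primes_dvd _ (fun p hp => (Nat.prime_of_mem_primeFactors hp).prime) fun p hp => ?_
    refine (Nat.prime_of_mem_primeFactors hp).dvd_factorial.2 (not_lt.1 fun h => ?_)
    exact hprime p (Nat.prime_of_mem_primeFactors hp) (Nat.dvd_of_mem_primeFactors hp) (Or.inr h)
  exact orderOf_dvd_iff_pow_eq_one.1 ((dvd_lcm (f := orderOf ∘ fun i => z i / z j) hi).trans hN)

theorem exists_exponents_of_torsion_zero [CharZero K] {σ : Type*} [Fintype σ]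
    {P : MvPolynomial σ ℚ} (hP : P ≠ 0) {z : σ → Kˣ} (hz : ∀ i, IsOfFinOrder (z i))
    (h0 : MvPolynomial.aeval (fun i => (z i : K)) P = 0) :
    ∃ α ∈ P.support, ∃ β ∈ P.support, α ≠ β ∧
      ∏ i, z i ^ ((#P.support)! * ((α i : ℤ) - β i)) = 1 := by
  classical
  let m : (σ →₀ ℕ) → Kˣ := fun α => ∏ i, z i ^ α i
  have hm (α : σ →₀ ℕ) : IsOfFinOrder (m α) :=
    prod_induction _ IsOfFinOrder (fun _ _ => IsOfFinOrder.mul) IsOfFinOrder.one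
      fun i _ => (hz i).pow
  have hsum : ∑ α ∈ P.support, ((P.coeff α : ℚ) : K) * m α = 0 := by
    rw [← h0, MvPolynomial.aeval_def, MvPolynomial.eval₂_eq']
    simp [m]
  obtain ⟨t, htP, ht⟩ := exists_minimal_le_of_wellFoundedLT
    (fun t : Finset (σ →₀ ℕ) => t.Nonempty ∧ ∑ α ∈ t, ((P.coeff α : ℚ) : K) * m α = 0)
    P.support ⟨MvPolynomial.support_nonempty.2 hP, hsum⟩
  have htriv : t.Nontrivial := by
    obtain ⟨⟨α, hα⟩, ht0⟩ := ht.prop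
    by_contra h
    rw [((nontrivial_iff_ne_singleton hα).not_left.1 h), sum_singleton] at ht0
    have hPα : P.coeff α ≠ 0 := MvPolynomial.mem_support_iff.1 (htP hα)
    simp [hPα] at ht0
  obtain ⟨α, hα, β, hβ, hαβ⟩ := htriv
  refine ⟨α, htP hα, β, htP hβ, hαβ, ?_⟩
  have hmono : ∏ i, z i ^ ((#P.support)! * ((α i : ℤ) - β i)) = (m α / m β) ^ (#P.support)! := by
    simp only [m, ← prod_div_distrib, ← prod_pow]
    refine prod_congr rfl fun i _ => ?_
    rw [mul_comm, zpow_mul, zpow_natCast, zpow_sub, zpow_natCast, zpow_natCast, div_eq_mul_inv]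
  rw [hmono]
  obtain ⟨c, hc⟩ := Nat.factorial_dvd_factorial (card_le_card htP)
  rw [hc, pow_mul, div_pow_factorial_eq_one_of_minimal_sum_eq_zero (fun α _ => hm α) ht hα hβ,
    one_pow]

theorem exists_finset_relations_of_torsion_zero {σ : Type*} [Fintype σ] {P : MvPolynomial σ ℚ}
    (hP : P ≠ 0) : ∃ F : Finset (σ → ℤ), 0 ∉ F ∧
      ∀ (K : Type*) [Field K] [CharZero K] (z : σ → Kˣ), (∀ i, IsOfFinOrder (z i)) →
        MvPolynomial.aeval (fun i => (z i : K)) P = 0 → ∃ q ∈ F, ∏ i, z i ^ q i = 1 := by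
  classical
  refine ⟨(P.support.offDiag).image fun αβ i => (#P.support)! * ((αβ.1 i : ℤ) - αβ.2 i), ?_, ?_⟩
  · simp only [mem_image, mem_offDiag, not_exists, not_and]
    rintro ⟨α, β⟩ ⟨-, -, hαβ⟩ h
    refine hαβ (Finsupp.ext fun i => ?_)
    have := congrFun h i
    simp only [Pi.zero_apply, mul_eq_zero, Nat.cast_eq_zero, Nat.factorial_ne_zero,
      false_or] at this
    exact_mod_cast sub_eq_zero.1 this
  · intro K _ _ z hz h0
    obtain ⟨α, hα, β, hβ, hαβ, hq⟩ := exists_exponents_of_torsion_zero hP hz h0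
    exact ⟨_, mem_image.2 ⟨(α, β), mem_offDiag.2 ⟨hα, hβ, hαβ⟩, rfl⟩, hq⟩

end Mann

section Derivation

open Polynomial

theorem exists_derivation_of_formallyEtale {k A K : Type*} [CommRing k] [CommRing A] [CommRing K]
    [Algebra k A] [Algebra A K] [Algebra k K] [IsScalarTower k A K] [Algebra.FormallyEtale A K]
    (d : Derivation k A K) : ∃ D : Derivation k K K, ∀ a, D (algebraMap A K a) = d a := by
  let l := d.liftKaehlerDifferential.liftBaseChange K
  let e := KaehlerDifferential.tensorKaehlerEquivOfFormallyEtale k A K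
  refine ⟨(l ∘ₗ e.symm.toLinearMap).compDer (KaehlerDifferential.D k K), fun a => ?_⟩
  change l (e.symm (KaehlerDifferential.D k K (algebraMap A K a))) = d a
  rw [KaehlerDifferential.tensorKaehlerEquivOfFormallyEtale_symm_D_algebraMap]
  simp [l]

theorem exists_derivation_extension {k F K : Type*} [CommRing k] [Field F] [Field K] [CharZero F]
    [Algebra k F] [Algebra F K] [Algebra k K] [IsScalarTower k F K] [Algebra.IsAlgebraic F K]
    (d : Derivation k F F) :
    ∃ D : Derivation k K K, ∀ a, D (algebraMap F K a) = algebraMap F K (d a) := by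
  have := Algebra.FormallyEtale.of_isSeparable F K
  exact exists_derivation_of_formallyEtale ((Algebra.linearMap F K).compDer d)

theorem exists_derivation_of_isTranscendenceBasis {k K ι : Type*} [Field k] [Field K] [Algebra k K]
    [CharZero k] {x : ι → K} (hx : IsTranscendenceBasis k x) (g : ι → K) :
    ∃ D : Derivation k K K, ∀ i, D (x i) = g i := by
  let : Algebra (MvPolynomial ι k) K := (MvPolynomial.aeval x).toAlgebra
  have : IsScalarTower k (MvPolynomial ι k) K :=
    IsScalarTower.of_algebraMap_eq fun r => (MvPolynomial.aeval_C x r).symm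
  have : FaithfulSMul (MvPolynomial ι k) K := (faithfulSMul_iff_algebraMap_injective _ _).2 hx.1
  have halg : Algebra.IsAlgebraic (MvPolynomial ι k) K := by
    have := hx.isAlgebraic
    refine ⟨fun z => (this.isAlgebraic z).of_ringHom_of_comp_eq
      (hx.1.aevalEquiv : MvPolynomial ι k →+* Algebra.adjoin k (Set.range x)) (RingHom.id K)
      hx.1.aevalEquiv.surjective Function.injective_id ?_⟩
    ext p <;> simp [RingHom.algebraMap_toAlgebra]
  let F := FractionRing (MvPolynomial ι k)
  let : Algebra F K := FractionRing.liftAlgebra _ _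
  have : Algebra.IsAlgebraic F K :=
    (IsFractionRing.comap_isAlgebraic_iff (A := MvPolynomial ι k)).1 halg
  have : CharZero F :=
    charZero_of_injective_algebraMap (R := MvPolynomial ι k) (IsFractionRing.injective _ _)
  have : Algebra.FormallyEtale (MvPolynomial ι k) F :=
    .of_isLocalization (nonZeroDivisors _)
  have : Algebra.FormallyEtale F K := .of_isSeparable _ _
  have : Algebra.FormallyEtale (MvPolynomial ι k) K := .comp _ F K
  obtain ⟨D, hD⟩ := exists_derivation_of_formallyEtale (A := MvPolynomial ι k) (K := K)
    (MvPolynomial.mkDerivation k g)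
  refine ⟨D, fun i => ?_⟩
  simpa [RingHom.algebraMap_toAlgebra, MvPolynomial.mkDerivation_X] using hD (MvPolynomial.X i)

theorem exists_derivation_of_algebraicIndependent {k K ι : Type*} [Field k] [Field K] [Algebra k K]
    [CharZero k] {x : ι → K} (hx : AlgebraicIndependent k x) (g : ι → K) :
    ∃ D : Derivation k K K, ∀ i, D (x i) = g i := by
  obtain ⟨s, hs, hs'⟩ := exists_isTranscendenceBasis_superset hx.to_subtype_range
  obtain ⟨D, hD⟩ := exists_derivation_of_isTranscendenceBasis hs'
    fun z : s => Function.extend x g 0 z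
  exact ⟨D, fun i => by rw [hD ⟨x i, hs ⟨i, rfl⟩⟩, hx.injective.extend_apply]⟩

theorem exists_derivation_of_transcendental {k K : Type*} [Field k] [Field K] [Algebra k K]
    [CharZero k] {x : K} (hx : Transcendental k x) : ∃ D : Derivation k K K, D x = 1 := by
  obtain ⟨D, hD⟩ := exists_derivation_of_algebraicIndependent
    ((algebraicIndependent_unique_type_iff (x := fun _ : Unit => x)).2 hx) 1
  exact ⟨D, hD ()⟩

theorem derivation_eq_zero_of_isAlgebraic {R F L M : Type*} [CommRing R] [Field F] [Field L]
    [CharZero F] [Algebra R L] [Algebra F L] [AddCommGroup M] [Module L M] [Module R M]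
    (d : Derivation R L M) (hF : ∀ c : F, d (algebraMap F L c) = 0) {x : L}
    (hx : IsAlgebraic F x) : d x = 0 := by
  let : Module F M := Module.compHom M (algebraMap F L)
  let d' : Derivation F L M := Derivation.mk'
    { toFun := d
      map_add' := map_add d
      map_smul' c y := by
        rw [Algebra.smul_def, d.leibniz, hF, smul_zero, add_zero]
        rfl }
    d.leibniz
  have : IsScalarTower F L M := ⟨fun c y m => by rw [Algebra.smul_def, mul_smul]; rfl⟩
  have h := d'.map_aeval (minpoly F x) x
  rw [minpoly.aeval, map_zero] at h
  exact (smul_eq_zero.1 h.symm).resolve_left <|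
    (minpoly.irreducible hx.isIntegral).separable.aeval_derivative_ne_zero (minpoly.aeval F x)

theorem derivation_comp_algHom {R F L Ω : Type*} [CommRing R] [Field F] [Field L] [Field Ω]
    [CharZero F] [Algebra R F] [Algebra R L] [Algebra R Ω] [Algebra F L] [Algebra F Ω]
    [IsScalarTower R F L] [IsScalarTower R F Ω] [Algebra.IsAlgebraic F L]
    {d : Derivation R F F} {dL : Derivation R L L} {D : Derivation R Ω Ω}
    (hdL : ∀ c, dL (algebraMap F L c) = algebraMap F L (d c))
    (hD : ∀ c, D (algebraMap F Ω c) = algebraMap F Ω (d c)) (σ : L →ₐ[F] Ω) (z : L) :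
    D (σ z) = σ (dL z) := by
  let : Algebra L Ω := σ.toRingHom.toAlgebra
  have : IsScalarTower R L Ω := .of_algebraMap_eq fun r => by
    rw [IsScalarTower.algebraMap_apply R F L, IsScalarTower.algebraMap_apply R F Ω]
    exact (σ.commutes _).symm
  let δ : Derivation R L Ω := D.compAlgebraMap L - (Algebra.linearMap L Ω).compDer dL
  refine sub_eq_zero.1 (derivation_eq_zero_of_isAlgebraic δ (F := F) (fun c => ?_)
    (Algebra.IsAlgebraic.isAlgebraic z))
  change D (σ (algebraMap F L c)) - σ (dL (algebraMap F L c)) = 0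
  rw [hdL, σ.commutes, σ.commutes, hD, sub_self]

/-- The logarithmic derivative `D u / u`. -/
def dlog {R K : Type*} [CommRing R] [Field K] [Algebra R K] (D : Derivation R K K) (u : Kˣ) : K :=
  D u / u

section dlog

variable {R K ι : Type*} [CommRing R] [Field K] [Algebra R K] (D : Derivation R K K)

theorem dlog_eq_zero_iff {u : Kˣ} : dlog D u = 0 ↔ D u = 0 := by simp [dlog]

theorem dlog_one : dlog D 1 = 0 := by simp [dlog]

theorem dlog_mul (u v : Kˣ) : dlog D (u * v) = dlog D u + dlog D v := by
  simp only [dlog, Units.val_mul, Derivation.leibniz, smul_eq_mul]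
  field_simp
  ring

/-- The logarithmic derivative as a homomorphism. -/
def dlogHom : Kˣ →* Multiplicative K where
  toFun u := .ofAdd (dlog D u)
  map_one' := congrArg _ (dlog_one D)
  map_mul' u v := congrArg _ (dlog_mul D u v)

theorem dlog_inv (u : Kˣ) : dlog D u⁻¹ = -dlog D u := map_inv (dlogHom D) u

theorem dlog_zpow (u : Kˣ) (n : ℤ) : dlog D (u ^ n) = n * dlog D u := by
  rw [← zsmul_eq_mul]
  exact map_zpow (dlogHom D) u n

theorem dlog_prod (s : Finset ι) (u : ι → Kˣ) : dlog D (∏ i ∈ s, u i) = ∑ i ∈ s, dlog D (u i) :=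
  map_prod (dlogHom D) u s

theorem dlog_prod_zpow [Fintype ι] (u : ι → Kˣ) (q : ι → ℤ) :
    dlog D (∏ i, u i ^ q i) = ∑ i, q i * dlog D (u i) := by
  simp only [dlog_prod, dlog_zpow]

theorem derivation_prod_zpow_eq_zero [Fintype ι] {u : ι → Kˣ} (hu : ∀ i, D (u i) = 0)
    (q : ι → ℤ) : D ((∏ i, u i ^ q i : Kˣ) : K) = 0 := by
  rw [← dlog_eq_zero_iff, dlog_prod_zpow]
  simp only [(dlog_eq_zero_iff D).2 (hu _), mul_zero, Finset.sum_const_zero]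

theorem dlog_eq_zero_of_isOfFinOrder [CharZero K] {u : Kˣ} (hu : IsOfFinOrder u) :
    dlog D u = 0 := by
  obtain ⟨n, hn, hun⟩ := isOfFinOrder_iff_pow_eq_one.1 hu
  have h := dlog_zpow D u n
  rw [zpow_natCast, hun, dlog_one] at h
  exact (mul_eq_zero.1 h.symm).resolve_left (mod_cast hn.ne')

theorem dlog_map {F : Type*} [Field F] [Algebra R F] [Algebra F K] {d : Derivation R F F}
    {D : Derivation R K K} (hD : ∀ x, D (algebraMap F K x) = algebraMap F K (d x)) (u : Fˣ) :
    dlog D (Units.map (algebraMap F K : F →* K) u) = algebraMap F K (dlog d u) := by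
  simp [dlog, hD]

end dlog

end Derivation

section Residue

open Polynomial
open scoped WithZero

variable {E : Type*} [Field E]

theorem derivation_algebraMap_polynomial {D : Derivation E (RatFunc E) (RatFunc E)}
    (hD : D RatFunc.X = 1) (f : E[X]) :
    D (algebraMap E[X] (RatFunc E) f) = algebraMap E[X] (RatFunc E) (derivative f) := by
  have h := D.map_aeval f RatFunc.X
  rw [hD, smul_eq_mul, mul_one] at h
  simpa [← RatFunc.algebraMap_X, aeval_algebraMap_apply] using h

theorem degree_X_mul_derivative_sub_lt {f : E[X]} (hf : f ≠ 0) :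
    (X * derivative f - C (f.natDegree : E) * f).degree < f.degree := by
  rw [degree_eq_natDegree hf, degree_lt_iff_coeff_zero]
  intro m hm
  have hX : (X * derivative f).coeff m = m * f.coeff m := by
    cases m with
    | zero => simp
    | succ m => rw [coeff_X_mul, coeff_derivative, mul_comm]; push_cast; rfl
  rw [coeff_sub, coeff_C_mul, hX, ← sub_mul]
  rcases hm.eq_or_lt with rfl | hm
  · rw [sub_self, zero_mul]
  · rw [coeff_eq_zero_of_natDegree_lt hm, mul_zero]

theorem inftyValuation_div_lt_one [DecidableEq (RatFunc E)] {f g : E[X]} (h : f.degree < g.degree) :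
    RatFunc.inftyValuation E (algebraMap E[X] (RatFunc E) f / algebraMap E[X] (RatFunc E) g)
      < 1 := by
  rcases eq_or_ne f 0 with rfl | hf
  · simp
  have hg : g ≠ 0 := by
    rintro rfl
    simp at h
  rw [map_div₀, RatFunc.inftyValuation_apply, RatFunc.inftyValuation_apply,
    RatFunc.inftyValuation.polynomial E hf, RatFunc.inftyValuation.polynomial E hg,
    ← WithZero.exp_sub, ← WithZero.exp_zero, WithZero.exp_lt_exp, sub_neg, Nat.cast_lt]
  exact natDegree_lt_natDegree hf h

theorem inftyValuation_X_mul_dlog_sub_intDegree_lt_one [DecidableEq (RatFunc E)]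
    {D : Derivation E (RatFunc E) (RatFunc E)} (hD : D RatFunc.X = 1) (u : (RatFunc E)ˣ) :
    RatFunc.inftyValuation E
      (RatFunc.X * dlog D u - ((u : RatFunc E).intDegree : RatFunc E)) < 1 := by
  have hpoly (v : (RatFunc E)ˣ) {f : E[X]} (hv : (v : RatFunc E) = algebraMap _ _ f) :
      RatFunc.inftyValuation E
        (RatFunc.X * dlog D v - ((v : RatFunc E).intDegree : RatFunc E)) < 1 := by
    have hf0 : algebraMap E[X] (RatFunc E) f ≠ 0 := hv ▸ v.ne_zero
    have hf : f ≠ 0 := fun h => hf0 (by rw [h, map_zero])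
    convert! inftyValuation_div_lt_one (degree_X_mul_derivative_sub_lt hf) using 2
    rw [dlog, hv, derivation_algebraMap_polynomial hD, RatFunc.intDegree_polynomial, eq_div_iff hf0]
    simp only [map_sub, map_mul, RatFunc.algebraMap_X, map_natCast,
      Int.cast_natCast]
    field_simp
  have hnum : (u : RatFunc E).num ≠ 0 := RatFunc.num_ne_zero u.ne_zero
  let p := Units.mk0 _ (RatFunc.algebraMap_ne_zero hnum)
  let q := Units.mk0 _ (RatFunc.algebraMap_ne_zero (u : RatFunc E).denom_ne_zero)
  have hu : u = p * q⁻¹ := Units.ext <| by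
    simpa [p, q, div_eq_mul_inv] using (RatFunc.num_div_denom (u : RatFunc E)).symm
  convert! Valuation.map_sub_lt _ (hpoly p rfl) (hpoly q rfl) using 2
  rw [hu, dlog_mul, dlog_inv, Units.val_mul, RatFunc.intDegree_mul p.ne_zero q⁻¹.ne_zero,
    Units.val_inv_eq_inv_val, RatFunc.intDegree_inv]
  push_cast
  ring

theorem sum_mul_intDegree_eq_zero {ι : Type*} [Fintype ι]
    {D : Derivation E (RatFunc E) (RatFunc E)} (hD : D RatFunc.X = 1) (u : ι → (RatFunc E)ˣ)
    (a : ι → E) (h : ∑ i, RatFunc.C (a i) * dlog D (u i) = 0) :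
    ∑ i, a i * ((u i : RatFunc E).intDegree : E) = 0 := by
  classical
  by_contra hne
  refine (RatFunc.inftyValuation.C E (neg_ne_zero.2 hne)).not_lt ?_
  have hsum : RatFunc.C (-∑ i, a i * ((u i : RatFunc E).intDegree : E)) =
      ∑ i, RatFunc.C (a i) *
        (RatFunc.X * dlog D (u i) - ((u i : RatFunc E).intDegree : RatFunc E)) := by
    simp_rw [mul_sub, mul_left_comm _ RatFunc.X, Finset.sum_sub_distrib, ← Finset.mul_sum, h]
    simp
  rw [hsum]
  refine Valuation.map_sum_lt _ one_ne_zero fun i _ => ?_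
  rw [map_mul]
  refine (mul_le_of_le_one_left' ?_).trans_lt
    (inftyValuation_X_mul_dlog_sub_intDegree_lt_one hD (u i))
  rcases eq_or_ne (a i) 0 with h0 | h0
  · simp [h0]
  · exact (RatFunc.inftyValuation.C E h0).le

theorem trace_dlog {R F L : Type*} [CommRing R] [Field F] [Field L] [CharZero F] [Algebra R F]
    [Algebra R L] [Algebra F L] [IsScalarTower R F L] [FiniteDimensional F L]
    {d : Derivation R F F} {dL : Derivation R L L}
    (hdL : ∀ c, dL (algebraMap F L c) = algebraMap F L (d c)) (u : Lˣ) :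
    Algebra.trace F L (dlog dL u) = dlog d (Units.map (Algebra.norm F) u) := by
  let Ω := AlgebraicClosure L
  obtain ⟨D, hD⟩ := exists_derivation_extension (K := Ω) d
  apply (algebraMap F Ω).injective
  have hσ (σ : L →ₐ[F] Ω) : σ (dlog dL u) = dlog D (Units.map σ u) := by
    simp only [dlog, map_div₀, Units.coe_map, MonoidHom.coe_coe, derivation_comp_algHom hdL hD]
  have hnorm : Units.map (algebraMap F Ω) (Units.map (Algebra.norm F) u) =
      ∏ σ : L →ₐ[F] Ω, Units.map (σ : L →* Ω) u := by
    ext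
    simp [Algebra.norm_eq_prod_embeddings F Ω]
  rw [trace_eq_sum_embeddings Ω]
  simp_rw [hσ]
  rw [← dlog_prod, ← hnorm]
  simp [dlog, hD]

/-- The degree of the norm from `L` to `E(t)`; it plays the role of the order at infinity. -/
noncomputable def normDegree (E L : Type*) [Field E] [Field L] [Algebra (RatFunc E) L]
    [FiniteDimensional (RatFunc E) L] : Lˣ →* Multiplicative ℤ where
  toFun u := .ofAdd (Algebra.norm (RatFunc E) (u : L)).intDegree
  map_one' := by simp
  map_mul' u v := by
    have hne (u : Lˣ) : Algebra.norm (RatFunc E) (u : L) ≠ 0 := Algebra.norm_ne_zero_iff.2 u.ne_zero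
    rw [Units.val_mul, map_mul, RatFunc.intDegree_mul (hne u) (hne v), ofAdd_add]

section normDegree

variable {L ι : Type*} [Field L] [Algebra (RatFunc E) L] [FiniteDimensional (RatFunc E) L]
  [Fintype ι]

theorem normDegree_prod_zpow (y : ι → Lˣ) (q : ι → ℤ) :
    (normDegree E L (∏ i, y i ^ q i)).toAdd = ∑ i, q i * (normDegree E L (y i)).toAdd := by
  simp only [map_prod, map_zpow, toAdd_prod, toAdd_zpow, smul_eq_mul]

theorem normDegree_eq_finrank {u : Lˣ} (hu : (u : L) = algebraMap (RatFunc E) L RatFunc.X) :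
    (normDegree E L u).toAdd = Module.finrank (RatFunc E) L := by
  have hpow (n : ℕ) : (RatFunc.X ^ n : RatFunc E).intDegree = n := by
    rw [← RatFunc.algebraMap_X, ← map_pow, RatFunc.intDegree_polynomial, natDegree_X_pow]
  change (Algebra.norm (RatFunc E) (u : L)).intDegree = _
  rw [hu, Algebra.norm_algebraMap, hpow]

theorem sum_mul_normDegree_eq_zero [CharZero E] {d : Derivation E (RatFunc E) (RatFunc E)}
    (hd : d RatFunc.X = 1) [Algebra E L] [IsScalarTower E (RatFunc E) L] {dL : Derivation E L L}
    (hdL : ∀ c, dL (algebraMap (RatFunc E) L c) = algebraMap (RatFunc E) L (d c))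
    (y : ι → Lˣ) (a : ι → E) (h : ∑ i, algebraMap E L (a i) * dlog dL (y i) = 0) :
    ∑ i, a i * ((normDegree E L (y i)).toAdd : E) = 0 := by
  have : CharZero (RatFunc E) := charZero_of_injective_algebraMap (algebraMap E _).injective
  refine sum_mul_intDegree_eq_zero hd (fun i => Units.map (Algebra.norm (RatFunc E)) (y i)) a ?_
  have htrace (i : ι) : RatFunc.C (a i) * dlog d (Units.map (Algebra.norm (RatFunc E)) (y i)) =
      Algebra.trace (RatFunc E) L (algebraMap E L (a i) * dlog dL (y i)) := by
    rw [← trace_dlog hdL, ← smul_eq_mul, ← map_smul, Algebra.smul_def,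
      IsScalarTower.algebraMap_apply E (RatFunc E) L, RatFunc.algebraMap_eq_C]
  simp_rw [htrace, ← map_sum, h, map_zero]

theorem prod_zpow_ne_algebraMap_X [CharZero E] [Algebra E L] [IsScalarTower E (RatFunc E) L]
    {k : Type*} [Field k] [Algebra k E] {y : ι → Lˣ} {a : ι → k}
    (h : ∀ D : Derivation E L L, ∑ i, algebraMap E L (algebraMap k E (a i)) * dlog D (y i) = 0)
    {φ : k →+ ℚ} {q : ι → ℤ} (hq : ∀ i, φ (a i) = q i) :
    ((∏ i, y i ^ q i : Lˣ) : L) ≠ algebraMap (RatFunc E) L RatFunc.X := by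
  intro hX
  have : CharZero (RatFunc E) := charZero_of_injective_algebraMap (algebraMap E _).injective
  obtain ⟨d, hd⟩ := exists_derivation_of_transcendental (RatFunc.transcendental_X (K := E))
  obtain ⟨dL, hdL⟩ := exists_derivation_extension (K := L) d
  have hsum := sum_mul_normDegree_eq_zero hd hdL y _ (h dL)
  have hk : ∑ i, (normDegree E L (y i)).toAdd • a i = 0 :=
    (algebraMap k E).injective (by simpa [mul_comm] using hsum)
  have hφ := congrArg φ hk
  simp only [map_sum, map_zsmul, hq, map_zero] at hφ
  simp only [zsmul_eq_mul] at hφ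
  have hzero : ∑ i, q i * (normDegree E L (y i)).toAdd = 0 := by
    simp_rw [mul_comm (q _)]
    exact_mod_cast hφ
  rw [← normDegree_prod_zpow, normDegree_eq_finrank hX] at hzero
  exact Module.finrank_pos.ne' (Int.ofNat_eq_zero.1 hzero)

end normDegree

theorem exists_algebraic_over_ratFunc {k K : Type*} [Field k] [Field K] [Algebra k K] {t : K}
    (ht : Transcendental k t) : ∃ (E : IntermediateField k K) (_ : Algebra (RatFunc E) K),
      IsScalarTower E (RatFunc E) K ∧ Algebra.IsAlgebraic (RatFunc E) K ∧
        algebraMap (RatFunc E) K RatFunc.X = t := by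
  have h0 : AlgebraicIndepOn k id {t} :=
    (algebraicIndependent_unique_type_iff (ι := ({t} : Set K))).2 (by simpa using ht)
  obtain ⟨s, hs, hs'⟩ := exists_isTranscendenceBasis_superset h0
  have hts : t ∈ s := hs rfl
  let E := IntermediateField.adjoin k (s \ {t})
  have htE : Transcendental E t := by
    rw [IntermediateField.transcendental_adjoin_iff]
    have := hs'.1.transcendental_adjoin (s := Subtype.val ⁻¹' (s \ {t})) (i := ⟨t, hts⟩) (by simp)
    rwa [Subtype.image_preimage_coe, Set.inter_eq_right.2 Set.sdiff_subset] at this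
  let f : RatFunc E →ₐ[E] K :=
    (IntermediateField.val _).comp (RatFunc.algEquivOfTranscendental t htE).toAlgHom
  let : Algebra (RatFunc E) K := f.toRingHom.toAlgebra
  refine ⟨E, f.toRingHom.toAlgebra, .of_algebraMap_eq fun c => (f.commutes c).symm, ?_, ?_⟩
  · have hsE : IntermediateField.adjoin k s ≤
        (IntermediateField.adjoin E {t}).restrictScalars k := by
      rw [IntermediateField.adjoin_adjoin_left, Set.sdiff_union_of_subset hs]
    have halg := hs'.isAlgebraic_field
    rw [Subtype.range_val] at halg
    refine ⟨fun x => (halg.isAlgebraic x).ringHom_of_comp_eq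
      ((RatFunc.algEquivOfTranscendental t htE).symm.toRingHom.comp
        (IntermediateField.inclusion hsE).toRingHom) (RingHom.id K) (RingHom.injective _) ?_⟩
    ext c
    exact congrArg Subtype.val ((RatFunc.algEquivOfTranscendental t htE).apply_symm_apply
      (IntermediateField.inclusion hsE c))
  · exact RatFunc.algEquivOfTranscendental_X t htE

theorem isAlgebraic_prod_zpow_of_sum_dlog_eq_zero {k K ι : Type*} [Field k] [Field K] [CharZero K]
    [Algebra k K] [Fintype ι] {y : ι → Kˣ} {a : ι → k}
    (h : ∀ D : Derivation k K K, ∑ i, algebraMap k K (a i) * dlog D (y i) = 0)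
    {φ : k →+ ℚ} {q : ι → ℤ} (hq : ∀ i, φ (a i) = q i) :
    IsAlgebraic k ((∏ i, y i ^ q i : Kˣ) : K) := by
  by_contra ht
  obtain ⟨E, _, _, _, hX⟩ := exists_algebraic_over_ratFunc ht
  have : CharZero E := (algebraMap E K).charZero
  let L := IntermediateField.adjoin (RatFunc E) (Set.range fun i => (y i : K))
  have : CharZero L := (algebraMap L K).charZero
  have : IsScalarTower E L K := .of_algebraMap_eq fun c => by
    rw [IsScalarTower.algebraMap_apply E (RatFunc E) K, IsScalarTower.algebraMap_apply
      E (RatFunc E) L]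
    rfl
  have : FiniteDimensional (RatFunc E) L := IntermediateField.finiteDimensional_adjoin
    fun x _ => (Algebra.IsAlgebraic.isAlgebraic x).isIntegral
  let yL (i : ι) : Lˣ := Units.mk0 ⟨y i, IntermediateField.subset_adjoin _ _ ⟨i, rfl⟩⟩
    fun h0 => (y i).ne_zero (congrArg Subtype.val h0)
  have hyL (i : ι) : Units.map (algebraMap L K : L →* K) (yL i) = y i := Units.ext rfl
  refine prod_zpow_ne_algebraMap_X (E := E) (y := yL) (a := a) (fun d => ?_) hq
    ((algebraMap L K).injective ?_)
  · obtain ⟨D, hD⟩ := exists_derivation_extension (k := E) (K := K) d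
    apply (algebraMap L K).injective
    rw [map_zero, ← h (D.restrictScalars k), map_sum]
    refine Finset.sum_congr rfl fun i _ => ?_
    rw [map_mul, ← dlog_map hD, hyL, ← IsScalarTower.algebraMap_apply,
      ← IsScalarTower.algebraMap_apply]
    rfl
  · rw [← IsScalarTower.algebraMap_apply, hX]
    simp [← hyL]

end Residue

section MulIndepMod

theorem linearIndependent_of_pivot {R κ ι : Type*} [Ring R] [NoZeroDivisors R] {r : κ → ι → R}
    {e : κ → ι} (h : ∀ j j', r j (e j') = 0 ↔ j ≠ j') : LinearIndependent R r := by
  classical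
  refine linearIndependent_iff'.2 fun s g hg j hj => ?_
  have hgj := congrFun hg (e j)
  rw [Finset.sum_apply, Finset.sum_eq_single_of_mem j hj fun j' _ hne => by
    rw [Pi.smul_apply, (h j' j).2 hne, smul_zero]] at hgj
  exact (mul_eq_zero.1 hgj).resolve_right fun h0 => (h j j).1 h0 rfl

variable {G ι : Type*} [CommGroup G] [Fintype ι]

/-- Multiplicative independence of the finite tuple `y` modulo the subgroup `S`. -/
def MulIndepMod (S : Subgroup G) (y : ι → G) : Prop :=
  ∀ q : ι → ℤ, ∏ i, y i ^ q i ∈ S → q = 0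

theorem prod_zpow_sum_mul {κ : Type*} [Fintype κ] (y : ι → G) (q : κ → ℤ) (r : κ → ι → ℤ) :
    ∏ i, y i ^ ∑ j, q j * r j i = ∏ j, (∏ i, y i ^ r j i) ^ q j := by
  have hsum (u : G) (f : κ → ℤ) : u ^ ∑ j, f j = ∏ j, u ^ f j :=
    map_prod (zpowersHom G u) (fun j => Multiplicative.ofAdd (f j)) Finset.univ
  simp_rw [hsum, ← Finset.prod_zpow, ← zpow_mul]
  rw [Finset.prod_comm]
  simp_rw [mul_comm]

theorem MulIndepMod.prod_zpow {κ : Type*} [Fintype κ] {S : Subgroup G} {y : ι → G}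
    (hy : MulIndepMod S y) {r : κ → ι → ℤ} (hr : LinearIndependent ℤ r) :
    MulIndepMod S fun j => ∏ i, y i ^ r j i := fun q hq => by
  rw [← prod_zpow_sum_mul] at hq
  refine funext (Fintype.linearIndependent_iff.1 hr q ?_)
  ext i
  simpa using congrFun (hy _ hq) i

theorem mulIndepMod_restrict_iff {S : Subgroup G} {y : ι → G} {J : Finset ι} :
    MulIndepMod S (fun j : J => y j) ↔
      ∀ q : ι → ℤ, ∏ i, y i ^ q i ∈ S → (∀ i ∉ J, q i = 0) → q = 0 := by
  classical
  have hprod (q : ι → ℤ) (hq : ∀ i ∉ J, q i = 0) : ∏ j : J, y j ^ q j = ∏ i, y i ^ q i := by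
    rw [Finset.prod_coe_sort J fun i => y i ^ q i]
    exact Finset.prod_subset J.subset_univ fun i _ hi => by rw [hq i hi, zpow_zero]
  refine ⟨fun h q hqS hq => ?_, fun h q hqS => ?_⟩
  · have hJ := h (fun j => q j) (by rwa [hprod q hq])
    ext i
    by_cases hi : i ∈ J
    exacts [congrFun hJ ⟨i, hi⟩, hq i hi]
  · let q' : ι → ℤ := Function.extend (Subtype.val : J → ι) q (0 : ι → ℤ)
    have hq'J (j : J) : q' j = q j := Subtype.val_injective.extend_apply q _ j
    have hq' : ∀ i ∉ J, q' i = 0 := fun i hi =>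
      Function.extend_apply' q _ i fun ⟨j, hj⟩ => hi (hj ▸ j.2)
    have hq'0 := h q' (by simpa only [← hprod q' hq', hq'J] using hqS) hq'
    ext j
    rw [← hq'J, hq'0]
    rfl

theorem exists_mulIndepMod_restrict (S : Subgroup G) (y : ι → G) :
    ∃ J : Finset ι, MulIndepMod S (fun j : J => y j) ∧ ∃ r : {j // j ∉ J} → ι → ℤ,
      (∀ j, ∏ i, y i ^ r j i ∈ S) ∧ ∀ j j' : {j // j ∉ J}, r j j' = 0 ↔ j ≠ j' := by
  classical
  obtain ⟨J, -, hJ⟩ := Finite.exists_le_maximal (a := (∅ : Finset ι))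
    (p := fun J : Finset ι => MulIndepMod S fun j : J => y j) fun _ _ => funext isEmptyElim
  have hrel : ∀ j : {j // j ∉ J}, ∃ q : ι → ℤ, ∏ i, y i ^ q i ∈ S ∧
      (∀ i ∉ insert (j : ι) J, q i = 0) ∧ q ≠ 0 := fun j => by
    simpa only [mulIndepMod_restrict_iff, not_forall, exists_prop] using
      hJ.not_prop_of_gt (Finset.ssubset_insert j.2)
  choose r hrS hr0 hrne using hrel
  refine ⟨J, hJ.prop, r, hrS, fun j j' => ⟨?_, fun hne => hr0 j j' ?_⟩⟩
  · rintro h0 rfl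
    refine hrne j (mulIndepMod_restrict_iff.1 hJ.prop _ (hrS j) fun i hi => ?_)
    by_cases hij : i = j
    · rw [hij, h0]
    · exact hr0 j i (by simp [hij, hi])
  · simp [j'.2, Subtype.coe_inj, hne.symm]

theorem prod_zpow_eq_one_iff {R ι : Type*} [CommRing R] [Fintype ι] {y : ι → Rˣ} {q : ι → ℤ} :
    ∏ i, y i ^ q i = 1 ↔
      ∏ i, (y i : R) ^ (q i).toNat = ∏ i, (y i : R) ^ (-q i).toNat := by
  have hq (i : ι) : y i ^ q i = y i ^ (q i).toNat / y i ^ (-q i).toNat := by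
    rw [div_eq_mul_inv, ← zpow_natCast, ← zpow_natCast, ← zpow_sub, Int.toNat_sub_toNat_neg]
  simp only [hq, Finset.prod_div_distrib, div_eq_one, ← Units.val_inj, Units.coe_prod,
    Units.val_pow_eq_pow_val]

end MulIndepMod

section Ax

theorem exists_additive_int_of_ne_zero {k ι : Type*} [Field k] [CharZero k] [Finite ι] {a : ι → k}
    (ha : a ≠ 0) : ∃ (φ : k →+ ℚ) (q : ι → ℤ), (∀ i, φ (a i) = q i) ∧ q ≠ 0 := by
  obtain ⟨i, hi⟩ := Function.ne_iff.1 ha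
  obtain ⟨ψ, hψ⟩ : ∃ ψ : Module.Dual ℚ k, ψ (a i) ≠ 0 := by
    simpa using mt (Module.forall_dual_apply_eq_zero_iff ℚ (a i)).1 hi
  obtain ⟨N, hN⟩ := IsLocalization.exist_integer_multiples_of_finite (nonZeroDivisors ℤ)
    fun i => ψ (a i)
  choose q hq using hN
  refine ⟨(N : ℤ) • ψ.toAddMonoidHom, q, fun i => (hq i).symm, fun h0 => ?_⟩
  have hqi := hq i
  rw [h0, Pi.zero_apply, map_zero] at hqi
  exact smul_ne_zero (nonZeroDivisors.coe_ne_zero N) hψ hqi.symm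

variable {k K ι κ : Type*} [Field k] [Field K] [Algebra k K]

/-- After normalising one coordinate to `1`, differentiating a vector of minimal support shrinks
the support, so that vector is constant. -/
theorem exists_algebraMap_mem_of_derivation_mem [Finite κ] {S : Set (Derivation k K K)}
    (hS : ∀ x : K, (∀ D ∈ S, D x = 0) → x ∈ (algebraMap k K).range) {R : Submodule K (κ → K)}
    (hR : ∀ D ∈ S, ∀ f ∈ R, (fun j => D (f j)) ∈ R) (hR0 : R ≠ ⊥) :
    ∃ c : κ → k, (fun j => algebraMap k K (c j)) ∈ R ∧ c ≠ 0 := by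
  obtain ⟨f, ⟨hf, hf0⟩, hmin⟩ := exists_minimalFor_of_wellFoundedLT
    (fun f : κ → K => f ∈ R ∧ f ≠ 0) (fun f => (Function.support f).ncard)
    (R.ne_bot_iff.1 hR0)
  obtain ⟨j, hj⟩ := Function.ne_iff.1 hf0
  let g : κ → K := (f j)⁻¹ • f
  have hg : g ∈ R := R.smul_mem _ hf
  have hgj : g j = 1 := inv_mul_cancel₀ hj
  have hDg : ∀ D ∈ S, (fun i => D (g i)) = 0 := fun D hD => by
    by_contra hne
    have hlt : Function.support (fun i => D (g i)) ⊂ Function.support f :=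
      ⟨fun i hi hfi => hi (by simp [g, show f i = 0 from hfi]), fun h => h hj (by simp [hgj])⟩
    exact hlt.not_subset <| (Set.eq_of_subset_of_ncard_le hlt.subset
      (hmin ⟨hR D hD g hg, hne⟩ (Set.ncard_le_ncard hlt.subset))).ge
  choose c hc using fun i => hS (g i) fun D hD => congrFun (hDg D hD) i
  refine ⟨c, by simpa only [hc] using hg, fun h0 => ?_⟩
  have hcj := hc j
  rw [h0, hgj, Pi.zero_apply, map_zero] at hcj
  exact zero_ne_one hcj

/-- The differential form `∑ i, a i * dy i / y i`, as a functional on derivations. -/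
def dlogForm [Fintype ι] (y : ι → Kˣ) : (ι → k) →ₗ[k] Derivation k K K →ₗ[K] K :=
  Fintype.linearCombination k fun i =>
    { toFun := fun D => dlog D (y i)
      map_add' := fun D E => add_div (D (y i)) (E (y i)) _
      map_smul' := fun c D => mul_div_assoc c (D (y i)) _ }

section Form

variable [Fintype ι] (y : ι → Kˣ) (a : ι → k)

theorem dlogForm_apply (D : Derivation k K K) :
    dlogForm y a D = ∑ i, algebraMap k K (a i) * dlog D (y i) := by
  simp [dlogForm, Fintype.linearCombination_apply, LinearMap.sum_apply, Algebra.smul_def]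
  rfl

theorem dlogForm_single [DecidableEq ι] (i : ι) (D : Derivation k K K) :
    dlogForm y (Pi.single i (1 : k)) D = dlog D (y i) := by
  simp [dlogForm_apply, Pi.single_apply]

theorem dlog_commutator (D E : Derivation k K K) (u : Kˣ) :
    dlog ⁅D, E⁆ u = D (dlog E u) - E (dlog D u) := by
  simp only [dlog, Derivation.leibniz_div, Derivation.commutator_apply, smul_eq_mul]
  field_simp
  ring

theorem dlogForm_commutator (D E : Derivation k K K) :
    dlogForm y a ⁅D, E⁆ = D (dlogForm y a E) - E (dlogForm y a D) := by
  simp only [dlogForm_apply, map_sum, Derivation.leibniz, Derivation.map_algebraMap, smul_eq_mul,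
    mul_zero, add_zero, dlog_commutator, mul_sub, Finset.sum_sub_distrib]

end Form

/-- The units of `K` lying in the subfield `k`. -/
def constantUnits (k K : Type*) [Field k] [Field K] [Algebra k K] : Subgroup Kˣ :=
  (algebraMap k K).fieldRange.toSubmonoid.units

theorem mem_constantUnits {u : Kˣ} : u ∈ constantUnits k K ↔ (u : K) ∈ (algebraMap k K).range := by
  simp only [constantUnits, Submonoid.mem_units_iff, Units.val_inv_eq_inv_val]
  exact ⟨And.left, fun h => ⟨h, (algebraMap k K).fieldRange.inv_mem h⟩⟩

theorem linearIndependent_dlogForm [CharZero K] [Fintype ι] [Finite κ]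
    {S : Set (Derivation k K K)}
    (hS : ∀ x : K, (∀ D ∈ S, D x = 0) → x ∈ (algebraMap k K).range) {y : ι → Kˣ}
    (hy : MulIndepMod (constantUnits k K) y) {m : κ → ι → k} (hm : LinearIndependent k m)
    (hmS : ∀ j, ∀ D ∈ S, dlogForm y (m j) D = 0) :
    LinearIndependent K fun j => dlogForm (K := K) y (m j) := by
  cases nonempty_fintype κ
  have : CharZero k := (algebraMap k K).charZero
  let R : Submodule K (κ → K) :=
    LinearMap.ker (Fintype.linearCombination K fun j => dlogForm (K := K) y (m j))
  have mem_R (f : κ → K) : f ∈ R ↔ ∀ E, ∑ j, f j * dlogForm y (m j) E = 0 := by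
    simp [R, Fintype.linearCombination_apply, LinearMap.ext_iff, LinearMap.sum_apply]
  have hR : ∀ D ∈ S, ∀ f ∈ R, (fun j => D (f j)) ∈ R := fun D hD f hf => by
    refine (mem_R _).2 fun E => ?_
    have hDE := congrArg D ((mem_R f).1 hf E)
    have hf' := (mem_R f).1 hf ⁅D, E⁆
    simp only [dlogForm_commutator, hmS _ D hD, map_zero, sub_zero] at hf'
    simpa [map_sum, Derivation.leibniz, Finset.sum_add_distrib, hf', mul_comm] using hDE
  rw [Fintype.linearIndependent_iff]
  by_contra! hdep
  obtain ⟨g, hg, i, hgi⟩ := hdep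
  obtain ⟨c, hc, hc0⟩ := exists_algebraMap_mem_of_derivation_mem hS hR <|
    R.ne_bot_iff.2 ⟨g, hg, fun h0 => hgi (congrFun h0 i)⟩
  have ha : ∑ j, c j • m j ≠ 0 := fun h0 => hc0 (funext (Fintype.linearIndependent_iff.1 hm c h0))
  obtain ⟨φ, q, hq, hq0⟩ := exists_additive_int_of_ne_zero ha
  refine hq0 (hy q (mem_constantUnits.2 (hS _ fun D _ => ?_)))
  refine derivation_eq_zero_of_isAlgebraic D (F := k) (fun c => D.map_algebraMap c)
    (isAlgebraic_prod_zpow_of_sum_dlog_eq_zero (fun E => ?_) hq)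
  rw [← dlogForm_apply, map_sum, LinearMap.sum_apply, ← (mem_R _).1 hc E]
  exact Finset.sum_congr rfl fun j _ => by
    rw [map_smul, LinearMap.smul_apply, Algebra.smul_def]

theorem derivation_eq_zero_of_isAlgebraic_adjoin [CharZero K] (E : Derivation k K K) {s : Set K}
    (hs : ∀ x ∈ s, E x = 0) {x : K} (hx : IsAlgebraic (IntermediateField.adjoin k s) x) :
    E x = 0 := by
  refine derivation_eq_zero_of_isAlgebraic E (fun ⟨c, hc⟩ => ?_) hx
  change E c = 0
  induction hc using IntermediateField.adjoin_induction with
  | mem x hx => exact hs x hx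
  | algebraMap c => exact E.map_algebraMap c
  | add x y _ _ hx hy => rw [map_add, hx, hy, add_zero]
  | inv x _ hx => rw [Derivation.leibniz_inv, hx, smul_zero]
  | mul x y _ _ hx hy => rw [Derivation.leibniz, hx, hy, smul_zero, smul_zero, add_zero]

theorem linearIndependent_sumElim_of_dual {W β : Type*} [AddCommGroup W] [Module K W] [Finite κ]
    [Finite β] [DecidableEq β] {v : κ → Module.Dual K W} {w : β → Module.Dual K W} {x : β → W}
    (hv : LinearIndependent K v) (hvx : ∀ j b, v j (x b) = 0)
    (hwx : ∀ b b', w b (x b') = if b = b' then 1 else 0) :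
    LinearIndependent K (Sum.elim v w) := by
  cases nonempty_fintype κ
  cases nonempty_fintype β
  refine Fintype.linearIndependent_iff.2 fun g hg => ?_
  rw [Fintype.sum_sum_type] at hg
  have hgr (b : β) : g (.inr b) = 0 := by
    simpa [LinearMap.sum_apply, hvx, hwx] using LinearMap.congr_fun hg (x b)
  simp only [Sum.elim_inl, hgr, zero_smul, Finset.sum_const_zero, add_zero] at hg
  rintro (j | b)
  exacts [Fintype.linearIndependent_iff.1 hv _ hg j, hgr b]

theorem card_le_card_of_forall_apply_eq_zero {W α γ : Type*} [AddCommGroup W] [Module K W]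
    [Fintype α] [Fintype γ] {v : α → Module.Dual K W} (hv : LinearIndependent K v)
    {θ : γ → Module.Dual K W} (h : ∀ x, (∀ s, θ s x = 0) → ∀ i, v i x = 0) :
    Fintype.card α ≤ Fintype.card γ := by
  have hspan : Set.range v ⊆ Submodule.span K (Set.range θ) := by
    rintro _ ⟨i, rfl⟩
    refine mem_span_of_iInf_ker_le_ker fun x hx => ?_
    simp only [Submodule.mem_iInf, LinearMap.mem_ker] at hx
    exact h x hx i
  rw [← finrank_span_eq_card hv]
  have := FiniteDimensional.span_of_finite K (Set.finite_range θ)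
  exact (Submodule.finrank_mono (Submodule.span_le.2 hspan)).trans (finrank_range_le_card θ)

/-- Ax's inequality: `κ` independent logarithmic forms vanishing on `S`, together with
`β` coordinates on which `S` acts freely, bound the transcendence degree from below. -/
theorem card_add_card_le_of_isAlgebraic_adjoin [CharZero K] [Fintype ι] [Fintype κ]
    {S : Set (Derivation k K K)}
    (hS : ∀ x : K, (∀ D ∈ S, D x = 0) → x ∈ (algebraMap k K).range) {y : ι → Kˣ}
    (hy : MulIndepMod (constantUnits k K) y) {m : κ → ι → k} (hm : LinearIndependent k m)
    (hmS : ∀ j, ∀ D ∈ S, dlogForm y (m j) D = 0) {B : Finset ι}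
    (hB : ∀ g : B → K, ∃ D ∈ S, ∀ b : B, D (y b) = g b) {C : Finset ι}
    (hC : ∀ i, IsAlgebraic (IntermediateField.adjoin k ((fun i => (y i : K)) '' C)) (y i : K)) :
    Fintype.card κ + B.card ≤ C.card := by
  classical
  choose D hDS hD using fun b' : B => hB fun b => if b = b' then (y b : K) else 0
  have hli : LinearIndependent K (Sum.elim (fun j => dlogForm (K := K) y (m j))
      fun b : B => dlogForm (K := K) y (Pi.single (b : ι) (1 : k))) := by
    refine linearIndependent_sumElim_of_dual (linearIndependent_dlogForm hS hy hm hmS) (x := D)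
      (fun j b => hmS j (D b) (hDS b)) fun b b' => ?_
    rw [dlogForm_single, dlog, hD]
    split_ifs <;> simp
  have hcard := card_le_card_of_forall_apply_eq_zero hli
    (θ := fun c : C => dlogForm (K := K) y (Pi.single (c : ι) (1 : k))) fun E hE => ?_
  · simpa using hcard
  have hEy (i : ι) : dlog E (y i) = 0 := by
    refine (dlog_eq_zero_iff E).2 (derivation_eq_zero_of_isAlgebraic_adjoin E ?_ (hC i))
    rintro _ ⟨c, hc, rfl⟩
    simpa only [dlogForm_single, dlog_eq_zero_iff] using hE ⟨c, hc⟩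
  rintro (j | b) <;> simp [dlogForm_apply, hEy]

end Ax

section Predimension

variable {K ι : Type} [Field K] [Fintype ι]

theorem mem_relLattice_empty {n : ℕ} {y : Fin n → Kˣ} {q : Fin n → ℤ} :
    q ∈ relLattice K ∅ y ↔ ∏ i, y i ^ q i ∈ CommGroup.torsion Kˣ := by
  change (∃ k : ℕ, k ≠ 0 ∧ (∏ i, y i ^ q i) ^ k ∈ Subgroup.closure (∅ : Set Kˣ)) ↔
    IsOfFinOrder (∏ i, y i ^ q i)
  simp only [isOfFinOrder_iff_pow_eq_one, Subgroup.closure_empty, Subgroup.mem_bot,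
    Nat.pos_iff_ne_zero]

theorem ldim_eq_of_mulIndepMod {n : ℕ} {y : Fin n → Kˣ}
    (hy : MulIndepMod (CommGroup.torsion Kˣ) y) : ldim K y = n := by
  have hbot : relLattice K ∅ y = ⊥ :=
    eq_bot_iff.2 fun q hq => hy q (mem_relLattice_empty.1 hq)
  rw [ldim, ldimRel, hbot, finrank_bot, Nat.sub_zero]

theorem ldim_le_card {n : ℕ} {y : Fin n → Kˣ} {J : Finset (Fin n)} {r : {j // j ∉ J} → Fin n → ℤ}
    (hry : ∀ j, ∏ i, y i ^ r j i ∈ CommGroup.torsion Kˣ) (hr : LinearIndependent ℤ r) :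
    ldim K y ≤ J.card := by
  have hv : LinearIndependent ℤ fun j => (⟨r j, mem_relLattice_empty.2 (hry j)⟩ :
      relLattice K ∅ y) := .of_comp (Submodule.subtype _) hr
  have hcard := hv.fintype_card_le_finrank
  rw [Fintype.card_subtype_compl, Fintype.card_coe, Fintype.card_fin] at hcard
  rw [ldim, ldimRel]
  omega

variable [CharZero K]

theorem algebraicIndependent_bot_iff {ι : Type*} {x : ι → K} :
    AlgebraicIndependent (⊥ : Subfield K) x ↔ AlgebraicIndependent ℚ x := by
  refine ⟨fun h => h.restrictScalars (algebraMap ℚ (⊥ : Subfield K)).injective, fun h => ?_⟩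
  have : Algebra.IsAlgebraic ℚ (⊥ : Subfield K) := by
    refine ⟨fun ⟨z, hz⟩ => (isAlgebraic_algebraMap_iff (A := K) Subtype.val_injective).1 ?_⟩
    obtain ⟨r, rfl⟩ : z ∈ (algebraMap ℚ K).fieldRange := Subfield.bot_eq_of_charZero (K := K) ▸ hz
    exact isAlgebraic_algebraMap r
  exact h.extendScalars _

theorem isGreatest_trdegQ {ι : Type*} [Finite ι] (x : ι → K) :
    IsGreatest {d | ∃ B : Finset ι, B.card = d ∧ AlgebraicIndependent ℚ fun b : B => x b}
      (trdegQ K (Set.range x)) := by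
  classical
  cases nonempty_fintype ι
  have hset : {d | ∃ t : Finset K, ↑t ⊆ Set.range x ∧ t.card = d ∧
      AlgebraicIndependent (⊥ : Subfield K) (fun a : {a : K // a ∈ t} => (a : K))} =
      {d | ∃ B : Finset ι, B.card = d ∧ AlgebraicIndependent ℚ fun b : B => x b} := by
    have himage {B : Finset ι} (hB : Set.InjOn x B) :
        (AlgebraicIndependent ℚ fun b : B => x b) ↔
          AlgebraicIndependent (⊥ : Subfield K) fun a : {a // a ∈ B.image x} => (a : K) := by
      rw [algebraicIndependent_bot_iff]
      refine (algebraicIndependent_image hB).trans ?_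
      rw [← Finset.coe_image]
      rfl
    ext d
    constructor
    · rintro ⟨t, ht, rfl, hind⟩
      obtain ⟨B, -, hB⟩ := Set.SurjOn.exists_bijOn_subset (Set.image_univ.symm ▸ ht)
      lift B to Finset ι using B.toFinite
      obtain rfl : B.image x = t := Finset.coe_injective (by rw [Finset.coe_image, hB.image_eq])
      exact ⟨B, (Finset.card_image_of_injOn hB.injOn).symm, (himage hB.injOn).2 hind⟩
    · rintro ⟨B, rfl, hind⟩
      have hB : Set.InjOn x B := Set.injOn_iff_injective.2 hind.injective
      refine ⟨B.image x, ?_, Finset.card_image_of_injOn hB, (himage hB).1 hind⟩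
      rw [Finset.coe_image]
      exact Set.image_subset_range x B
  have hbdd : BddAbove {d | ∃ B : Finset ι, B.card = d ∧
      AlgebraicIndependent ℚ fun b : B => x b} :=
    ⟨Fintype.card ι, fun _ ⟨B, hB, _⟩ => hB ▸ B.card_le_univ⟩
  rw [trdegQ, trdegOver, hset]
  refine ⟨Nat.sSup_mem ⟨0, ∅, Finset.card_empty, ?_⟩ hbdd, fun d hd => le_csSup hbdd hd⟩
  exact algebraicIndependent_empty_type_iff.2 (algebraMap ℚ K).injective

/-- The predimension inequality `2 trdeg(ℚ(y)) ≥ ldim(y)` for the tuples `y` from `U`, expressed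
through multiplicatively independent tuples so that neither dimension is mentioned. -/
def PredimNonneg (U : Subgroup Kˣ) : Prop :=
  ∀ (ι : Type) [Fintype ι] (y : ι → Kˣ), (∀ i, y i ∈ U) → MulIndepMod (CommGroup.torsion Kˣ) y →
    ∃ B : Finset ι, Fintype.card ι ≤ 2 * B.card ∧ AlgebraicIndependent ℚ fun b : B => (y b : K)

namespace PredimNonneg

variable {U : Subgroup Kˣ}

theorem isOfFinOrder_of_isAlgebraic (hU : PredimNonneg U) {u : Kˣ} (hu : u ∈ U)
    (ha : IsAlgebraic ℚ (u : K)) : IsOfFinOrder u := by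
  by_contra hinf
  obtain ⟨B, hB, hind⟩ := hU Unit (fun _ => u) (fun _ => hu) fun q hq => by
    ext
    by_contra h0
    rw [Fintype.prod_unique] at hq
    obtain ⟨n, hn, hqn⟩ := isOfFinOrder_iff_zpow_eq_one.1 hq
    exact hinf (isOfFinOrder_iff_zpow_eq_one.2 ⟨_, mul_ne_zero h0 hn, by rw [zpow_mul, hqn]⟩)
  obtain ⟨b, hb⟩ : B.Nonempty := by
    rw [← Finset.card_pos]
    rw [Fintype.card_unit] at hB
    omega
  exact hind.transcendental ⟨b, hb⟩ ha

theorem exists_mulIndepMod_restrict (hU : PredimNonneg U) (y : ι → Kˣ) (hy : ∀ i, y i ∈ U) :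
    ∃ J B : Finset ι, J.card ≤ 2 * B.card ∧ (AlgebraicIndependent ℚ fun b : B => (y b : K)) ∧
      ∃ r : {j // j ∉ J} → ι → ℤ, (∀ j, ∏ i, y i ^ r j i ∈ CommGroup.torsion Kˣ) ∧
        ∀ j j' : {j // j ∉ J}, r j j' = 0 ↔ j ≠ j' := by
  obtain ⟨J, hJ, r, hr⟩ := BadFields.exists_mulIndepMod_restrict (CommGroup.torsion Kˣ) y
  obtain ⟨B, hB, hind⟩ := hU J (fun j => y j) (fun j => hy j) hJ
  refine ⟨J, B.map (.subtype _), by simpa using hB, ?_, r, hr⟩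
  have hmem (b : B.map (.subtype _)) : ∃ h : (b : ι) ∈ J, ⟨b, h⟩ ∈ B := by
    simpa using Finset.mem_map.1 b.2
  choose hbJ hbB using hmem
  exact hind.comp (fun b : B.map (.subtype _) => (⟨⟨b, hbJ b⟩, hbB b⟩ : B)) fun b b' h =>
    Subtype.ext (congrArg (fun z : B => ((z : J) : ι)) h)

end PredimNonneg

theorem predimNonneg_iff {U : Subgroup Kˣ} : PredimNonneg U ↔
    ∀ n : ℕ, 1 ≤ n → ∀ y : Fin n → Kˣ, (∀ i, y i ∈ U) →
      (ldim K y : ℤ) ≤ 2 * (trdegQ K (Set.range fun i => (y i : K)) : ℤ) := by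
  refine ⟨fun hU n _ y hy => ?_, fun h ι _ y hy hind => ?_⟩
  · obtain ⟨J, B, hJB, hB, r, hry, hr⟩ := hU.exists_mulIndepMod_restrict y hy
    have hldim : ldim K y ≤ J.card := ldim_le_card hry (linearIndependent_of_pivot hr)
    have htrdeg := (isGreatest_trdegQ fun i => (y i : K)).2 ⟨B, rfl, hB⟩
    omega
  · rcases isEmpty_or_nonempty ι with _ | _
    · exact ⟨∅, by simp, algebraicIndependent_empty_type_iff.2 (algebraMap ℚ K).injective⟩
    let e := Fintype.equivFin ι
    have hind' : MulIndepMod (CommGroup.torsion Kˣ) (y ∘ e.symm) := fun q hq => by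
      have hqe := hind (q ∘ e) (by simpa [← e.symm.prod_comp] using hq)
      exact funext fun i => by simpa using congrFun hqe (e.symm i)
    have hle := h _ Fintype.card_pos (y ∘ e.symm) fun i => hy _
    obtain ⟨B, hB, hBind⟩ := (isGreatest_trdegQ fun i => (y i : K)).1
    have hrange : (Set.range fun i => ((y ∘ e.symm) i : K)) = Set.range fun i => (y i : K) :=
      e.symm.surjective.range_comp fun i => (y i : K)
    rw [ldim_eq_of_mulIndepMod hind', hrange, ← hB] at hle
    exact ⟨B, by exact_mod_cast hle, hBind⟩

end Predimension

section TranscendenceBasis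

variable {k K ι κ γ : Type*} [Field k] [Field K] [Algebra k K]

theorem exists_aeval_eq_zero_of_not_algebraicIndependent {R ι : Type*} [CommRing R] [IsDomain R]
    [Algebra ℚ R] {x : ι → R} (hx : ¬AlgebraicIndependent ℚ x) :
    ∃ P : MvPolynomial ι ℤ, P ≠ 0 ∧ MvPolynomial.aeval x P = 0 := by
  have : Algebra.IsAlgebraic ℤ ℚ := IsLocalization.isAlgebraic ℚ (nonZeroDivisors ℤ)
  have hxZ : ¬AlgebraicIndependent ℤ x := fun h => hx (h.extendScalars ℚ)
  rw [algebraicIndependent_iff] at hxZ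
  push Not at hxZ
  obtain ⟨P, hP, hP0⟩ := hxZ
  exact ⟨P, hP0, hP⟩

theorem exists_algebraicIndependent_restrict [Finite ι] (x : ι → K) :
    ∃ C : Finset ι, (AlgebraicIndependent k fun c : C => x c) ∧
      ∀ i, IsAlgebraic (IntermediateField.adjoin k (x '' C)) (x i) := by
  classical
  obtain ⟨C, -, hC⟩ := Finite.exists_le_maximal (a := (∅ : Finset ι))
    (p := fun C : Finset ι => AlgebraicIndependent k fun c : C => x c)
    (algebraicIndependent_empty_type_iff.2 (algebraMap k K).injective)
  refine ⟨C, hC.prop, fun i => IntermediateField.isAlgebraic_adjoin_iff.2 ?_⟩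
  by_cases hi : i ∈ C
  · exact isAlgebraic_algebraMap
      (⟨x i, Algebra.subset_adjoin ⟨i, hi, rfl⟩⟩ : Algebra.adjoin k (x '' C))
  · by_contra htr
    refine hC.not_prop_of_gt (Finset.ssubset_insert hi) ?_
    have hins := (AlgebraicIndepOn.insert (s := (C : Set ι)) hC.prop htr)
    rw [← Finset.coe_insert] at hins
    exact hins

theorem card_le_card_of_forall_derivation_eq_zero [CharZero k] [Fintype κ] [Fintype γ] {x : κ → K}
    (hx : AlgebraicIndependent k x) {w : γ → K}
    (h : ∀ E : Derivation k K K, (∀ c, E (w c) = 0) → ∀ j, E (x j) = 0) :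
    Fintype.card κ ≤ Fintype.card γ := by
  classical
  choose E hE using fun i => exists_derivation_of_algebraicIndependent hx (Pi.single i 1)
  let ev (a : K) : Module.Dual K (Derivation k K K) :=
    { toFun := fun D => D a
      map_add' := fun _ _ => rfl
      map_smul' := fun _ _ => rfl }
  have hli : LinearIndependent K fun j => ev (x j) := by
    refine Fintype.linearIndependent_iff.2 fun g hg i => ?_
    simpa [ev, LinearMap.sum_apply, hE, Pi.single_apply] using LinearMap.congr_fun hg (E i)
  exact card_le_card_of_forall_apply_eq_zero hli (θ := fun c => ev (w c)) h

end TranscendenceBasis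

section Ultraproduct

variable {I : Type*} {V : Ultrafilter I} {Kf : I → Type*} [∀ i, Field (Kf i)]

/-- `π` exhibits the field `K` as the ultraproduct of the fields `Kf i` along `V`. -/
structure IsUltraproduct {K : Type*} [Field K] (V : Ultrafilter I) (π : (∀ i, Kf i) →+* K) :
    Prop where
  surjective : Function.Surjective π
  map_eq_zero_iff (x : ∀ i, Kf i) : π x = 0 ↔ ∀ᶠ i in (V : Filter I), x i = 0

theorem exists_isUltraproduct.{u, v} {I : Type u} (V : Ultrafilter I) (Kf : I → Type v)
    [∀ i, Field (Kf i)] :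
    ∃ (K : Type max u v) (_ : Field K) (π : (∀ i, Kf i) →+* K), IsUltraproduct V π := by
  let m : Ideal (∀ i, Kf i) :=
    { carrier := {x | ∀ᶠ i in (V : Filter I), x i = 0}
      zero_mem' := .of_forall fun _ => rfl
      add_mem' := fun ha hb => by
        filter_upwards [ha, hb] with i hai hbi
        rw [Pi.add_apply, hai, hbi, add_zero]
      smul_mem' := fun c x hx => by
        filter_upwards [hx] with i hxi
        rw [smul_eq_mul, Pi.mul_apply, hxi, mul_zero] }
  have hm : m.IsMaximal := by
    refine Ideal.isMaximal_iff.2 ⟨fun h1 => ?_, fun J x hmJ hxm hxJ => ?_⟩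
    · obtain ⟨i, hi⟩ := Filter.Eventually.exists h1
      exact one_ne_zero hi
    · have hinv : 1 - x⁻¹ * x ∈ m := by
        filter_upwards [Ultrafilter.eventually_not.2 hxm] with i hi
        simp [inv_mul_cancel₀ hi]
      simpa using J.add_mem (hmJ hinv) (J.mul_mem_left x⁻¹ hxJ)
  let := Ideal.Quotient.field m
  exact ⟨(∀ i, Kf i) ⧸ m, inferInstance, Ideal.Quotient.mk m,
    Ideal.Quotient.mk_surjective, fun _ => Ideal.Quotient.eq_zero_iff_mem⟩

variable {K : Type*} [Field K] {π : (∀ i, Kf i) →+* K}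

/-- The homomorphism induced by `π` on families of units. -/
def unitsMap (π : (∀ i, Kf i) →+* K) : (∀ i, (Kf i)ˣ) →* Kˣ :=
  (Units.map (π : (∀ i, Kf i) →* K)).comp (MulEquiv.piUnits (M := Kf)).symm.toMonoidHom

theorem coe_unitsMap (u : ∀ i, (Kf i)ˣ) : (unitsMap π u : K) = π fun i => (u i : Kf i) := rfl

theorem prod_unitsMap_zpow {ι : Type*} [Fintype ι] (y : ι → ∀ i, (Kf i)ˣ) (q : ι → ℤ) :
    ∏ j, unitsMap π (y j) ^ q j = unitsMap π (∏ j, y j ^ q j) := by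
  simp only [map_prod, map_zpow]

namespace IsUltraproduct

variable (hπ : IsUltraproduct V π)
include hπ

theorem map_eq_map_iff {x x' : ∀ i, Kf i} :
    π x = π x' ↔ ∀ᶠ i in (V : Filter I), x i = x' i := by
  rw [← sub_eq_zero, ← map_sub, hπ.map_eq_zero_iff]
  simp only [Pi.sub_apply, sub_eq_zero]

theorem unitsMap_eq_one_iff {u : ∀ i, (Kf i)ˣ} :
    unitsMap π u = 1 ↔ ∀ᶠ i in (V : Filter I), u i = 1 := by
  rw [← Units.val_inj, coe_unitsMap, Units.val_one, ← map_one π, hπ.map_eq_map_iff]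
  simp only [Pi.one_apply, Units.val_eq_one]

theorem map_inv (x : ∀ i, Kf i) : π x⁻¹ = (π x)⁻¹ := by
  by_cases hx : π x = 0
  · rw [hx, inv_zero, hπ.map_eq_zero_iff]
    filter_upwards [(hπ.map_eq_zero_iff x).1 hx] with i hi
    rw [Pi.inv_apply, hi, inv_zero]
  · refine eq_inv_of_mul_eq_one_left ?_
    rw [← map_mul, ← map_one π, hπ.map_eq_map_iff]
    rw [hπ.map_eq_zero_iff, ← Ultrafilter.eventually_not] at hx
    filter_upwards [hx] with i hi using inv_mul_cancel₀ hi

variable [∀ i, CharZero (Kf i)]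

theorem charZero : CharZero K := charZero_of_inj_zero fun m hm => by
  rw [← map_natCast π, hπ.map_eq_zero_iff] at hm
  obtain ⟨i, hi⟩ := hm.exists
  exact Nat.cast_eq_zero.1 hi

/-- The ultraproduct of the subfields of algebraic numbers. -/
def algebraicPart : Subfield K where
  carrier := {x | ∃ a : ∀ i, Kf i, (∀ i, IsAlgebraic ℚ (a i)) ∧ π a = x}
  zero_mem' := ⟨0, fun _ => isAlgebraic_zero, map_zero π⟩
  one_mem' := ⟨1, fun _ => isAlgebraic_one, map_one π⟩
  add_mem' := by
    rintro _ _ ⟨a, ha, rfl⟩ ⟨b, hb, rfl⟩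
    exact ⟨a + b, fun i => (ha i).add (hb i), map_add π a b⟩
  mul_mem' := by
    rintro _ _ ⟨a, ha, rfl⟩ ⟨b, hb, rfl⟩
    exact ⟨a * b, fun i => (ha i).mul (hb i), map_mul π a b⟩
  neg_mem' := by
    rintro _ ⟨a, ha, rfl⟩
    exact ⟨-a, fun i => (ha i).neg, map_neg π a⟩
  inv_mem' := by
    rintro _ ⟨a, ha, rfl⟩
    exact ⟨a⁻¹, fun i => (ha i).inv, hπ.map_inv a⟩

theorem map_mem_algebraicPart_iff {x : ∀ i, Kf i} :
    π x ∈ hπ.algebraicPart ↔ ∀ᶠ i in (V : Filter I), IsAlgebraic ℚ (x i) := by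
  classical
  refine ⟨fun ⟨a, ha, hax⟩ => ?_, fun h => ?_⟩
  · filter_upwards [hπ.map_eq_map_iff.1 hax] with i hi using hi ▸ ha i
  · refine ⟨fun i => if IsAlgebraic ℚ (x i) then x i else 0, fun i => ?_, hπ.map_eq_map_iff.2 ?_⟩
    · dsimp only
      split_ifs with hi
      exacts [hi, isAlgebraic_zero]
    · filter_upwards [h] with i hi using if_pos hi

theorem exists_derivation (D : ∀ i, Derivation ℚ (Kf i) (Kf i)) :
    ∃ D' : Derivation hπ.algebraicPart K K, ∀ x, D' (π x) = π fun i => D i (x i) := by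
  choose s hs using hπ.surjective
  let d (x : K) : K := π fun i => D i (s x i)
  have hd (x : ∀ i, Kf i) : d (π x) = π fun i => D i (x i) := hπ.map_eq_map_iff.2 <| by
    filter_upwards [hπ.map_eq_map_iff.1 (hs (π x))] with i hi using congrArg (D i) hi
  have hmul (x x' : ∀ i, Kf i) : d (π x * π x') = π x * d (π x') + π x' * d (π x) := by
    simp only [← map_mul, hd, ← map_add]
    exact congrArg π (funext fun i => (D i).leibniz (x i) (x' i))
  refine ⟨.mk' { toFun := d, map_add' := ?_, map_smul' := ?_ } ?_, hd⟩
  · refine hπ.surjective.forall₂.2 fun x x' => ?_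
    simp only [← map_add, hd]
    exact congrArg π (funext fun i => map_add (D i) (x i) (x' i))
  · rintro ⟨_, a, ha, rfl⟩ x
    obtain ⟨x, rfl⟩ := hπ.surjective x
    have ha0 : d (π a) = 0 := by
      rw [hd, ← map_zero π]
      exact congrArg π (funext fun i => derivation_eq_zero_of_isAlgebraic (D i) (D i).map_algebraMap
        (ha i))
    change d (π a * π x) = π a * d (π x)
    rw [hmul, ha0, mul_zero, add_zero]
  · exact hπ.surjective.forall₂.2 hmul

/-- The derivations of an ultraproduct that are given coordinatewise. -/
def ultraDerivations : Set (Derivation hπ.algebraicPart K K) :=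
  {D | ∃ Df : ∀ i, Derivation ℚ (Kf i) (Kf i), ∀ x, D (π x) = π fun i => Df i (x i)}

theorem mem_range_of_forall_ultraDerivations (x : K) (hx : ∀ D ∈ hπ.ultraDerivations, D x = 0) :
    x ∈ (algebraMap hπ.algebraicPart K).range := by
  obtain ⟨x, rfl⟩ := hπ.surjective x
  have hex : ∀ i, ∃ D : Derivation ℚ (Kf i) (Kf i), D (x i) = 0 → IsAlgebraic ℚ (x i) := fun i => by
    by_contra! h
    obtain ⟨D, hD⟩ := exists_derivation_of_transcendental (h 0).2
    exact one_ne_zero (hD.symm.trans (h D).1)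
  choose Df hDf using hex
  obtain ⟨D, hD⟩ := hπ.exists_derivation Df
  have h0 := hx D ⟨Df, hD⟩
  rw [hD, hπ.map_eq_zero_iff] at h0
  exact ⟨⟨π x, hπ.map_mem_algebraicPart_iff.2 (h0.mono hDf)⟩, rfl⟩

theorem dlog_unitsMap {D : Derivation hπ.algebraicPart K K} {Df : ∀ i, Derivation ℚ (Kf i) (Kf i)}
    (hD : ∀ x, D (π x) = π fun i => Df i (x i)) (u : ∀ i, (Kf i)ˣ) :
    dlog D (unitsMap π u) = π fun i => dlog (Df i) (u i) := by
  simp only [dlog, coe_unitsMap, hD, div_eq_mul_inv, ← hπ.map_inv, ← map_mul]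
  rfl

end IsUltraproduct
end Ultraproduct

theorem aeval_algHom_pi {R I κ K : Type*} {Kf : I → Type*} [CommRing R] [Field K]
    [∀ i, Field (Kf i)] [Algebra R K] [∀ i, Algebra R (Kf i)] (f : (∀ i, Kf i) →ₐ[R] K)
    (x : κ → ∀ i, Kf i) (P : MvPolynomial κ R) :
    MvPolynomial.aeval (fun j => f (x j)) P =
      f fun i => MvPolynomial.aeval (fun j => x j i) P := by
  rw [← MvPolynomial.comp_aeval_apply]
  exact congrArg f (funext fun i => MvPolynomial.comp_aeval_apply x (Pi.evalAlgHom R Kf i) P)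

section UltraproductPredimension

variable {I : Type*} {V : Ultrafilter I} {Kf : I → Type} [∀ i, Field (Kf i)]
  [∀ i, CharZero (Kf i)] {K : Type*} [Field K] {π : (∀ i, Kf i) →+* K}

namespace IsUltraproduct

variable (hπ : IsUltraproduct V π)
include hπ

theorem algebraicIndependent_of_isOfFinOrder [CharZero K] {κ : Type*} [Fintype κ]
    {z : κ → ∀ i, (Kf i)ˣ} (hz : ∀ᶠ i in (V : Filter I), ∀ j, IsOfFinOrder (z j i))
    (hzm : MulIndepMod ⊥ fun j => unitsMap π (z j)) :
    AlgebraicIndependent ℚ fun j => (unitsMap π (z j) : K) := by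
  refine algebraicIndependent_iff.2 fun P hP => ?_
  by_contra hP0
  obtain ⟨F, hF0, hF⟩ := exists_finset_relations_of_torsion_zero hP0
  have hPz : ∀ᶠ i in (V : Filter I), MvPolynomial.aeval (fun j => (z j i : Kf i)) P = 0 :=
    (hπ.map_eq_zero_iff _).1 ((aeval_algHom_pi π.toRatAlgHom _ P).symm.trans hP)
  obtain ⟨q, hqF, hq⟩ := (Ultrafilter.eventually_exists_mem_iff F.finite_toSet).1 <| by
    filter_upwards [hz, hPz] with i hzi hPi using hF (Kf i) (fun j => z j i) hzi hPi
  refine hF0 (hzm q ?_ ▸ hqF)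
  rw [Subgroup.mem_bot, prod_unitsMap_zpow, hπ.unitsMap_eq_one_iff]
  simpa using hq

theorem exists_mem_ultraDerivations {κ : Type*} {x : κ → ∀ i, Kf i}
    (hx : ∀ᶠ i in (V : Filter I), AlgebraicIndependent ℚ fun j => x j i) (g : κ → K) :
    ∃ D ∈ hπ.ultraDerivations, ∀ j, D (π (x j)) = g j := by
  choose g' hg' using fun j => hπ.surjective (g j)
  have hex : ∀ i, ∃ D : Derivation ℚ (Kf i) (Kf i),
      (AlgebraicIndependent ℚ fun j => x j i) → ∀ j, D (x j i) = g' j i := fun i => by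
    by_cases hi : AlgebraicIndependent ℚ fun j => x j i
    · exact (exists_derivation_of_algebraicIndependent hi fun j => g' j i).imp fun D hD _ => hD
    · exact ⟨0, fun h => absurd h hi⟩
  choose Df hDf using hex
  obtain ⟨D, hD⟩ := hπ.exists_derivation Df
  refine ⟨D, ⟨Df, hD⟩, fun j => ?_⟩
  rw [hD, ← hg', hπ.map_eq_map_iff]
  filter_upwards [hx] with i hi using hDf i hi j

theorem exists_linearIndependent_dlogForm_eq_zero {ι κ : Type*} [Fintype ι] {e : κ → ι}
    {y : ι → ∀ i, (Kf i)ˣ}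
    (h : ∀ᶠ i in (V : Filter I), ∃ r : κ → ι → ℤ,
      (∀ j, ∏ l, y l i ^ r j l ∈ CommGroup.torsion (Kf i)ˣ) ∧
        ∀ j j', r j (e j') = 0 ↔ j ≠ j') :
    ∃ m : κ → ι → hπ.algebraicPart, LinearIndependent hπ.algebraicPart m ∧
      ∀ j, ∀ D ∈ hπ.ultraDerivations, dlogForm (fun l => unitsMap π (y l)) (m j) D = 0 := by
  obtain ⟨r, hr⟩ := h.choice
  let c (j : κ) (l : ι) : ∀ i, Kf i := fun i => (r i j l : Kf i)
  have hc (j : κ) (l : ι) : π (c j l) ∈ hπ.algebraicPart :=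
    ⟨c j l, fun _ => isAlgebraic_intCast _, rfl⟩
  have hpivot (j j' : κ) : π (c j (e j')) = 0 ↔ j ≠ j' := by
    have hr' : ∀ᶠ i in (V : Filter I), (r i j (e j') : Kf i) = 0 ↔ j ≠ j' := by
      filter_upwards [hr] with i hi using Int.cast_eq_zero.trans (hi.2 j j')
    rw [hπ.map_eq_zero_iff, Filter.eventually_congr hr', Filter.eventually_const]
  refine ⟨fun j l => ⟨π (c j l), hc j l⟩, linearIndependent_of_pivot (e := e) fun j j' => ?_, ?_⟩
  · rw [← hpivot, Subtype.ext_iff]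
    rfl
  · rintro j D ⟨Df, hD⟩
    rw [dlogForm_apply]
    change ∑ l, π (c j l) * dlog D (unitsMap π (y l)) = 0
    simp only [hπ.dlog_unitsMap hD, ← map_mul, ← map_sum]
    rw [hπ.map_eq_zero_iff]
    filter_upwards [hr] with i hi
    have htor : IsOfFinOrder (∏ l, y l i ^ r i j l) := hi.1 j
    simpa [c, dlog_prod_zpow] using dlog_eq_zero_of_isOfFinOrder (Df i) htor

variable {ι : Type} [Fintype ι] {U : ∀ i, Subgroup (Kf i)ˣ} {y : ι → ∀ i, (Kf i)ˣ}

theorem card_le_two_mul_card (hU : ∀ i, PredimNonneg (U i)) (hyU : ∀ j i, y j i ∈ U i)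
    (hy : MulIndepMod (constantUnits hπ.algebraicPart K) fun j => unitsMap π (y j)) {C : Finset ι}
    (hC : ∀ j, IsAlgebraic
      (IntermediateField.adjoin hπ.algebraicPart ((fun j => (unitsMap π (y j) : K)) '' C))
      (unitsMap π (y j) : K)) :
    Fintype.card ι ≤ 2 * C.card := by
  classical
  have := hπ.charZero
  have hlocal (i : I) := (hU i).exists_mulIndepMod_restrict (fun j => y j i) fun j => hyU j i
  obtain ⟨J, hJ⟩ := Ultrafilter.eventually_exists_iff.1 (.of_forall hlocal)
  obtain ⟨B, hB⟩ := Ultrafilter.eventually_exists_iff.1 hJ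
  obtain ⟨_, hJB, -⟩ := hB.exists
  obtain ⟨m, hm, hmD⟩ := hπ.exists_linearIndependent_dlogForm_eq_zero (e := Subtype.val)
    (hB.mono fun i hi => hi.2.2)
  have hle := card_add_card_le_of_isAlgebraic_adjoin hπ.mem_range_of_forall_ultraDerivations hy hm
    hmD (B := B) (hπ.exists_mem_ultraDerivations (hB.mono fun i hi => hi.2.1)) hC
  rw [Fintype.card_subtype_compl, Fintype.card_coe] at hle
  omega

theorem eventually_isOfFinOrder (hU : ∀ i, PredimNonneg (U i)) {u : ∀ i, (Kf i)ˣ}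
    (hu : ∀ i, u i ∈ U i) (huk : unitsMap π u ∈ constantUnits hπ.algebraicPart K) :
    ∀ᶠ i in (V : Filter I), IsOfFinOrder (u i) := by
  obtain ⟨⟨_, hk⟩, rfl : _ = _⟩ := mem_constantUnits.1 huk
  filter_upwards [hπ.map_mem_algebraicPart_iff.1 hk] with i hi
  exact (hU i).isOfFinOrder_of_isAlgebraic (hu i) hi

theorem exists_card_le_two_mul_card (hU : ∀ i, PredimNonneg (U i)) (hyU : ∀ j i, y j i ∈ U i)
    [CharZero K] (hy : MulIndepMod ⊥ fun j => unitsMap π (y j)) :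
    ∃ B : Finset ι, Fintype.card ι ≤ 2 * B.card ∧
      AlgebraicIndependent ℚ fun b : B => (unitsMap π (y b) : K) := by
  classical
  let k := hπ.algebraicPart
  let Y (j : ι) : Kˣ := unitsMap π (y j)
  obtain ⟨J, hJ, r, hrk, hr⟩ := exists_mulIndepMod_restrict (constantUnits k K) Y
  let t (j : {j // j ∉ J}) : ∀ i, (Kf i)ˣ := ∏ l, y l ^ r j l
  have ht (j) : unitsMap π (t j) = ∏ l, Y l ^ r j l := (prod_unitsMap_zpow y (r j)).symm
  have htk (j) : unitsMap π (t j) ∈ constantUnits k K := ht j ▸ hrk j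
  have htor : ∀ᶠ i in (V : Filter I), ∀ j, IsOfFinOrder (t j i) :=
    Filter.eventually_all.2 fun j => hπ.eventually_isOfFinOrder hU
      (fun i => by simpa [t] using prod_mem fun l _ => zpow_mem (hyU l i) (r j l)) (htk j)
  have ht_ind : AlgebraicIndependent ℚ fun j => (unitsMap π (t j) : K) :=
    hπ.algebraicIndependent_of_isOfFinOrder htor <| by
      simpa only [ht] using hy.prod_zpow (linearIndependent_of_pivot (e := Subtype.val) hr)
  obtain ⟨C, hC_ind, hC⟩ := exists_algebraicIndependent_restrict (k := k) fun j : J => (Y j : K)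
  have hJC := hπ.card_le_two_mul_card hU (y := fun j : J => y j) (fun j => hyU j) hJ hC
  have hind := ht_ind.sumElim_of_tower
    (Set.range_subset_iff.2 fun j => mem_constantUnits.1 (htk j)) hC_ind
  obtain ⟨B, hB_ind, hB⟩ := exists_algebraicIndependent_restrict (k := ℚ) fun j => (Y j : K)
  have hle := card_le_card_of_forall_derivation_eq_zero hind (w := fun b : B => (Y b : K))
    fun E hE => by
      have hEY (j : ι) : E (Y j) = 0 :=
        derivation_eq_zero_of_isAlgebraic_adjoin E (Set.forall_mem_image.2 fun b hb => hE ⟨b, hb⟩)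
          (hB j)
      refine Sum.rec (fun c => hEY c) fun j => ?_
      simpa only [Sum.elim_inr, ht] using derivation_prod_zpow_eq_zero E hEY (r j)
  refine ⟨B, ?_, hB_ind⟩
  simp only [Fintype.card_sum, Fintype.card_subtype_compl, Fintype.card_coe] at hle hJC
  omega

end IsUltraproduct

theorem exists_finset_relations_of_predimNonneg {ι : Type} [Fintype ι]
    {P : ∀ B : Finset ι, MvPolynomial B ℤ} (hP : ∀ B, P B ≠ 0) :
    ∃ F : Finset (ι → ℤ), 0 ∉ F ∧ ∀ (K : Type) [Field K] [CharZero K] (U : Subgroup Kˣ),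
      PredimNonneg U → ∀ y : ι → Kˣ, (∀ j, y j ∈ U) →
      (∀ B : Finset ι, Fintype.card ι ≤ 2 * B.card →
        MvPolynomial.aeval (fun b : B => (y b : K)) (P B) = 0) →
      ∃ q ∈ F, ∏ j, y j ^ q j = 1 := by
  classical
  by_contra! h
  choose Kf fld hchar U hU y hyU hyP hyF using fun F : Finset (ι → ℤ) =>
    h (F.erase 0) (F.notMem_erase 0)
  let V : Ultrafilter (Finset (ι → ℤ)) := .of Filter.atTop
  obtain ⟨K, _, π, hπ⟩ := exists_isUltraproduct V Kf
  have := hπ.charZero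
  have hind : MulIndepMod ⊥ fun j => unitsMap π fun i => y i j := fun q hq => by
    rw [Subgroup.mem_bot, prod_unitsMap_zpow, hπ.unitsMap_eq_one_iff] at hq
    have hmem : ∀ᶠ i in (V : Filter (Finset (ι → ℤ))), q ∈ i := by
      filter_upwards [Ultrafilter.of_le _ (Filter.eventually_ge_atTop {q})] with i hi
      exact hi (Finset.mem_singleton_self q)
    obtain ⟨i, hqi, hi⟩ := (hq.and hmem).exists
    by_contra hq0
    refine hyF i q (Finset.mem_erase.2 ⟨hq0, hi⟩) ?_
    simpa using hqi
  obtain ⟨B, hcard, hB⟩ := hπ.exists_card_le_two_mul_card hU (fun j i => hyU i j) hind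
  refine hP B (algebraicIndependent_iff.1
    (hB.restrictScalars (algebraMap ℤ ℚ).injective_int) (P B) ?_)
  refine (aeval_algHom_pi π.toIntAlgHom (fun (b : B) i => (y i b : Kf i)) (P B)).trans ?_
  exact (hπ.map_eq_zero_iff _).2 (.of_forall fun i => hyP i B hcard)

end UltraproductPredimension

section Definability

open FirstOrder Language

/-- The inclusion of the language of rings into `LU`. -/
def ringToLU : Language.ring →ᴸ LU := LHom.sumInl

/-- The field operations of `M` are the interpretations of the ring symbols of `LU`. -/
def IsCompatible (M : Type) [LU.Structure M] [Field M] : Prop :=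
  ∃ r : Ring.CompatibleRing M, r.toStructure = ringToLU.reduct M

/-- The interpretation of the predicate `U` of `LU`. -/
def greenSet (M : Type) [LU.Structure M] : Set M :=
  {x | Structure.RelMap (L := LU) (Sum.inr Unit.unit : LU.Relations 1) ![x]}

theorem isCompatible_iff {M : Type} [LU.Structure M] [Field M] : IsCompatible M ↔
    (∀ x y : M, Structure.funMap (L := LU) (Sum.inl ringFunc.add) ![x, y] = x + y) ∧
    (∀ x y : M, Structure.funMap (L := LU) (Sum.inl ringFunc.mul) ![x, y] = x * y) ∧
    (∀ x : M, Structure.funMap (L := LU) (Sum.inl ringFunc.neg) ![x] = -x) ∧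
    Structure.funMap (L := LU) (Sum.inl ringFunc.zero) ![] = (0 : M) ∧
    Structure.funMap (L := LU) (Sum.inl ringFunc.one) ![] = (1 : M) := by
  constructor
  · rintro ⟨⟨hadd, hmul, hneg, hzero, hone⟩, rfl⟩
    exact ⟨fun x y => hadd ![x, y], fun x y => hmul ![x, y], fun x => hneg ![x], hzero ![],
      hone ![]⟩
  · rintro ⟨hadd, hmul, hneg, hzero, hone⟩
    refine ⟨{ ringToLU.reduct M with
      funMap_add := ?_, funMap_mul := ?_, funMap_neg := ?_, funMap_zero := ?_,
      funMap_one := ?_ }, rfl⟩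
    · exact Fin.forall_fin_succ_pi.2 fun x => Fin.forall_fin_succ_pi.2 fun y =>
        Fin.forall_fin_zero_pi.2 (hadd x y)
    · exact Fin.forall_fin_succ_pi.2 fun x => Fin.forall_fin_succ_pi.2 fun y =>
        Fin.forall_fin_zero_pi.2 (hmul x y)
    · exact Fin.forall_fin_succ_pi.2 fun x => Fin.forall_fin_zero_pi.2 (hneg x)
    · exact Fin.forall_fin_zero_pi.2 hzero
    · exact Fin.forall_fin_zero_pi.2 hone

/-- The `LU`-term computing a polynomial with integer coefficients. -/
noncomputable def polyTerm {α : Type} (p : MvPolynomial α ℤ) : LU.Term α :=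
  ringToLU.onTerm (Ring.termOfFreeCommRing ((freeCommRingEquivMvPolynomialInt α).symm p))

theorem IsCompatible.realize_polyTerm {M : Type} [LU.Structure M] [Field M] (hM : IsCompatible M)
    {α : Type} (p : MvPolynomial α ℤ) (v : α → M) :
    (polyTerm p).realize v = MvPolynomial.aeval v p := by
  obtain ⟨r, hr⟩ := hM
  obtain ⟨p, rfl⟩ := (freeCommRingEquivMvPolynomialInt α).surjective p
  have hexp : ringToLU.IsExpansionOn M := hr ▸ LHom.isExpansionOn_reduct ringToLU M
  rw [polyTerm, RingEquiv.symm_apply_apply, LHom.realize_onTerm, Ring.realize_termOfFreeCommRing]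
  refine DFunLike.congr_fun (FreeCommRing.hom_ext (f := FreeCommRing.lift v)
    (g := ((MvPolynomial.aeval v : MvPolynomial α ℤ →ₐ[ℤ] M) : MvPolynomial α ℤ →+* M).comp
      (freeCommRingEquivMvPolynomialInt α : FreeCommRing α →+* MvPolynomial α ℤ)) ?_) p
  intro a
  simp [freeCommRingEquivMvPolynomialInt]

/-- A property of tuples in fields with an `LU`-structure is uniformly definable if a single
`LU`-formula defines it in every field whose operations interpret the ring symbols. -/
def UniformlyDefinable {α : Type}
    (P : ∀ (M : Type) [LU.Structure M] [Field M], (α → M) → Prop) : Prop :=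
  ∃ φ : LU.Formula α, ∀ (M : Type) [LU.Structure M] [Field M], IsCompatible M →
    ∀ v : α → M, φ.Realize v ↔ P M v

namespace UniformlyDefinable

variable {α β : Type} {P Q : ∀ (M : Type) [LU.Structure M] [Field M], (α → M) → Prop}

theorem const (p : Prop) : UniformlyDefinable fun (M : Type) _ _ (_ : α → M) => p := by
  by_cases hp : p
  · exact ⟨⊤, fun _ _ _ _ _ => by simp [hp]⟩
  · exact ⟨⊥, fun _ _ _ _ _ => by simp [hp]⟩

theorem imp (hP : UniformlyDefinable P) (hQ : UniformlyDefinable Q) :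
    UniformlyDefinable fun M _ _ v => P M v → Q M v := by
  obtain ⟨φ, hφ⟩ := hP
  obtain ⟨ψ, hψ⟩ := hQ
  exact ⟨φ.imp ψ, fun M _ _ hM v => by rw [Formula.realize_imp, hφ M hM, hψ M hM]⟩

theorem not (hP : UniformlyDefinable P) : UniformlyDefinable fun M _ _ v => ¬P M v := by
  obtain ⟨φ, hφ⟩ := hP
  exact ⟨φ.not, fun M _ _ hM v => by rw [Formula.realize_not, hφ M hM]⟩

theorem and (hP : UniformlyDefinable P) (hQ : UniformlyDefinable Q) :
    UniformlyDefinable fun M _ _ v => P M v ∧ Q M v := by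
  obtain ⟨φ, hφ⟩ := hP
  obtain ⟨ψ, hψ⟩ := hQ
  exact ⟨φ ⊓ ψ, fun M _ _ hM v => by rw [Formula.realize_inf, hφ M hM, hψ M hM]⟩

theorem iff (hP : UniformlyDefinable P) (hQ : UniformlyDefinable Q) :
    UniformlyDefinable fun M _ _ v => P M v ↔ Q M v := by
  simpa only [iff_iff_implies_and_implies] using (hP.imp hQ).and (hQ.imp hP)

theorem forall_index [Finite β]
    {P : β → ∀ (M : Type) [LU.Structure M] [Field M], (α → M) → Prop}
    (hP : ∀ b, UniformlyDefinable (P b)) : UniformlyDefinable fun M _ _ v => ∀ b, P b M v := by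
  choose φ hφ using hP
  exact ⟨Formula.iInf φ, fun M _ _ hM v => by simp only [Formula.realize_iInf, hφ _ M hM]⟩

theorem exists_index [Finite β]
    {P : β → ∀ (M : Type) [LU.Structure M] [Field M], (α → M) → Prop}
    (hP : ∀ b, UniformlyDefinable (P b)) : UniformlyDefinable fun M _ _ v => ∃ b, P b M v := by
  choose φ hφ using hP
  exact ⟨Formula.iSup φ, fun M _ _ hM v => by simp only [Formula.realize_iSup, hφ _ M hM]⟩

theorem exists_tuple [Finite β]
    {P : ∀ (M : Type) [LU.Structure M] [Field M], (α ⊕ β → M) → Prop}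
    (hP : UniformlyDefinable P) :
    UniformlyDefinable fun M _ _ v => ∃ w : β → M, P M (Sum.elim v w) := by
  obtain ⟨φ, hφ⟩ := hP
  exact ⟨φ.iExs β, fun M _ _ hM v => by simp only [Formula.realize_iExs, hφ M hM]⟩

theorem mem_greenSet (a : α) : UniformlyDefinable fun M _ _ v => v a ∈ greenSet M :=
  ⟨Relations.formula₁ (Sum.inr Unit.unit : LU.Relations 1) (.var a), fun _ _ _ _ _ =>
    Formula.realize_rel₁⟩

theorem aeval_eq_aeval (p q : MvPolynomial α ℤ) :
    UniformlyDefinable fun _ _ _ v => MvPolynomial.aeval v p = MvPolynomial.aeval v q :=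
  ⟨(polyTerm p).equal (polyTerm q), fun _ _ _ hM v => by
    rw [Formula.realize_equal, hM.realize_polyTerm, hM.realize_polyTerm]⟩

theorem aeval_comp_eq_zero (f : β → α) (p : MvPolynomial β ℤ) :
    UniformlyDefinable fun _ _ _ v => MvPolynomial.aeval (fun b => v (f b)) p = 0 := by
  simpa only [MvPolynomial.aeval_rename, map_zero, Function.comp_def] using
    aeval_eq_aeval (.rename f p) 0

theorem prod_pow_eq_prod_pow [Fintype α] (m n : α → ℕ) :
    UniformlyDefinable fun _ _ _ v => ∏ a, v a ^ m a = ∏ a, v a ^ n a := by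
  simpa only [map_prod, map_pow, MvPolynomial.aeval_X] using
    aeval_eq_aeval (∏ a, .X a ^ m a) (∏ a, .X a ^ n a)

theorem isPrimitiveRoot (a : α) {n : ℕ} (hn : 0 < n) :
    UniformlyDefinable fun _ _ _ v => IsPrimitiveRoot (v a) n := by
  simpa [IsPrimitiveRoot.iff hn] using (aeval_eq_aeval (.X a ^ n) 1).and
    (forall_index fun l : Finset.Ioo 0 n => (aeval_eq_aeval (.X a ^ (l : ℕ)) 1).not)

end UniformlyDefinable

end Definability

section Torsion

theorem mem_of_orderOf_eq {R : Type*} [CommRing R] [IsDomain R] {H : Subgroup Rˣ} {t u : Rˣ}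
    (ht : t ∈ H) (hu : IsOfFinOrder u) (h : orderOf t = orderOf u) : u ∈ H := by
  have : NeZero (orderOf u) := ⟨hu.orderOf_pos.ne'⟩
  have hmem : u ∈ Subgroup.zpowers t := by
    rw [(h ▸ IsPrimitiveRoot.orderOf t : IsPrimitiveRoot t (orderOf u)).zpowers_eq,
      mem_rootsOfUnity]
    exact pow_orderOf_eq_one u
  exact Subgroup.zpowers_le.2 ht hmem

theorem mem_map_subtype_torsion {G : Type*} [CommGroup G] {U : Subgroup G} {u : G} :
    u ∈ (CommGroup.torsion U).map U.subtype ↔ u ∈ U ∧ IsOfFinOrder u := by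
  simp only [Subgroup.mem_map, Subtype.exists, Subgroup.subtype_apply]
  constructor
  · rintro ⟨u, hu, hfin, rfl⟩
    exact ⟨hu, U.subtype.isOfFinOrder hfin⟩
  · rintro ⟨hu, hfin⟩
    exact ⟨u, hu, Submonoid.isOfFinOrder_coe.1 hfin, rfl⟩

theorem mem_iff_exists_orderOf_eq_of_torsion_mulEquiv {R G : Type*} [CommRing R] [IsDomain R]
    [Group G] {U : Subgroup Rˣ} {ν : Subgroup G} (h : Nonempty (CommGroup.torsion U ≃* ν))
    {u : Rˣ} (hu : IsOfFinOrder u) : u ∈ U ↔ ∃ z ∈ ν, orderOf z = orderOf u := by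
  obtain ⟨e⟩ := h
  constructor
  · intro huU
    obtain ⟨t, ht, rfl⟩ := mem_map_subtype_torsion.2 ⟨huU, hu⟩
    exact ⟨e ⟨t, ht⟩, (e ⟨t, ht⟩).2, by
      simp only [Subgroup.orderOf_coe, MulEquiv.orderOf_eq, Subgroup.orderOf_mk,
        Subgroup.subtype_apply]⟩
  · rintro ⟨z, hz, hzu⟩
    refine mem_of_orderOf_eq (e.symm ⟨z, hz⟩ : U).2 hu ?_
    simp only [Subgroup.orderOf_coe, MulEquiv.orderOf_eq, Subgroup.orderOf_mk, hzu]

theorem nonempty_torsion_mulEquiv_of_mem_iff {k K : Type*} [Field k] [Field K] (φ : k →+* K)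
    {ν : Subgroup kˣ} (hν : ∀ z ∈ ν, IsOfFinOrder z) {U : Subgroup Kˣ}
    (hU : ∀ u : Kˣ, IsOfFinOrder u → (u ∈ U ↔ ∃ z ∈ ν, orderOf z = orderOf u)) :
    Nonempty (CommGroup.torsion U ≃* ν) := by
  let Φ : kˣ →* Kˣ := Units.map φ
  have hΦ : Function.Injective Φ := Units.map_injective φ.injective
  have hmap : (CommGroup.torsion U).map U.subtype = ν.map Φ := by
    ext u
    rw [mem_map_subtype_torsion]
    constructor
    · rintro ⟨huU, hu⟩
      obtain ⟨z, hz, hzu⟩ := (hU u hu).1 huU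
      exact mem_of_orderOf_eq (Subgroup.mem_map_of_mem Φ hz) hu
        ((orderOf_injective Φ hΦ z).trans hzu)
    · rintro ⟨z, hz, rfl⟩
      have hfin : IsOfFinOrder (Φ z) := Φ.isOfFinOrder (hν z hz)
      exact ⟨(hU _ hfin).2 ⟨z, hz, (orderOf_injective Φ hΦ z).symm⟩, hfin⟩
  exact ⟨(Subgroup.equivMapOfInjective _ _ U.subtype_injective).trans
    ((MulEquiv.subgroupCongr hmap).trans (Subgroup.equivMapOfInjective ν Φ hΦ).symm)⟩

end Torsion

section Axiomatization

open FirstOrder Language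

theorem greenAux_iff {ν : Subgroup (AlgebraicClosure ℚ)ˣ} {M : Type} [LU.Structure M] [Field M] :
    GreenAux ν M ↔ IsAlgClosed M ∧ ∃ _ : CharZero M, IsCompatible M ∧ ∃ U : Subgroup Mˣ,
      greenSet M = Units.val '' (U : Set Mˣ) ∧ DivisibleSub M U ∧
        Nonempty (CommGroup.torsion U ≃* ν) ∧ PredimNonneg U := by
  simp only [GreenAux, isCompatible_iff, and_assoc, Set.ext_iff]
  refine and_congr_right fun _ => ?_
  constructor
  · rintro ⟨_, hadd, hmul, hneg, hzero, hone, U, hU, hdiv, htor, hpre⟩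
    exact ⟨‹_›, hadd, hmul, hneg, hzero, hone, U, hU, hdiv, htor, predimNonneg_iff.2 hpre⟩
  · rintro ⟨_, hadd, hmul, hneg, hzero, hone, U, hU, hdiv, htor, hpre⟩
    exact ⟨‹_›, hadd, hmul, hneg, hzero, hone, U, hU, hdiv, htor, predimNonneg_iff.1 hpre⟩

/-- The set of `LU`-sentences which hold in every member of the class `𝒦`. -/
def greenTheory (ν : Subgroup (AlgebraicClosure ℚ)ˣ) : LU.Theory :=
  {φ | ∀ (M : Type) [LU.Structure M], InK ν M → M ⊨ φ}

variable {ν : Subgroup (AlgebraicClosure ℚ)ˣ} {M : Type} [LU.Structure M]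

theorem model_onTheory_ACF_of_greenAux [Field M] (hM : GreenAux ν M) :
    M ⊨ ringToLU.onTheory (Theory.ACF 0) := by
  obtain ⟨_, _, ⟨r, hr⟩, -⟩ := greenAux_iff.1 hM
  have : ringToLU.IsExpansionOn M := hr ▸ LHom.isExpansionOn_reduct ringToLU M
  have : CharP M 0 := CharP.ofCharZero M
  exact (LHom.onTheory_model ringToLU _).2 inferInstance

theorem exists_field_of_model_greenTheory (hM : M ⊨ greenTheory ν) :
    ∃ _ : Field M, IsAlgClosed M ∧ CharZero M ∧ IsCompatible M := by
  let : Language.ring.Structure M := ringToLU.reduct M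
  have : M ⊨ Theory.ACF 0 := by
    rw [← LHom.onTheory_model ringToLU, Theory.model_iff]
    refine fun φ hφ => hM.realize_of_mem φ ?_
    rintro N _ ⟨_, hN⟩
    exact (model_onTheory_ACF_of_greenAux hN).realize_of_mem φ hφ
  let := FirstOrder.Field.fieldOfModelACF 0 M
  have := FirstOrder.Field.modelField_of_modelACF 0 M
  let := FirstOrder.Field.compatibleRingOfModelField M
  have := FirstOrder.Field.isAlgClosed_of_model_ACF 0 M
  have := FirstOrder.Field.charP_of_model_fieldOfChar 0 M
  exact ⟨inferInstance, inferInstance, CharP.charP_to_charZero M, inferInstance, rfl⟩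

variable [Field M]

theorem UniformlyDefinable.of_model {α : Type} [Finite α]
    {P : ∀ (M : Type) [LU.Structure M] [Field M], (α → M) → Prop} (hP : UniformlyDefinable P)
    (hPK : ∀ (N : Type) [LU.Structure N] [Field N], GreenAux ν N → ∀ v, P N v)
    (hM : M ⊨ greenTheory ν) (hc : IsCompatible M) (v : α → M) : P M v := by
  obtain ⟨φ, hφ⟩ := hP
  let ψ : LU.Sentence := Formula.iAlls α (φ.relabel (Sum.inr : α → Empty ⊕ α))
  have hψ (N : Type) [LU.Structure N] : N ⊨ ψ ↔ ∀ w : α → N, φ.Realize w := by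
    simp only [ψ, Sentence.Realize, Formula.realize_iAlls, Formula.realize_relabel,
      Function.comp_def, Sum.elim_inr]
  have hψ_mem : ψ ∈ greenTheory ν := by
    rintro N _ ⟨_, hN⟩
    obtain ⟨-, -, hNc, -⟩ := greenAux_iff.1 hN
    exact (hψ N).2 fun w => (hφ N hNc w).2 (hPK N hN w)
  exact (hφ M hc v).1 ((hψ M).1 (hM.realize_of_mem ψ hψ_mem) v)

theorem exists_subgroup_of_model_greenTheory (hM : M ⊨ greenTheory ν) (hc : IsCompatible M) :
    ∃ U : Subgroup Mˣ, greenSet M = Units.val '' (U : Set Mˣ) := by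
  have hone : (1 : M) ∈ greenSet M := by
    have hdef : UniformlyDefinable fun M _ _ (v : Fin 1 → M) => v 0 = 1 → v 0 ∈ greenSet M := by
      simpa using (UniformlyDefinable.aeval_eq_aeval (.X 0) 1).imp (.mem_greenSet 0)
    refine hdef.of_model (fun N _ _ hN v hv => ?_) hM hc ![1] rfl
    obtain ⟨-, _, -, U, hU, -⟩ := greenAux_iff.1 hN
    exact hU ▸ ⟨1, U.one_mem, hv.symm⟩
  have hdiv : ∀ x ∈ greenSet M, ∀ y ∈ greenSet M, y ≠ 0 ∧
      ∀ z : M, z * y = x → z ∈ greenSet M := by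
    have hdef : UniformlyDefinable fun M _ _ (v : Fin 3 → M) => v 0 ∈ greenSet M →
        v 1 ∈ greenSet M → v 1 ≠ 0 ∧ (v 2 * v 1 = v 0 → v 2 ∈ greenSet M) := by
      simpa using (UniformlyDefinable.mem_greenSet 0).imp (.imp (.mem_greenSet 1)
        (.and (.not (.aeval_eq_aeval (.X 1) 0))
          (.imp (.aeval_eq_aeval (.X 2 * .X 1) (.X 0)) (.mem_greenSet 2))))
    have hgroup := hdef.of_model (fun N _ _ hN v => ?_) hM hc
    · exact fun x hx y hy => ⟨(hgroup ![x, y, 0] hx hy).1, fun z => (hgroup ![x, y, z] hx hy).2⟩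
    obtain ⟨-, _, -, U, hU, -⟩ := greenAux_iff.1 hN
    rw [hU]
    rintro ⟨a, ha, hav⟩ ⟨b, hb, hbv⟩
    exact ⟨hbv ▸ b.ne_zero, fun hv => ⟨a / b, U.div_mem ha hb, by
      rw [Units.val_div_eq_div_val, hav, hbv, ← hv, mul_div_cancel_right₀ _ (hbv ▸ b.ne_zero)]⟩⟩
  let U := Subgroup.ofDiv {u : Mˣ | (u : M) ∈ greenSet M} ⟨1, hone⟩ fun u hu w hw =>
    (hdiv u hu w hw).2 _ (by simp)
  refine ⟨U, Set.ext fun x => ⟨fun hx => ⟨Units.mk0 x (hdiv x hx x hx).1, hx, rfl⟩, ?_⟩⟩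
  rintro ⟨u, hu, rfl⟩
  exact hu

theorem divisibleSub_of_model_greenTheory (hM : M ⊨ greenTheory ν) (hc : IsCompatible M)
    {U : Subgroup Mˣ} (hU : greenSet M = Units.val '' (U : Set Mˣ)) : DivisibleSub M U := by
  intro u hu k hk
  have hdef : UniformlyDefinable fun M _ _ (v : Fin 1 → M) => v 0 ∈ greenSet M →
      ∃ w : Fin 1 → M, w 0 ∈ greenSet M ∧ w 0 ^ k = v 0 := by
    simpa using (UniformlyDefinable.mem_greenSet 0).imp (.exists_tuple (.and
      (.mem_greenSet (.inr 0)) (.aeval_eq_aeval (.X (.inr 0) ^ k) (.X (.inl (0 : Fin 1))))))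
  have hroot := hdef.of_model (fun N _ _ hN v => ?_) hM hc ![u] (hU ▸ ⟨u, hu, rfl⟩)
  · rw [hU] at hroot
    obtain ⟨w, ⟨x, hx, hxw⟩, hwu⟩ := hroot
    exact ⟨x, hx, Units.ext (by rw [Units.val_pow_eq_pow_val, hxw]; exact hwu)⟩
  obtain ⟨-, _, -, V, hV, hVdiv, -⟩ := greenAux_iff.1 hN
  rw [hV]
  rintro ⟨a, ha, hav⟩
  obtain ⟨b, hb, rfl⟩ := hVdiv a ha k hk
  exact ⟨fun _ => b, ⟨b, hb, rfl⟩, by simpa using hav⟩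

theorem nonempty_torsion_mulEquiv_of_model_greenTheory (hν : ∀ z ∈ ν, IsOfFinOrder z)
    [CharZero M] [IsAlgClosed M] (hM : M ⊨ greenTheory ν) (hc : IsCompatible M)
    {U : Subgroup Mˣ} (hU : greenSet M = Units.val '' (U : Set Mˣ)) :
    Nonempty (CommGroup.torsion U ≃* ν) := by
  have : Algebra.IsAlgebraic ℚ (AlgebraicClosure ℚ) := by
    rw [Subsingleton.elim DivisionRing.toRatAlgebra (AlgebraicClosure.instAlgebra ℚ)]
    exact AlgebraicClosure.isAlgebraic ℚ
  let φ : AlgebraicClosure ℚ →ₐ[ℚ] M := IsAlgClosed.lift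
  refine nonempty_torsion_mulEquiv_of_mem_iff φ.toRingHom hν fun u hu => ?_
  have hdef : UniformlyDefinable fun M _ _ (v : Fin 1 → M) =>
      IsPrimitiveRoot (v 0) (orderOf u) → (v 0 ∈ greenSet M ↔ ∃ z ∈ ν, orderOf z = orderOf u) :=
    (UniformlyDefinable.isPrimitiveRoot 0 hu.orderOf_pos).imp (.iff (.mem_greenSet 0) (.const _))
  have hmem : (u : M) ∈ greenSet M ↔ ∃ z ∈ ν, orderOf z = orderOf u :=
    hdef.of_model (fun N _ _ hN v hv => ?_) hM hc ![u]
      (IsPrimitiveRoot.coe_units_iff.2 (IsPrimitiveRoot.orderOf u))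
  · rwa [hU, Units.val_injective.mem_set_image] at hmem
  obtain ⟨-, _, -, V, hV, -, htor, -⟩ := greenAux_iff.1 hN
  obtain ⟨w, hw⟩ := hv.isUnit hu.orderOf_pos.ne'
  rw [← hw, IsPrimitiveRoot.coe_units_iff] at hv
  rw [← hw, hV, Units.val_injective.mem_set_image, hv.eq_orderOf]
  exact mem_iff_exists_orderOf_eq_of_torsion_mulEquiv htor
    (orderOf_pos_iff.1 (hv.eq_orderOf ▸ hu.orderOf_pos))

theorem predimNonneg_of_model_greenTheory [CharZero M] (hM : M ⊨ greenTheory ν)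
    (hc : IsCompatible M) {U : Subgroup Mˣ} (hU : greenSet M = Units.val '' (U : Set Mˣ)) :
    PredimNonneg U := by
  intro ι _ y hyU hind
  by_contra! hdep
  have hrel (B : Finset ι) : ∃ P : MvPolynomial B ℤ, P ≠ 0 ∧
      (Fintype.card ι ≤ 2 * B.card → MvPolynomial.aeval (fun b : B => (y b : M)) P = 0) := by
    by_cases hB : Fintype.card ι ≤ 2 * B.card
    · obtain ⟨P, hP0, hP⟩ := exists_aeval_eq_zero_of_not_algebraicIndependent (hdep B hB)
      exact ⟨P, hP0, fun _ => hP⟩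
    · exact ⟨1, one_ne_zero, fun h => absurd h hB⟩
  choose P hP0 hP using hrel
  obtain ⟨F, hF0, hF⟩ := exists_finset_relations_of_predimNonneg hP0
  have hdef : UniformlyDefinable fun M _ _ (v : ι → M) => (∀ i, v i ∈ greenSet M) →
      (∀ B : {B : Finset ι // Fintype.card ι ≤ 2 * B.card},
        MvPolynomial.aeval (fun b : B.1 => v b) (P B) = 0) →
      ∃ q : F, ∏ i, v i ^ (q.1 i).toNat = ∏ i, v i ^ (-q.1 i).toNat :=
    (UniformlyDefinable.forall_index fun i => .mem_greenSet i).imp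
      (.imp (.forall_index fun B => .aeval_comp_eq_zero _ (P B))
        (.exists_index fun q => .prod_pow_eq_prod_pow _ _))
  have hq := hdef.of_model (fun N _ _ hN v hv hvP => ?_) hM hc (fun i => (y i : M))
    (fun i => hU ▸ ⟨y i, hyU i, rfl⟩) fun B => hP B B.2
  · obtain ⟨q, hq⟩ := hq
    refine hF0 (hind q.1 ?_ ▸ q.2)
    rw [prod_zpow_eq_one_iff.2 hq]
    exact one_mem _
  obtain ⟨-, _, -, V, hV, -, -, hVpre⟩ := greenAux_iff.1 hN
  choose w hw hwv using fun i => hV ▸ hv i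
  obtain rfl : (fun i => (w i : N)) = v := funext hwv
  obtain ⟨q, hqF, hq⟩ := hF N V hVpre w hw fun B hB => hvP ⟨B, hB⟩
  exact ⟨⟨q, hqF⟩, prod_zpow_eq_one_iff.1 hq⟩

end Axiomatization

open FirstOrder Language in
/-- For any divisible group `ν` of roots of unity in `ℚ^alg`, the class `𝒦`
is elementary: there is a set `T` of `LU`-sentences whose models are exactly the members
of `𝒦`. -/
theorem class_K_is_elementary (ν : Subgroup (AlgebraicClosure ℚ)ˣ)
    (hνtor : ∀ x ∈ ν, IsOfFinOrder x)
    (hνdiv : ∀ x ∈ ν, ∀ k : ℕ, k ≠ 0 → ∃ y ∈ ν, y ^ k = x) :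
    ∃ T : LU.Theory, ∀ (M : Type) [inst : LU.Structure M], M ⊨ T ↔ InK ν M := by
  refine ⟨greenTheory ν, fun M _ => ⟨fun hM => ?_, fun hM => ⟨fun φ hφ => hφ M hM⟩⟩⟩
  obtain ⟨_, _, _, hc⟩ := exists_field_of_model_greenTheory hM
  obtain ⟨U, hU⟩ := exists_subgroup_of_model_greenTheory hM hc
  exact ⟨_, greenAux_iff.2 ⟨‹_›, ‹_›, hc, U, hU, divisibleSub_of_model_greenTheory hM hc hU,
    nonempty_torsion_mulEquiv_of_model_greenTheory hνtor hM hc hU,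
    predimNonneg_of_model_greenTheory hM hc hU⟩⟩

end BadFields
end

section
/- Let K be an algebraically closed field of characteristic 0, let W ⊆ (Kˣ)ⁿ be an irreducible variety defined over ℚ, let M be an integer k×n matrix of rank k, let T = {y ∈ (Kˣ)ⁿ : y^M = 1} be the corresponding subtorus, and let W_M ⊆ (Kˣ)ᵏ be the Zariski closure of {y^M : y ∈ W}. Then for every point b ∈ W that is generic in W over ℚ (i.e., trdeg(ℚ(b)/ℚ) = dim W), one has dim(W ∩ b·T) = dim W − dim W_M; moreover dim(W ∩ b·T) = trdeg(ℚ(b)/ℚ(b^M)). -/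
namespace BadFields

variable (K : Type) [Field K]

/-!
The dimension of an irreducible closed set is the transcendence degree of its generic point, and
the polynomial relations over `F` of a point are inherited by its specializations over `F`, whose
transcendence degree over `F` is therefore no larger.

Let `b` be generic in `W` over `F`; then `b` specializes over `F` to every point of `W`, in any
extension of `K`. Applied to a point `a` of `W` generic over `K`, this shows that `b ^ M` has over
`F` the transcendence degree of `a ^ M`, which is `dim W_M`. Applied to a generic point `a` of an
irreducible closed subset of the fibre, where `a ^ M = b ^ M`, it gives
`trdeg (F(a) / F(b ^ M)) ≤ trdeg (F(b) / F(b ^ M))` by additivity of the transcendence degree in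
the tower `F ⊆ F(b ^ M) ⊆ F(a)`. Conversely the fibre is defined over `F(b ^ M)`, so a copy of `b`
over `F(b ^ M)` that is independent of `K` is the generic point of a closed subset of the fibre of
dimension `trdeg (F(b) / F(b ^ M))`. That dimension is `dim W - dim W_M` by additivity again.
-/

section TranscendenceDegree

open AlgebraicIndependent Set
open scoped IntermediateField.algebraAdjoinAdjoin

variable {F E L ι : Type*} [Field F] [Field E] [Field L] [Algebra F L]

/-- The transcendence degree of the field `F(s)` over `F`, as the rank of `s` in the matroid of
algebraic independence over `F`. -/
noncomputable abbrev trdegSet (F : Type*) {L : Type*} [Field F] [Field L] [Algebra F L]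
    (s : Set L) : ℕ∞ :=
  (matroid F L).eRk s

/-- The relative algebraic closure of `F(s)` in `L`, as the closure of `s` in the matroid of
algebraic independence over `F`. -/
abbrev algClosureSet (F : Type*) {L : Type*} [Field F] [Field L] [Algebra F L] (s : Set L) :
    Set L :=
  (matroid F L).closure s

theorem mem_algClosureSet_iff {s : Set L} {x : L} :
    x ∈ algClosureSet F s ↔ IsAlgebraic (IntermediateField.adjoin F s) x := by
  rw [algClosureSet, matroid_closure_eq]
  exact IsFractionRing.isAlgebraic_iff (Algebra.adjoin F s) (IntermediateField.adjoin F s) L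

theorem adjoin_subset_algClosureSet (s : Set L) :
    (IntermediateField.adjoin F s : Set L) ⊆ algClosureSet F s := fun x hx =>
  mem_algClosureSet_iff.2 (isAlgebraic_algebraMap (⟨x, hx⟩ : IntermediateField.adjoin F s))

theorem algClosureSet_subset_of_adjoin_le [Algebra E L] {s t : Set L}
    (h : (IntermediateField.adjoin E s).toSubfield ≤ (IntermediateField.adjoin F t).toSubfield) :
    algClosureSet E s ⊆ algClosureSet F t := fun x hx => by
  rw [mem_algClosureSet_iff] at hx ⊢
  let _ : Algebra (IntermediateField.adjoin E s) (IntermediateField.adjoin F t) :=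
    (Subfield.inclusion h).toAlgebra
  have : IsScalarTower (IntermediateField.adjoin E s) (IntermediateField.adjoin F t) L :=
    .of_algebraMap_eq fun _ => rfl
  exact hx.extendScalars (Subfield.inclusion h).injective

theorem subset_algClosureSet (s : Set L) : s ⊆ algClosureSet F s :=
  (IntermediateField.subset_adjoin F s).trans (adjoin_subset_algClosureSet s)

theorem trdegSet_union_eq_of_subset {s c : Set L} (hc : c ⊆ algClosureSet F s) :
    trdegSet F (c ∪ s) = trdegSet F s := by
  refine (Matroid.eRk_mono _ subset_union_right).antisymm' ?_
  exact (Matroid.eRk_mono _ (union_subset hc (subset_algClosureSet s))).trans_eq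
    (Matroid.eRk_closure_eq _ s)

theorem card_le_trdegSet {v : ι → L} {s : Set L} (hv : AlgebraicIndependent F v)
    (hvs : range v ⊆ s) : ENat.card ι ≤ trdegSet F s := by
  rw [← encard_univ, ← hv.injective.encard_image, image_univ]
  exact Matroid.Indep.encard_le_eRk_of_subset (M := matroid F L) hv.coe_range hvs

theorem comap_matroid_indep_iff {a : ι → L} {J : Set ι} :
    ((matroid F L).comap a).Indep J ↔ AlgebraicIndepOn F a J := by
  rw [Matroid.comap_indep_iff, matroid_indep_iff]
  refine ⟨fun h => (algebraicIndependent_image h.2).2 h.1, fun h => ?_⟩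
  have hinj : InjOn a J := injOn_iff_injective.2 h.injective
  exact ⟨(algebraicIndependent_image hinj).1 h, hinj⟩

theorem exists_algebraicIndepOn_of_le_trdegSet {a : ι → L} {e : ℕ∞}
    (he : e ≤ trdegSet F (range a)) : ∃ J : Set ι, AlgebraicIndepOn F a J ∧ J.encard = e := by
  rw [← image_univ, trdegSet, ← Matroid.eRk_comap, Matroid.le_eRk_iff] at he
  obtain ⟨J, -, hJ, hcard⟩ := he
  exact ⟨J, comap_matroid_indep_iff.1 hJ, hcard⟩

theorem trdegSet_range_ne_top [Finite ι] (a : ι → L) : trdegSet F (range a) ≠ ⊤ :=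
  ((Matroid.eRk_le_encard _ _).trans_lt (finite_range a).encard_lt_top).ne

theorem trdegSet_union_le_of_range_subset [Algebra E L] {c s : Set L}
    (hE : range (algebraMap E L) ⊆ IntermediateField.adjoin F c) :
    trdegSet F (c ∪ s) ≤ trdegSet F c + trdegSet E s := by
  obtain ⟨u, hu⟩ := (matroid E L).exists_isBasis s
  have hs : s ⊆ algClosureSet F (c ∪ u) := by
    refine hu.subset_closure.trans <|
      algClosureSet_subset_of_adjoin_le (Subfield.closure_le.2 (union_subset ?_ ?_))
    · exact hE.trans (IntermediateField.adjoin.mono F _ _ subset_union_left)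
    · exact subset_union_right.trans (IntermediateField.subset_adjoin F _)
  have hcu : c ∪ s ⊆ algClosureSet F (c ∪ u) :=
    union_subset (subset_union_left.trans (subset_algClosureSet _)) hs
  calc trdegSet F (c ∪ s) ≤ trdegSet F (c ∪ u) :=
        (Matroid.eRk_mono _ hcu).trans_eq (Matroid.eRk_closure_eq _ _)
    _ ≤ trdegSet F c + trdegSet F u := Matroid.eRk_union_le_eRk_add_eRk _ _ _
    _ ≤ trdegSet F c + trdegSet E s := by
      gcongr
      exact (Matroid.eRk_le_encard _ u).trans_eq hu.encard_eq_eRk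

section Tower

variable [Algebra F E] [Algebra E L] [IsScalarTower F E L]

theorem algClosureSet_subset_of_tower (s : Set L) : algClosureSet F s ⊆ algClosureSet E s := by
  refine algClosureSet_subset_of_adjoin_le (Subfield.closure_le.2 (union_subset ?_ ?_))
  · rintro _ ⟨x, rfl⟩
    rw [IsScalarTower.algebraMap_apply F E L]
    exact IntermediateField.algebraMap_mem _ _
  · exact IntermediateField.subset_adjoin E s

theorem trdegSet_le_of_tower (s : Set L) : trdegSet E s ≤ trdegSet F s := by
  obtain ⟨t, ht⟩ := (matroid E L).exists_isBasis s
  rw [trdegSet, ← ht.encard_eq_eRk]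
  exact Matroid.Indep.encard_le_eRk_of_subset (M := matroid F L)
    (AlgebraicIndependent.restrictScalars (algebraMap F E).injective ht.indep) ht.subset

theorem trdegSet_add_le_of_tower {c s : Set L} (hc : c ⊆ range (algebraMap E L)) :
    trdegSet F c + trdegSet E s ≤ trdegSet F (c ∪ s) := by
  obtain ⟨t, ht⟩ := (matroid F L).exists_isBasis c
  obtain ⟨u, hu⟩ := (matroid E L).exists_isBasis s
  have hindep : AlgebraicIndependent F (Sum.elim ((↑) : u → L) ((↑) : t → L)) :=
    AlgebraicIndependent.sumElim_of_tower (S := E) ht.indep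
      (by simpa using ht.subset.trans hc) hu.indep
  have hcard := card_le_trdegSet hindep (s := c ∪ s) <| by
    rw [Sum.elim_range, Subtype.range_coe, Subtype.range_coe, union_comm]
    exact union_subset_union ht.subset hu.subset
  rwa [ENat.card_sum, add_comm, ENat.card_coe_set_eq, ENat.card_coe_set_eq, ht.encard_eq_eRk,
    hu.encard_eq_eRk] at hcard

/-- The hypothesis `hEF` says that `E` and `F(s)` are independent over `F`. -/
theorem trdegSet_eq_of_subset_algClosureSet {c s : Set L} (hs : trdegSet F s ≠ ⊤)
    (hEF : trdegSet E s = trdegSet F s) (hc : c ⊆ algClosureSet F s) :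
    trdegSet E c = trdegSet F c := by
  obtain ⟨t, ht⟩ := (matroid F L).exists_isBasis c
  obtain ⟨u, hu, htu⟩ := ht.indep.subset_isBasis_of_subset (ht.subset.trans subset_union_left)
    (X := c ∪ s)
  have hcs : trdegSet E s ≤ trdegSet E u :=
    (Matroid.eRk_mono _ (subset_union_right.trans
      (hu.subset_closure.trans (algClosureSet_subset_of_tower u)))).trans_eq
      (Matroid.eRk_closure_eq _ _)
  have hucard : u.encard = trdegSet F s :=
    hu.encard_eq_eRk.trans (trdegSet_union_eq_of_subset hc)
  have hufin : u.Finite := by rwa [← encard_ne_top_iff, hucard]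
  have huE : (matroid E L).Indep u :=
    (Matroid.indep_iff_eRk_eq_encard_of_finite hufin).2
      ((Matroid.eRk_le_encard _ u).antisymm (by rwa [hucard, ← hEF]))
  refine (trdegSet_le_of_tower c).antisymm ?_
  calc trdegSet F c = t.encard := ht.encard_eq_eRk.symm
    _ ≤ trdegSet E c := (huE.subset htu).encard_le_eRk_of_subset ht.subset

end Tower

theorem trdegSet_image_add_sup_closure {K : Type*} [Field K] [Algebra K L] (F : Subfield K)
    {c : Set K} {s : Set L} (hc : algebraMap K L '' c ⊆ algClosureSet F s) :
    trdegSet F (algebraMap K L '' c) + trdegSet ↥(F ⊔ Subfield.closure c) s = trdegSet F s := by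
  let _ : Algebra F ↥(F ⊔ Subfield.closure c) := (Subfield.inclusion le_sup_left).toAlgebra
  have : IsScalarTower F ↥(F ⊔ Subfield.closure c) L := .of_algebraMap_eq fun _ => rfl
  have hcE : algebraMap K L '' c ⊆ range (algebraMap ↥(F ⊔ Subfield.closure c) L) := by
    rintro _ ⟨x, hx, rfl⟩
    exact ⟨⟨x, le_sup_right (a := F) (Subfield.subset_closure hx)⟩, rfl⟩
  have hEc : F ⊔ Subfield.closure c ≤ Subfield.comap (algebraMap K L)
      (IntermediateField.adjoin F (algebraMap K L '' c)).toSubfield := by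
    refine sup_le (fun x hx => ?_) (Subfield.closure_le.2 fun x hx => ?_)
    · exact (IntermediateField.adjoin F (algebraMap K L '' c)).algebraMap_mem ⟨x, hx⟩
    · exact IntermediateField.subset_adjoin F _ ⟨x, hx, rfl⟩
  rw [← trdegSet_union_eq_of_subset hc]
  refine (trdegSet_add_le_of_tower hcE).antisymm (trdegSet_union_le_of_range_subset ?_)
  rintro _ ⟨x, rfl⟩
  exact hEc x.2

theorem coe_trdegOver {K : Type} [Field K] (F : Subfield K) {s : Set K} (hs : s.Finite) :
    (trdegOver K F s : ℕ∞) = trdegSet F s := by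
  obtain ⟨t, ht⟩ := (matroid F K).exists_isBasis s
  obtain ⟨t, rfl⟩ := (hs.subset ht.subset).exists_finset_coe
  rw [trdegSet, ← ht.encard_eq_eRk, encard_coe_eq_coe_finsetCard, Nat.cast_inj]
  refine IsGreatest.csSup_eq ⟨⟨t, ht.subset, rfl, ht.indep⟩, ?_⟩
  rintro _ ⟨u, hus, rfl, hu⟩
  rw [← Nat.cast_le (α := ℕ∞), ← encard_coe_eq_coe_finsetCard, ← encard_coe_eq_coe_finsetCard,
    ht.encard_eq_eRk]
  exact Matroid.Indep.encard_le_eRk_of_subset (M := matroid F K) hu hus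

end TranscendenceDegree

section Specialization

open MvPolynomial AlgebraicIndependent Set

variable {F L L' Ω ι : Type*} [Field F] [Field L] [Field L'] [Algebra F L] [Algebra F L']
  [Field Ω] [Algebra F Ω] [IsAlgClosed Ω]

/-- The tuple `a'` is a specialization of `a` over `F`: every polynomial relation over `F`
satisfied by `a` is satisfied by `a'`. The two tuples may live in different extensions of `F`. -/
def SpecializesOver (F : Type*) {L L' ι : Type*} [Field F] [Field L] [Field L'] [Algebra F L]
    [Algebra F L'] (a : ι → L) (a' : ι → L') : Prop :=
  ∀ p : MvPolynomial ι F, aeval a p = 0 → aeval a' p = 0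

theorem SpecializesOver.trans {L'' : Type*} [Field L''] [Algebra F L''] {a : ι → L} {a' : ι → L'}
    {a'' : ι → L''} (h : SpecializesOver F a a') (h' : SpecializesOver F a' a'') :
    SpecializesOver F a a'' :=
  fun p hp => h' p (h p hp)

theorem SpecializesOver.restrictScalars {E : Type*} (F : Type*) [Field E] [Field F] [Algebra F E]
    {L L' : Type*} [Field L] [Field L'] [Algebra E L] [Algebra F L] [IsScalarTower F E L]
    [Algebra E L'] [Algebra F L'] [IsScalarTower F E L'] {a : ι → L} {a' : ι → L'}
    (h : SpecializesOver E a a') : SpecializesOver F a a' := fun p hp => by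
  rw [← aeval_map_algebraMap E] at hp ⊢
  exact h _ hp

theorem SpecializesOver.algebraicIndepOn {a : ι → L} {a' : ι → L'} (h : SpecializesOver F a a')
    {J : Set ι} (hJ : AlgebraicIndepOn F a' J) : AlgebraicIndepOn F a J := by
  refine algebraicIndependent_iff.2 fun p hp => algebraicIndependent_iff.1 hJ p ?_
  have h' := h (rename (↑) p) (by rwa [aeval_rename])
  rwa [aeval_rename] at h'

theorem SpecializesOver.trdegSet_le {a : ι → L} {a' : ι → L'} (h : SpecializesOver F a a') :
    trdegSet F (range a') ≤ trdegSet F (range a) := by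
  obtain ⟨J, hJ, hcard⟩ := exists_algebraicIndepOn_of_le_trdegSet (le_refl (trdegSet F (range a')))
  rw [← hcard]
  exact card_le_trdegSet (h.algebraicIndepOn hJ) (by grind)

theorem trdegSet_range_algebraMap_comp {K : Type*} [Field K] [Algebra F K] [Algebra K L]
    [IsScalarTower F K L] (c : ι → K) :
    trdegSet F (range (algebraMap K L ∘ c)) = trdegSet F (range c) := by
  have h (p : MvPolynomial ι F) : aeval (algebraMap K L ∘ c) p = 0 ↔ aeval c p = 0 := by
    rw [aeval_algebraMap_apply, map_eq_zero_iff _ (algebraMap K L).injective]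
  exact (SpecializesOver.trdegSet_le fun p => (h p).2).antisymm
    (SpecializesOver.trdegSet_le fun p => (h p).1)

theorem isAlgebraic_aeval_of_trdegSet_le [Finite ι] {a : ι → L} {J : Set ι}
    (hJ : AlgebraicIndepOn F a J) (hrank : trdegSet F (range a) ≤ J.encard)
    (p : MvPolynomial ι F) : IsAlgebraic (Algebra.adjoin F (a '' J)) (aeval a p) := by
  obtain ⟨hindep, hinj⟩ := comap_matroid_indep_iff.2 hJ
  have hbasis : (matroid F L).IsBasis (a '' J) (range a) :=
    hindep.isBasis_of_eRk_ge (J.toFinite.image a) (image_subset_range a J)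
      (by rwa [hindep.eRk_eq_encard, hinj.encard_image])
  have hp : aeval a p ∈ algClosureSet F (a '' J) := by
    rw [algClosureSet, hbasis.closure_eq_closure]
    refine adjoin_subset_algClosureSet _ (IntermediateField.algebra_adjoin_le_adjoin F _ ?_)
    rw [Algebra.adjoin_range_eq_range_aeval]
    exact ⟨p, rfl⟩
  rwa [algClosureSet, matroid_closure_eq] at hp

theorem exists_aeval_rename_eq_aeval_mul [Finite ι] {a : ι → L} {J : Set ι}
    (hJ : AlgebraicIndepOn F a J) (hrank : trdegSet F (range a) ≤ J.encard)
    {p : MvPolynomial ι F} (hp : aeval a p ≠ 0) :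
    ∃ r : MvPolynomial J F, r ≠ 0 ∧ ∃ q, aeval a (rename (↑) r) = aeval a (p * q) := by
  let f : MvPolynomial J F →ₐ[F] (aeval a : MvPolynomial ι F →ₐ[F] L).range :=
    (aeval a).rangeRestrict.comp (rename (↑))
  let _ : Algebra (MvPolynomial J F) (aeval a : MvPolynomial ι F →ₐ[F] L).range :=
    f.toRingHom.toAlgebra
  have halg : IsAlgebraic (MvPolynomial J F) ((aeval a).rangeRestrict p) :=
    (isAlgebraic_aeval_of_trdegSet_le hJ hrank p).of_ringHom_of_comp_eq hJ.aevalEquiv.toRingEquiv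
      (aeval a : MvPolynomial ι F →ₐ[F] L).range.val hJ.aevalEquiv.surjective
      Subtype.val_injective <| RingHom.ext fun r =>
        show aeval (fun j : J => a j) r = aeval a (rename (↑) r) from (aeval_rename _ _ _).symm
  obtain ⟨r, hr, q, hq⟩ := halg.exists_nonzero_dvd <|
    mem_nonZeroDivisors_of_ne_zero fun h => hp (congrArg Subtype.val h)
  obtain ⟨q, rfl⟩ := AlgHom.rangeRestrict_surjective (aeval a) q
  refine ⟨r, hr, q, ?_⟩
  rw [map_mul]
  exact congrArg Subtype.val hq

theorem SpecializesOver.trdegSet_lt [Finite ι] {a : ι → L} {a' : ι → L'}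
    (h : SpecializesOver F a a') {p : MvPolynomial ι F} (hp : aeval a p ≠ 0)
    (hp' : aeval a' p = 0) :
    trdegSet F (range a') < trdegSet F (range a) := by
  by_contra! hle
  obtain ⟨J, hJ, hcard⟩ := exists_algebraicIndepOn_of_le_trdegSet (le_refl (trdegSet F (range a')))
  obtain ⟨r, hr, q, hrq⟩ :=
    exists_aeval_rename_eq_aeval_mul (h.algebraicIndepOn hJ) (hcard ▸ hle) hp
  refine hr (algebraicIndependent_iff.1 hJ r ?_)
  have hr' := h (rename (↑) r - p * q) (by rw [map_sub, hrq, sub_self])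
  rw [map_sub, map_mul, hp', zero_mul, sub_zero, aeval_rename] at hr'
  exact hr'

theorem exists_specializesOver_units_aeval_ne_zero [Finite ι] {a : ι → L} (ha : ∀ i, a i ≠ 0)
    {p : MvPolynomial ι F} (hp : aeval a p ≠ 0) :
    ∃ x : ι → Ωˣ, SpecializesOver F a (fun i => (x i : Ω)) ∧ aeval (fun i => (x i : Ω)) p ≠ 0 := by
  have := Fintype.ofFinite ι
  have hprod : p * ∏ i, X i ∉ vanishingIdeal F (zeroLocus Ω (RingHom.ker (aeval (R := F) a))) := by
    have := RingHom.ker_isPrime (aeval (R := F) a)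
    rw [IsPrime.vanishingIdeal_zeroLocus, RingHom.mem_ker, map_mul, map_prod]
    simp only [aeval_X]
    exact mul_ne_zero hp (Finset.prod_ne_zero_iff.2 fun i _ => ha i)
  simp only [mem_vanishingIdeal_iff, map_mul, map_prod, aeval_X, not_forall] at hprod
  obtain ⟨x, hx, hpx⟩ := hprod
  have hne : ∀ i, x i ≠ 0 := fun i =>
    Finset.prod_ne_zero_iff.1 (right_ne_zero_of_mul hpx) i (Finset.mem_univ i)
  exact ⟨fun i => Units.mk0 (x i) (hne i), fun q hq => hx q hq, left_ne_zero_of_mul hpx⟩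

theorem exists_specializesOver_units_extending [Finite ι] {a : ι → L} (ha : ∀ i, a i ≠ 0)
    {J : Set ι} (hJ : AlgebraicIndepOn F a J) {v : J → Ω} (hv : AlgebraicIndependent F v) :
    ∃ x : ι → Ωˣ, SpecializesOver F a (fun i => (x i : Ω)) ∧ ∀ j : J, (x j : Ω) = v j := by
  let E := FractionRing (MvPolynomial J F)
  let f : E →ₐ[F] L := IsFractionRing.liftAlgHom (g := aeval fun j : J => a j) hJ
  let g : E →ₐ[F] Ω := IsFractionRing.liftAlgHom (g := aeval v) hv
  let _ : Algebra E L := f.toRingHom.toAlgebra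
  let _ : Algebra E Ω := g.toRingHom.toAlgebra
  have : IsScalarTower F E L := .of_algebraMap_eq fun r => (f.commutes r).symm
  have : IsScalarTower F E Ω := .of_algebraMap_eq fun r => (g.commutes r).symm
  have hf (j : J) : f (algebraMap (MvPolynomial J F) E (X j)) = a j :=
    (IsFractionRing.lift_algebraMap hJ _).trans (aeval_X _ j)
  have hg (j : J) : g (algebraMap (MvPolynomial J F) E (X j)) = v j :=
    (IsFractionRing.lift_algebraMap hv _).trans (aeval_X _ j)
  obtain ⟨x, hx, -⟩ := exists_specializesOver_units_aeval_ne_zero (F := E) (Ω := Ω) ha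
    (p := 1) (by simp)
  refine ⟨x, hx.restrictScalars F, fun j => ?_⟩
  have hj : aeval (fun i => (x i : Ω))
      (X (j : ι) - C (algebraMap (MvPolynomial J F) E (X j)) : MvPolynomial ι E) = 0 := by
    refine hx _ ?_
    rw [map_sub, aeval_X, aeval_C, sub_eq_zero]
    exact (hf j).symm
  rw [map_sub, aeval_X, aeval_C, sub_eq_zero] at hj
  exact hj.trans (hg j)

theorem exists_isAlgClosed_isTranscendenceBasis.{u, v} (K : Type u) (σ : Type v) [Field K] :
    ∃ (Ω : Type (max u v)) (_ : Field Ω) (_ : Algebra K Ω) (v : σ → Ω),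
      IsAlgClosed Ω ∧ IsTranscendenceBasis K v := by
  let E := FractionRing (MvPolynomial σ K)
  refine ⟨AlgebraicClosure E, inferInstance, inferInstance,
    fun i => algebraMap E _ (algebraMap (MvPolynomial σ K) E (X i)), inferInstance, ?_⟩
  have : Algebra.IsAlgebraic (MvPolynomial σ K) E :=
    IsLocalization.isAlgebraic _ (nonZeroDivisors _)
  exact (IsTranscendenceBasis.mvPolynomial σ K).algebraMap_comp (A := E) |>.algebraMap_comp

/-- Sending the algebraically independent coordinates `J` of `a` to a transcendence basis of `Ω`
over `K` keeps them independent over `K` and leaves no room for further independent coordinates. -/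
theorem exists_specializesOver_trdegSet_eq {K : Type*} [Field K] [Algebra F K] [Algebra K Ω]
    [IsScalarTower F K Ω] [Finite ι] {a : ι → L} (ha : ∀ i, a i ≠ 0) {J : Set ι}
    (hJ : AlgebraicIndepOn F a J) {v : J → Ω} (hv : IsTranscendenceBasis K v) :
    ∃ x : ι → Ωˣ, SpecializesOver F a (fun i => (x i : Ω)) ∧
      trdegSet K (range fun i => (x i : Ω)) = J.encard := by
  obtain ⟨x, hx, hxv⟩ := exists_specializesOver_units_extending ha hJ
    (hv.1.restrictScalars (algebraMap F K).injective)
  refine ⟨x, hx, le_antisymm ?_ ?_⟩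
  · refine (Matroid.eRk_le_eRank _ _).trans_eq ?_
    rw [← (matroid_isBase_iff.2 hv.to_subtype_range).encard_eq_eRank, ← image_univ,
      hv.1.injective.encard_image, encard_univ, ENat.card_coe_set_eq]
  · exact card_le_trdegSet hv.1 (by grind)

end Specialization
section Dimension

open MvPolynomial Set

variable {K} {ι : Type}

theorem mem_zeroSet_iff {S : Set (MvPolynomial ι K)} {x : ι → Kˣ} :
    x ∈ zeroSet K S ↔ ∀ p ∈ S, aeval (fun i => (x i : K)) p = 0 := Iff.rfl

theorem isZClosed_zcl (S : Set (ι → Kˣ)) : IsZClosed K (zcl K S) := by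
  refine ⟨{p | ∀ x ∈ S, aeval (fun i => (x i : K)) p = 0}, Subset.antisymm ?_ ?_⟩
  · exact sInter_subset_of_mem ⟨⟨_, rfl⟩, fun x hx p hp => hp x hx⟩
  · rintro x hx _ ⟨⟨T, rfl⟩, hS⟩ p hp
    exact hx p fun y hy => hS hy p hp

theorem forall_mem_zcl_aeval_eq_zero_iff {S : Set (ι → Kˣ)} {p : MvPolynomial ι K} :
    (∀ x ∈ zcl K S, aeval (fun i => (x i : K)) p = 0) ↔
      ∀ x ∈ S, aeval (fun i => (x i : K)) p = 0 := by
  refine ⟨fun h x hx => h x fun C hC => hC.2 hx, fun h x hx => ?_⟩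
  exact hx (zeroSet K {p}) ⟨⟨_, rfl⟩, fun y hy => by rintro _ rfl; exact h y hy⟩ p rfl

/-- The set of points of `(Kˣ)^ι` to which the point `a`, with coordinates in an extension of `K`,
specializes over `K`. -/
def locus (K : Type) [Field K] {L ι : Type} [Field L] [Algebra K L] (a : ι → L) :
    Set (ι → Kˣ) :=
  {x | SpecializesOver K a (fun i => (x i : K))}

/-- `a` is a generic point of `V` over `K`: the polynomials over `K` vanishing at `a` are those
vanishing on `V`. -/
def IsGeneric {K : Type} [Field K] {L ι : Type} [Field L] [Algebra K L] (V : Set (ι → Kˣ))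
    (a : ι → L) : Prop :=
  ∀ p : MvPolynomial ι K, aeval a p = 0 ↔ ∀ x ∈ V, aeval (fun i => (x i : K)) p = 0

variable {L L' : Type} [Field L] [Algebra K L] [Field L'] [Algebra K L'] {a : ι → L} {a' : ι → L'}
  {V V' : Set (ι → Kˣ)}

theorem isZClosed_locus (a : ι → L) : IsZClosed K (locus K a) := ⟨{p | aeval a p = 0}, rfl⟩

theorem isGeneric_locus [IsAlgClosed K] [Finite ι] (ha : ∀ i, a i ≠ 0) :
    IsGeneric (locus K a) a := by
  refine fun p => ⟨fun hp x hx => hx p hp, fun hp => ?_⟩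
  by_contra hpa
  obtain ⟨x, hx, hpx⟩ := exists_specializesOver_units_aeval_ne_zero (Ω := K) ha hpa
  exact hpx (hp x hx)

theorem IsGeneric.specializesOver (h : IsGeneric V a) (h' : IsGeneric V' a') (hV : V' ⊆ V) :
    SpecializesOver K a a' :=
  fun p hp => (h' p).2 fun x hx => (h p).1 hp x (hV hx)

theorem IsGeneric.eq_locus (h : IsGeneric V a) (hV : IsZClosed K V) : V = locus K a := by
  obtain ⟨S, rfl⟩ := hV
  refine Subset.antisymm (fun x hx p hp => (h p).1 hp x hx) fun x hx p hp => ?_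
  exact hx p ((h p).2 fun y hy => hy p hp)

theorem IsGeneric.isIrredVar (h : IsGeneric V a) (hV : IsZClosed K V) : IsIrredVar K V := by
  refine ⟨hV, ?_, ?_⟩
  · by_contra! hempty
    have h1 := (h 1).2 (by simp [hempty])
    simp at h1
  · rintro _ _ ⟨S₁, rfl⟩ ⟨S₂, rfl⟩ hsub
    by_contra! hcon
    simp only [not_subset, mem_zeroSet_iff, not_forall] at hcon
    obtain ⟨⟨x, hxV, p, hp, hpx⟩, y, hyV, q, hq, hqy⟩ := hcon
    have hpq : aeval a (p * q) = 0 := (h _).2 fun z hz => by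
      rw [map_mul, mul_eq_zero]
      exact (hsub hz).imp (fun hz => hz p hp) (fun hz => hz q hq)
    rw [map_mul, mul_eq_zero] at hpq
    exact hpq.elim (fun hpa => hpx ((h p).1 hpa x hxV)) fun hqa => hqy ((h q).1 hqa y hyV)

theorem IsGeneric.ne_zero (h : IsGeneric V a) (hV : V.Nonempty) (i : ι) : a i ≠ 0 := by
  intro ha
  obtain ⟨x, hx⟩ := hV
  have hxi := (h (X i)).1 (by rwa [aeval_X]) x hx
  exact (x i).ne_zero (by rwa [aeval_X] at hxi)

theorem IsGeneric.trdegSet_lt [Finite ι] (h : IsGeneric V a) (h' : IsGeneric V' a')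
    (hV' : IsZClosed K V') (hss : V' ⊂ V) : trdegSet K (range a') < trdegSet K (range a) := by
  obtain ⟨S, rfl⟩ := hV'
  obtain ⟨x, hxV, hx⟩ := exists_of_ssubset hss
  simp only [mem_zeroSet_iff, not_forall] at hx
  obtain ⟨p, hp, hpx⟩ := hx
  exact (h.specializesOver h' hss.1).trdegSet_lt (fun hpa => hpx ((h p).1 hpa x hxV))
    ((h' p).2 fun y hy => hy p hp)

/-- The ideal of polynomials over `K` vanishing on `V`. -/
def idealOf (V : Set (ι → Kˣ)) : Ideal (MvPolynomial ι K) :=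
  vanishingIdeal K ((fun x i => (x i : K)) '' V)

theorem mem_idealOf_iff {p : MvPolynomial ι K} :
    p ∈ idealOf V ↔ ∀ x ∈ V, aeval (fun i => (x i : K)) p = 0 := by
  rw [idealOf, mem_vanishingIdeal_iff, forall_mem_image]

theorem IsIrredVar.isPrime_idealOf (hV : IsIrredVar K V) : (idealOf V).IsPrime := by
  refine ⟨fun htop => ?_, fun {p q} hpq => ?_⟩
  · obtain ⟨x, hx⟩ := hV.2.1
    have h1 := mem_idealOf_iff.1 ((Ideal.eq_top_iff_one _).1 htop) x hx
    simp at h1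
  · have hsub : V ⊆ zeroSet K {p} ∪ zeroSet K {q} := fun x hx => by
      have hx0 := mem_idealOf_iff.1 hpq x hx
      rw [map_mul, mul_eq_zero] at hx0
      exact hx0.imp (by rintro h _ rfl; exact h) (by rintro h _ rfl; exact h)
    exact (hV.2.2 _ _ ⟨_, rfl⟩ ⟨_, rfl⟩ hsub).imp
      (fun h => mem_idealOf_iff.2 fun x hx => h hx p rfl)
      (fun h => mem_idealOf_iff.2 fun x hx => h hx q rfl)

theorem IsIrredVar.exists_isGeneric (hV : IsIrredVar K V) :
    ∃ (L : Type) (_ : Field L) (_ : Algebra K L) (a : ι → L), IsGeneric V a := by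
  have := hV.isPrime_idealOf
  let A := MvPolynomial ι K ⧸ idealOf V
  refine ⟨FractionRing A, inferInstance, inferInstance,
    algebraMap A (FractionRing A) ∘ fun i => Ideal.Quotient.mkₐ K (idealOf V) (X i), fun p => ?_⟩
  rw [aeval_algebraMap_apply, map_eq_zero_iff _ (IsFractionRing.injective A _),
    ← comp_aeval_apply, aeval_X_left_apply, ← mem_idealOf_iff]
  exact Ideal.Quotient.eq_zero_iff_mem

/-- `V` contains a strict chain of `d + 1` irreducible closed subsets, so that `vdim K V` is the
supremum of the `d` for which this holds. -/
def HasIrredChain (V : Set (ι → Kˣ)) (d : ℕ) : Prop :=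
  ∃ W : Fin (d + 1) → Set (ι → Kˣ), (∀ i, IsIrredVar K (W i) ∧ W i ⊆ V) ∧ StrictMono W

theorem HasIrredChain.mono {d : ℕ} (h : HasIrredChain V d) (hV : V ⊆ V') : HasIrredChain V' d := by
  obtain ⟨W, hW, hmono⟩ := h
  exact ⟨W, fun i => ⟨(hW i).1, (hW i).2.trans hV⟩, hmono⟩

theorem IsIrredVar.hasIrredChain_zero (hV : IsIrredVar K V) : HasIrredChain V 0 :=
  ⟨fun _ => V, fun _ => ⟨hV, subset_rfl⟩, Subsingleton.strictMono (α := Fin 1) _⟩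

theorem HasIrredChain.succ_of_ssubset {d : ℕ} (h : HasIrredChain V' d) (hV : IsIrredVar K V)
    (hss : V' ⊂ V) : HasIrredChain V (d + 1) := by
  obtain ⟨W, hW, hmono⟩ := h
  refine ⟨Fin.snoc (α := fun _ => Set (ι → Kˣ)) W V, fun i => ?_, ?_⟩
  · induction i using Fin.lastCases with
    | last => rw [Fin.snoc_last]; exact ⟨hV, subset_rfl⟩
    | cast i => rw [Fin.snoc_castSucc]; exact ⟨(hW i).1, (hW i).2.trans hss.1⟩
  · refine Fin.strictMono_iff_lt_succ.2 fun i => ?_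
    induction i using Fin.lastCases with
    | last =>
      rw [Fin.snoc_castSucc, Fin.succ_last, Fin.snoc_last]
      exact (hW _).2.trans_ssubset hss
    | cast i =>
      rw [Fin.snoc_castSucc, Fin.succ_castSucc, Fin.snoc_castSucc]
      exact hmono Fin.castSucc_lt_succ

theorem length_le_trdegSet_of_strictMono [Finite ι] {d : ℕ} {W : Fin (d + 1) → Set (ι → Kˣ)}
    (hW : ∀ i, IsIrredVar K (W i)) (hmono : StrictMono W) (ha : IsGeneric (W (Fin.last d)) a) :
    (d : ℕ∞) ≤ trdegSet K (range a) := by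
  induction d generalizing L with
  | zero => simp
  | succ d ih =>
    obtain ⟨L', _, _, a', ha'⟩ := (hW (Fin.last d).castSucc).exists_isGeneric
    have hd : (d : ℕ∞) ≤ trdegSet K (range a') :=
      ih (fun i => hW i.castSucc) (hmono.comp Fin.strictMono_castSucc) ha'
    have hlt := ha.trdegSet_lt ha' (hW _).1 (hmono (Fin.castSucc_lt_last (Fin.last d)))
    push_cast
    exact Order.add_one_le_of_lt (hd.trans_lt hlt)

theorem HasIrredChain.exists_isGeneric [Finite ι] {d : ℕ} (h : HasIrredChain V d) :
    ∃ V' ⊆ V, ∃ (L : Type) (_ : Field L) (_ : Algebra K L) (a : ι → L),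
      IsIrredVar K V' ∧ IsGeneric V' a ∧ (d : ℕ∞) ≤ trdegSet K (range a) := by
  obtain ⟨W, hW, hmono⟩ := h
  obtain ⟨L, _, _, a, ha⟩ := (hW (Fin.last d)).1.exists_isGeneric
  exact ⟨W (Fin.last d), (hW _).2, L, _, _, a, (hW _).1, ha,
    length_le_trdegSet_of_strictMono (fun i => (hW i).1) hmono ha⟩

theorem vdim_le_of_isGeneric [Finite ι] {d : ℕ}
    (h : ∀ V' ⊆ V, IsIrredVar K V' → ∀ (L : Type) [Field L] [Algebra K L] (a : ι → L),
      IsGeneric V' a → trdegSet K (range a) ≤ d) : vdim K V ≤ d := by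
  refine csSup_le' fun e he => ?_
  obtain ⟨V', hV', L, _, _, a, hirr, ha, hea⟩ := HasIrredChain.exists_isGeneric he
  exact_mod_cast hea.trans (h V' hV' hirr L a ha)

theorem bddAbove_hasIrredChain [Finite ι] (V : Set (ι → Kˣ)) :
    BddAbove {d | HasIrredChain V d} := by
  refine ⟨Nat.card ι, fun d hd => ?_⟩
  obtain ⟨-, -, L, _, _, a, -, -, hda⟩ := hd.exists_isGeneric
  have hcard : (range a).encard ≤ Nat.card ι := by
    rw [← image_univ, ← ENat.card_eq_coe_natCard, ← encard_univ]
    exact encard_image_le a univ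
  exact_mod_cast (hda.trans (Matroid.eRk_le_encard _ _)).trans hcard

theorem vdim_mono [Finite ι] (h : V ⊆ V') : vdim K V ≤ vdim K V' :=
  csSup_le' fun _ hd => le_csSup (bddAbove_hasIrredChain V') (HasIrredChain.mono hd h)

theorem IsIrredVar.vdim_lt_of_ssubset [Finite ι] (hV' : IsIrredVar K V') (hV : IsIrredVar K V)
    (hss : V' ⊂ V) : vdim K V' < vdim K V := by
  have h : HasIrredChain V' (vdim K V') :=
    Nat.sSup_mem ⟨0, hV'.hasIrredChain_zero⟩ (bddAbove_hasIrredChain V')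
  exact le_csSup (bddAbove_hasIrredChain V) (h.succ_of_ssubset hV hss)

theorem le_vdim_locus [IsAlgClosed K] [Finite ι] (ha : ∀ i, a i ≠ 0) {d : ℕ}
    (hd : d ≤ trdegSet K (range a)) : d ≤ vdim K (locus K a) := by
  induction d generalizing L with
  | zero => exact Nat.zero_le _
  | succ d ih =>
    obtain ⟨J, hJ, hcard⟩ := exists_algebraicIndepOn_of_le_trdegSet
      ((Nat.cast_le.2 d.le_succ).trans hd)
    obtain ⟨Ω, _, _, v, _, hv⟩ := exists_isAlgClosed_isTranscendenceBasis K J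
    obtain ⟨x, hx, hrank⟩ := exists_specializesOver_trdegSet_eq ha hJ hv
    have hx0 : ∀ i, (x i : Ω) ≠ 0 := fun i => (x i).ne_zero
    have hss : locus K (fun i => (x i : Ω)) ⊂ locus K a := by
      refine ⟨fun y hy p hp => hy p (hx p hp), fun hsub => hd.not_gt ?_⟩
      have hle := ((isGeneric_locus hx0).specializesOver (isGeneric_locus ha) hsub).trdegSet_le
      exact hle.trans_lt (by rw [hrank, hcard]; exact_mod_cast d.lt_succ_self)
    exact (ih hx0 (hrank.trans hcard).ge).trans_lt <|
      ((isGeneric_locus hx0).isIrredVar (isZClosed_locus _)).vdim_lt_of_ssubset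
        ((isGeneric_locus ha).isIrredVar (isZClosed_locus a)) hss

theorem IsGeneric.vdim_eq [IsAlgClosed K] [Finite ι] (h : IsGeneric V a) (hV : IsZClosed K V) :
    (vdim K V : ℕ∞) = trdegSet K (range a) := by
  obtain ⟨d, hd⟩ := ENat.ne_top_iff_exists.1 (trdegSet_range_ne_top (F := K) a)
  rw [← hd, Nat.cast_inj]
  refine le_antisymm (vdim_le_of_isGeneric fun V' hsub _ L' _ _ a' ha' => ?_) ?_
  · exact hd ▸ (h.specializesOver ha' hsub).trdegSet_le
  · rw [h.eq_locus hV]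
    exact le_vdim_locus (h.ne_zero (h.isIrredVar hV).2.1) hd.le

end Dimension

section FieldOfDefinition

open MvPolynomial Set

variable {K} {ι : Type} {F : Subfield K} {V W : Set (ι → Kˣ)}

theorem isClosedOver_zeroSet_map (S : Set (MvPolynomial ι F)) :
    IsClosedOver K (F : Set K) (zeroSet K (map (algebraMap F K) '' S)) := by
  refine ⟨_, ?_, rfl⟩
  rintro _ ⟨p, -, rfl⟩ m
  rw [coeff_map]
  exact (coeff m p).2

theorem mem_zeroSet_map_iff {S : Set (MvPolynomial ι F)} {x : ι → Kˣ} :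
    x ∈ zeroSet K (map (algebraMap F K) '' S) ↔ ∀ p ∈ S, aeval (fun i => (x i : K)) p = 0 := by
  simp only [mem_zeroSet_iff, forall_mem_image, aeval_map_algebraMap]

theorem IsClosedOver.mono {E E' : Set K} (hE : E ⊆ E') (hV : IsClosedOver K E V) :
    IsClosedOver K E' V := by
  obtain ⟨S, hS, rfl⟩ := hV
  exact ⟨S, fun p hp m => hE (hS p hp m), rfl⟩

theorem IsClosedOver.inter {E : Set K} (hV : IsClosedOver K E V) (hW : IsClosedOver K E W) :
    IsClosedOver K E (V ∩ W) := by
  obtain ⟨S, hS, rfl⟩ := hV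
  obtain ⟨T, hT, rfl⟩ := hW
  refine ⟨S ∪ T, fun p hp => hp.elim (hS p) (hT p), ?_⟩
  ext x
  simp only [mem_inter_iff, mem_zeroSet_iff, mem_union, or_imp, forall_and]

theorem IsClosedOver.mem_of_specializesOver (hV : IsClosedOver K (F : Set K) V) {x y : ι → Kˣ}
    (hx : x ∈ V) (hxy : SpecializesOver F (fun i => (x i : K)) (fun i => (y i : K))) : y ∈ V := by
  obtain ⟨S, hS, rfl⟩ := hV
  intro p hp
  obtain ⟨q, rfl⟩ : p ∈ Set.range (map (algebraMap F K)) := by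
    refine mem_range_map_iff_coeffs_subset.2 fun c hc => ?_
    obtain ⟨m, -, rfl⟩ := mem_coeffs_iff.1 hc
    exact ⟨⟨_, hS p hp m⟩, rfl⟩
  have hqx := mem_zeroSet_iff.1 hx _ hp
  rw [aeval_map_algebraMap] at hqx
  exact (aeval_map_algebraMap K _ q).trans (hxy q hqx)

theorem IsClosedOver.exists_isIrredVar_vdim_eq [IsAlgClosed K] [Finite ι] {b : ι → Kˣ}
    (hV : IsClosedOver K (F : Set K) V) (hb : b ∈ V) :
    ∃ V' ⊆ V, IsIrredVar K V' ∧ (vdim K V' : ℕ∞) = trdegSet F (range fun i => (b i : K)) := by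
  obtain ⟨J, hJ, hcard⟩ := exists_algebraicIndepOn_of_le_trdegSet
    (le_refl (trdegSet F (range fun i => (b i : K))))
  obtain ⟨Ω, _, _, v, _, hv⟩ := exists_isAlgClosed_isTranscendenceBasis K J
  obtain ⟨x, hx, hrank⟩ := exists_specializesOver_trdegSet_eq (fun i => (b i).ne_zero) hJ hv
  have hgen : IsGeneric (locus K fun i => (x i : Ω)) fun i => (x i : Ω) :=
    isGeneric_locus fun i => (x i).ne_zero
  refine ⟨locus K fun i => (x i : Ω), fun y hy => hV.mem_of_specializesOver hb ?_,
    hgen.isIrredVar (isZClosed_locus _), ?_⟩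
  · exact hx.trans (hy.restrictScalars F)
  · rw [hgen.vdim_eq (isZClosed_locus _), hrank, hcard]

theorem IsIrredVar.specializesOver_of_mem [IsAlgClosed K] [Finite ι] (hW : IsIrredVar K W)
    (hWF : IsClosedOver K (F : Set K) W) {b x : ι → Kˣ} (hb : b ∈ W)
    (hgen : trdegSet F (range fun i => (b i : K)) = vdim K W) (hx : x ∈ W) :
    SpecializesOver F (fun i => (b i : K)) (fun i => (x i : K)) := by
  intro p hp
  obtain ⟨V', hV', hirr, hdim⟩ :=
    (hWF.inter (isClosedOver_zeroSet_map {p})).exists_isIrredVar_vdim_eq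
      ⟨hb, mem_zeroSet_map_iff.2 (by rintro _ rfl; exact hp)⟩
  have hV'W : V' = W := by
    by_contra hne
    have hlt := hirr.vdim_lt_of_ssubset hW (ssubset_of_subset_of_ne (fun y hy => (hV' hy).1) hne)
    rw [hgen, Nat.cast_inj] at hdim
    exact hlt.ne hdim
  exact mem_zeroSet_map_iff.1 (hV' (hV'W ▸ hx)).2 p rfl

end FieldOfDefinition

section Monomial

open MvPolynomial Set

variable {κ ι : Type} [Fintype ι]

/-- The monomial map `y ↦ y ^ M` on tuples of elements of a field; on tuples of units it is
`mpow`. -/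
def monomialMap {L : Type*} [Field L] (M : Matrix κ ι ℤ) (y : ι → L) : κ → L :=
  fun j => ∏ i, y i ^ M j i

/-- The monomial with the positive part of `m` as exponents, so that `y ^ m` is the quotient of the
values at `y` of `posMonomial R m` and `posMonomial R (-m)`. -/
noncomputable def posMonomial (R : Type*) [CommRing R] (m : ι → ℤ) : MvPolynomial ι R :=
  ∏ i, X i ^ (m i).toNat

theorem aeval_posMonomial {R L : Type*} [CommRing R] [Field L] [Algebra R L] (m : ι → ℤ)
    (y : ι → L) : aeval y (posMonomial R m) = ∏ i, y i ^ (m i).toNat := by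
  simp only [posMonomial, map_prod, map_pow, aeval_X]

theorem aeval_posMonomial_ne_zero {R L : Type*} [CommRing R] [Field L] [Algebra R L] (m : ι → ℤ)
    {y : ι → L} (hy : ∀ i, y i ≠ 0) : aeval y (posMonomial R m) ≠ 0 := by
  rw [aeval_posMonomial]
  exact Finset.prod_ne_zero_iff.2 fun i _ => pow_ne_zero _ (hy i)

theorem monomialMap_mul_aeval_posMonomial_neg {R L : Type*} [CommRing R] [Field L] [Algebra R L]
    (M : Matrix κ ι ℤ) (j : κ) {y : ι → L} (hy : ∀ i, y i ≠ 0) :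
    monomialMap M y j * aeval y (posMonomial R (-M j)) = aeval y (posMonomial R (M j)) := by
  rw [aeval_posMonomial, aeval_posMonomial, monomialMap, ← Finset.prod_mul_distrib]
  refine Finset.prod_congr rfl fun i _ => ?_
  rw [Pi.neg_apply, ← zpow_natCast, ← zpow_natCast, ← zpow_add₀ (hy i)]
  congr 1
  omega

/-- The polynomial equation `y ^ (M j) = c`, with denominators cleared. -/
noncomputable def monomialEquation {R : Type*} [CommRing R] (M : Matrix κ ι ℤ) (j : κ) (c : R) :
    MvPolynomial ι R :=
  posMonomial R (M j) - C c * posMonomial R (-M j)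

theorem aeval_monomialEquation_eq_zero_iff {R L : Type*} [CommRing R] [Field L] [Algebra R L]
    {M : Matrix κ ι ℤ} {j : κ} {c : R} {y : ι → L} (hy : ∀ i, y i ≠ 0) :
    aeval y (monomialEquation M j c) = 0 ↔ monomialMap M y j = algebraMap R L c := by
  rw [monomialEquation, map_sub, map_mul, aeval_C, ← monomialMap_mul_aeval_posMonomial_neg M j hy,
    ← sub_mul, mul_eq_zero, or_iff_left (aeval_posMonomial_ne_zero _ hy), sub_eq_zero]

theorem exists_aeval_monomialMap_eq_zero_iff {R : Type*} [CommRing R] (M : Matrix κ ι ℤ)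
    (p : MvPolynomial κ R) :
    ∃ q : MvPolynomial ι R, ∀ (L : Type) [Field L] [Algebra R L] (y : ι → L), (∀ i, y i ≠ 0) →
      (aeval (monomialMap M y) p = 0 ↔ aeval y q = 0) := by
  suffices ∃ r q : MvPolynomial ι R, ∀ (L : Type) [Field L] [Algebra R L] (y : ι → L),
      (∀ i, y i ≠ 0) → aeval y r ≠ 0 ∧ aeval (monomialMap M y) p * aeval y r = aeval y q by
    obtain ⟨r, q, h⟩ := this
    refine ⟨q, fun L _ _ y hy => ?_⟩
    rw [← (h L y hy).2, mul_eq_zero, or_iff_left (h L y hy).1]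
  induction p using MvPolynomial.induction_on with
  | C c => exact ⟨1, C c, fun L _ _ y _ => by simp⟩
  | add p p' hp hp' =>
    obtain ⟨r, q, h⟩ := hp
    obtain ⟨r', q', h'⟩ := hp'
    refine ⟨r * r', q * r' + q' * r, fun L _ _ y hy => ⟨?_, ?_⟩⟩
    · rw [map_mul]
      exact mul_ne_zero (h L y hy).1 (h' L y hy).1
    · simp only [map_add, map_mul, ← (h L y hy).2, ← (h' L y hy).2]
      ring
  | mul_X p j hp =>
    obtain ⟨r, q, h⟩ := hp
    refine ⟨r * posMonomial R (-M j), q * posMonomial R (M j), fun L _ _ y hy => ⟨?_, ?_⟩⟩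
    · rw [map_mul]
      exact mul_ne_zero (h L y hy).1 (aeval_posMonomial_ne_zero _ hy)
    · simp only [map_mul, aeval_X, ← (h L y hy).2, ← monomialMap_mul_aeval_posMonomial_neg M j hy]
      ring

theorem SpecializesOver.monomialMap {F : Type*} {L L' : Type} [Field F] [Field L] [Field L']
    [Algebra F L] [Algebra F L'] {a : ι → L} {a' : ι → L'} (h : SpecializesOver F a a')
    (M : Matrix κ ι ℤ) (ha : ∀ i, a i ≠ 0) (ha' : ∀ i, a' i ≠ 0) :
    SpecializesOver F (monomialMap M a) (monomialMap M a') := by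
  intro p hp
  obtain ⟨q, hq⟩ := exists_aeval_monomialMap_eq_zero_iff M p
  exact (hq L' a' ha').2 (h q ((hq L a ha).1 hp))

theorem range_monomialMap_subset_algClosureSet (F : Type*) {L : Type*} [Field F] [Field L]
    [Algebra F L] (M : Matrix κ ι ℤ) (y : ι → L) :
    range (monomialMap M y) ⊆ algClosureSet F (range y) := by
  rintro _ ⟨j, rfl⟩
  exact adjoin_subset_algClosureSet _ <|
    prod_mem fun i _ => zpow_mem (IntermediateField.subset_adjoin F _ (mem_range_self i)) _

variable {K} {k : ℕ}

theorem coe_mpow (M : Matrix (Fin k) ι ℤ) (y : ι → Kˣ) :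
    (fun j => (mpow K M y j : K)) = monomialMap M fun i => (y i : K) := by
  ext j
  simp only [mpow, monomialMap, Units.coe_prod, Units.val_zpow_eq_zpow_val]

theorem mem_coset_ker_mpow_iff {M : Matrix (Fin k) ι ℤ} {b y : ι → Kˣ} :
    y ∈ coset K b {y | mpow K M y = 1} ↔ mpow K M y = mpow K M b := by
  have hmul (x z : ι → Kˣ) : mpow K M (x * z) = mpow K M x * mpow K M z := by
    ext j
    simp only [mpow, Pi.mul_apply, mul_zpow, Finset.prod_mul_distrib]
  constructor
  · rintro ⟨t, ht, rfl⟩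
    rw [hmul, show mpow K M t = 1 from ht, mul_one]
  · intro h
    refine ⟨b⁻¹ * y, mul_left_cancel (a := mpow K M b) ?_, mul_inv_cancel_left b y⟩
    rw [← hmul, mul_inv_cancel_left, h, mul_one]

theorem isClosedOver_setOf_mpow_eq {F : Subfield K} (M : Matrix (Fin k) ι ℤ) {c : Fin k → Kˣ}
    (hc : ∀ j, (c j : K) ∈ F) : IsClosedOver K (F : Set K) {y | mpow K M y = c} := by
  convert isClosedOver_zeroSet_map
    (range fun j => monomialEquation M j (⟨(c j : K), hc j⟩ : F)) using 1
  ext y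
  rw [mem_zeroSet_map_iff, forall_mem_range]
  simp only [aeval_monomialEquation_eq_zero_iff fun i => (y i).ne_zero, ← coe_mpow]
  simp only [mem_ofPred_eq, funext_iff, Units.ext_iff]
  rfl

variable {L : Type} [Field L] [Algebra K L] {W : Set (ι → Kˣ)} {a : ι → L}

theorem trdegSet_range_monomialMap_add (F : Subfield K) (M : Matrix κ ι ℤ) {c : κ → K}
    (hac : monomialMap M a = algebraMap K L ∘ c) :
    trdegSet F (range c) + trdegSet ↥(F ⊔ Subfield.closure (range c)) (range a) =
      trdegSet F (range a) := by
  rw [← trdegSet_range_algebraMap_comp (L := L), range_comp]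
  refine trdegSet_image_add_sup_closure F ?_
  rw [← range_comp, ← hac]
  exact range_monomialMap_subset_algClosureSet F M a

theorem IsGeneric.monomialMap_eq (h : IsGeneric W a) (ha : ∀ i, a i ≠ 0)
    {M : Matrix (Fin k) ι ℤ} {c : Fin k → Kˣ} (hW : ∀ y ∈ W, mpow K M y = c) :
    monomialMap M a = algebraMap K L ∘ fun j => (c j : K) := by
  ext j
  refine (aeval_monomialEquation_eq_zero_iff ha).1 ((h _).2 fun y hy => ?_)
  rw [aeval_monomialEquation_eq_zero_iff fun i => (y i).ne_zero, ← coe_mpow, hW y hy]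
  rfl

theorem IsGeneric.zcl_image_mpow (h : IsGeneric W a) (ha : ∀ i, a i ≠ 0) (M : Matrix (Fin k) ι ℤ) :
    IsGeneric (zcl K (mpow K M '' W)) (monomialMap M a) := by
  intro p
  obtain ⟨q, hq⟩ := exists_aeval_monomialMap_eq_zero_iff M p
  rw [forall_mem_zcl_aeval_eq_zero_iff, forall_mem_image, hq L a ha, h q]
  refine forall₂_congr fun x _ => ?_
  rw [coe_mpow, hq K _ fun i => (x i).ne_zero]

end Monomial

section Fibre

open MvPolynomial Set

variable {K} [IsAlgClosed K] {ι : Type} {k : ℕ} {F : Subfield K} {V W : Set (ι → Kˣ)}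
  {b : ι → Kˣ} {L : Type} [Field L] [Algebra K L] {a : ι → L}

theorem IsIrredVar.specializesOver_of_isGeneric [Finite ι] (hW : IsIrredVar K W)
    (hWF : IsClosedOver K (F : Set K) W) (hb : b ∈ W)
    (hgen : trdegSet F (range fun i => (b i : K)) = vdim K W) (hV : V ⊆ W) (ha : IsGeneric V a) :
    SpecializesOver F (fun i => (b i : K)) a := by
  intro p hp
  rw [← aeval_map_algebraMap K, ha]
  intro x hx
  rw [aeval_map_algebraMap]
  exact hW.specializesOver_of_mem hWF hb hgen (hV hx) p hp

variable [Fintype ι]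

theorem IsIrredVar.vdim_zcl_image_mpow_eq (hW : IsIrredVar K W)
    (hWF : IsClosedOver K (F : Set K) W) (hb : b ∈ W)
    (hgen : trdegSet F (range fun i => (b i : K)) = vdim K W) (M : Matrix (Fin k) ι ℤ) :
    (vdim K (zcl K (mpow K M '' W)) : ℕ∞) = trdegSet F (range fun j => (mpow K M b j : K)) := by
  obtain ⟨L, _, _, a, ha⟩ := hW.exists_isGeneric
  have ha0 := ha.ne_zero hW.2.1
  have hb0 : ∀ i, (b i : K) ≠ 0 := fun i => (b i).ne_zero
  have hba : SpecializesOver F (fun i => (b i : K)) a :=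
    hW.specializesOver_of_isGeneric hWF hb hgen subset_rfl ha
  have hab : SpecializesOver F a (fun i => (b i : K)) :=
    SpecializesOver.restrictScalars (E := K) F fun p hp => (ha p).1 hp b hb
  have hKF : trdegSet K (range a) = trdegSet F (range a) := by
    rw [← ha.vdim_eq hW.1, ← hgen]
    exact hab.trdegSet_le.antisymm hba.trdegSet_le
  rw [(ha.zcl_image_mpow ha0 M).vdim_eq (isZClosed_zcl _), coe_mpow]
  rw [trdegSet_eq_of_subset_algClosureSet (trdegSet_range_ne_top a) hKF
    (range_monomialMap_subset_algClosureSet F M a)]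
  exact (hba.monomialMap M hb0 ha0).trdegSet_le.antisymm (hab.monomialMap M ha0 hb0).trdegSet_le

theorem IsIrredVar.vdim_inter_coset_eq (hW : IsIrredVar K W)
    (hWF : IsClosedOver K (F : Set K) W) (hb : b ∈ W)
    (hgen : trdegSet F (range fun i => (b i : K)) = vdim K W) (M : Matrix (Fin k) ι ℤ) :
    (vdim K (W ∩ coset K b {y | mpow K M y = 1}) : ℕ∞) =
      trdegSet ↥(F ⊔ Subfield.closure (range fun j => (mpow K M b j : K)))
        (range fun i => (b i : K)) := by
  set c : Fin k → K := fun j => (mpow K M b j : K)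
  have hcoset : coset K b {y | mpow K M y = 1} = {y | mpow K M y = mpow K M b} :=
    ext fun y => mem_coset_ker_mpow_iff
  have hclosed : IsClosedOver K ↑(F ⊔ Subfield.closure (range c))
      (W ∩ {y | mpow K M y = mpow K M b}) :=
    (hWF.mono (SetLike.coe_subset_coe.2 le_sup_left)).inter <| isClosedOver_setOf_mpow_eq M
      fun j => le_sup_right (a := F) (Subfield.subset_closure (mem_range_self j))
  obtain ⟨d, hd⟩ := ENat.ne_top_iff_exists.1 (trdegSet_range_ne_top
    (F := ↥(F ⊔ Subfield.closure (range c))) fun i => (b i : K))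
  rw [hcoset]
  refine le_antisymm ?_ ?_
  · rw [← hd, Nat.cast_le]
    refine vdim_le_of_isGeneric fun V hV hirr L _ _ a ha => ?_
    have hba : SpecializesOver F (fun i => (b i : K)) a :=
      hW.specializesOver_of_isGeneric hWF hb hgen (hV.trans inter_subset_left) ha
    have hac := ha.monomialMap_eq (ha.ne_zero hirr.2.1) fun y hy => (hV hy).2
    have hle := hba.trdegSet_le
    rw [← trdegSet_range_monomialMap_add F M hac,
      ← trdegSet_range_monomialMap_add F M (coe_mpow M b).symm,
      ENat.add_le_add_iff_left (trdegSet_range_ne_top _)] at hle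
    exact (trdegSet_le_of_tower _).trans (hle.trans_eq hd.symm)
  · obtain ⟨V, hV, -, hdim⟩ := hclosed.exists_isIrredVar_vdim_eq ⟨hb, rfl⟩
    rw [← hdim, Nat.cast_le]
    exact vdim_mono hV

end Fibre

theorem dim_fibre_of_monomial_map_general {K : Type} [Field K] [IsAlgClosed K] {ι : Type}
    [Fintype ι] {k : ℕ} (F : Subfield K) {W : Set (ι → Kˣ)} (hW : IsIrredVar K W)
    (hWF : IsClosedOver K (F : Set K) W) (M : Matrix (Fin k) ι ℤ) {b : ι → Kˣ} (hb : b ∈ W)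
    (hgen : trdegOver K F (Set.range fun i => (b i : K)) = vdim K W) :
    vdim K (zcl K (mpow K M '' W)) + vdim K (W ∩ coset K b {y | mpow K M y = 1}) = vdim K W ∧
      vdim K (W ∩ coset K b {y | mpow K M y = 1}) =
        trdegOver K (F ⊔ Subfield.closure (Set.range fun j => (mpow K M b j : K)))
          (Set.range fun i => (b i : K)) := by
  rw [← Nat.cast_inj (R := ℕ∞), coe_trdegOver F (Set.finite_range _)] at hgen
  have hfibre := hW.vdim_inter_coset_eq hWF hb hgen M
  refine ⟨?_, ?_⟩ <;> rw [← Nat.cast_inj (R := ℕ∞)]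
  · rw [Nat.cast_add, hW.vdim_zcl_image_mpow_eq hWF hb hgen M, hfibre, ← hgen]
    exact trdegSet_range_monomialMap_add F M (coe_mpow M b).symm
  · rw [hfibre, coe_trdegOver _ (Set.finite_range _)]

/-- Fibre-dimension formula for monomial maps: if `W ⊆ (Kˣ)ⁿ` is irreducible
over `ℚ`, `M` an integer `k × n` matrix of rank `k` with associated subtorus `T = {y | y^M = 1}`
and `W_M` the Zariski closure of `W^M`, then for every `b ∈ W` generic over `ℚ`,
`dim (W ∩ bT) = dim W - dim W_M` and `dim (W ∩ bT) = trdeg(ℚ(b)/ℚ(b^M))`. -/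
theorem dim_fibre_of_monomial_map
    (K : Type) [Field K] [IsAlgClosed K] [CharZero K]
    {n k : ℕ} (W : Set (Fin n → Kˣ))
    (hWirr : IsIrredVar K W) (hWQ : IsClosedOver K (↑(⊥ : Subfield K)) W)
    (M : Matrix (Fin k) (Fin n) ℤ) (hrk : M.rank = k)
    (T : Set (Fin n → Kˣ)) (hT : T = {y | mpow K M y = 1})
    (WM : Set (Fin k → Kˣ)) (hWM : WM = zcl K (mpow K M '' W))
    (b : Fin n → Kˣ) (hbW : b ∈ W)
    (hgen : trdegQ K (Set.range fun i => ((b i : Kˣ) : K)) = vdim K W) :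
    vdim K (W ∩ coset K b T) = vdim K W - vdim K WM ∧
    vdim K (W ∩ coset K b T) =
      trdegOver K (Subfield.closure (Set.range fun j => ((mpow K M b j : Kˣ) : K)))
        (Set.range fun i => ((b i : Kˣ) : K)) := by
  subst hT hWM
  obtain ⟨hdim, htrdeg⟩ := dim_fibre_of_monomial_map_general ⊥ hWirr hWQ M hbW hgen
  exact ⟨Nat.eq_sub_of_add_eq' hdim, by rwa [bot_sup_eq] at htrdeg⟩

end BadFields
end
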